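/- (Termination and Deadlock Freedom) Let R be an SMLL net and M_R its SIAM machine. Every run of M_R (maximal sequence of transitions from the initial state I_R) terminates in a final state, and this final state is unique (the same for all runs). -/

import Mathlib

/-! # SMLL: multiplicative linear logic with synchronization

Formalization of the proof-structures, correctness criterion, reduction and
multi-token machine (SIAM) of Dal Lago, Faggian, Hasuo, Yoshimizu,
"The Geometry of Synchronization". -/

/-- SMLL formulas (in negation normal form):
`A ::= 1 | ⊥ | X | X⊥ | A ⊗ A | A ⅋ A`. -/
inductive Formula : Type
  | one : Formula
  | bot : Formula
  | var : ℕ → Formula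
  | covar : ℕ → Formula
  | tens : Formula → Formula → Formula
  | parr : Formula → Formula → Formula
  deriving DecidableEq

namespace Formula

/-- Linear negation. -/
def dual : Formula → Formula
  | one => bot
  | bot => one
  | var n => covar n
  | covar n => var n
  | tens A B => parr A.dual B.dual
  | parr A B => tens A.dual B.dual

/-- Positive formulas: `P ::= 1 | P ⊗ P`. -/
inductive Positive : Formula → Prop
  | one : Positive one
  | tens {A B : Formula} : Positive A → Positive B → Positive (tens A B)

/-- Negative formulas: `N ::= ⊥ | N ⅋ N`. -/
inductive Negative : Formula → Prop
  | bot : Negative bot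
  | parr {A B : Formula} : Negative A → Negative B → Negative (parr A B)

/-- A formula is polarized when it is positive or negative. -/
def Polarized (A : Formula) : Prop := Positive A ∨ Negative A

/-- Whether `⊥` occurs in a formula. -/
def hasBotB : Formula → Bool
  | one => false
  | bot => true
  | var _ => false
  | covar _ => false
  | tens A B => hasBotB A || hasBotB B
  | parr A B => hasBotB A || hasBotB B

/-- Addresses of occurrences inside a formula: `false` = left, `true` = right. -/
abbrev Addr := List Bool

/-- Subformula at a given address (if the address is meaningful). -/
def sub : Formula → Addr → Option Formula
  | A, [] => some A
  | tens A _, false :: m => sub A m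
  | tens _ B, true :: m => sub B m
  | parr A _, false :: m => sub A m
  | parr _ B, true :: m => sub B m
  | _, _ :: _ => none

def IsAtom : Formula → Prop
  | one => True
  | bot => True
  | var _ => True
  | covar _ => True
  | tens _ _ => False
  | parr _ _ => False

/-- `m` is the address of an occurrence of an atom in `A`. -/
def AtomOcc (A : Formula) (m : Addr) : Prop := ∃ a, sub A m = some a ∧ IsAtom a

/-- The atom occurrence at `m` in `A` is positive (it is `1` or `X`). -/
def PosOcc (A : Formula) (m : Addr) : Prop :=
  ∃ a, sub A m = some a ∧ (a = one ∨ ∃ n, a = var n)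

/-- The atom occurrence at `m` in `A` is negative (it is `⊥` or `X⊥`). -/
def NegOcc (A : Formula) (m : Addr) : Prop :=
  ∃ a, sub A m = some a ∧ (a = bot ∨ ∃ n, a = covar n)

theorem NegOcc.atomOcc {A : Formula} {m : Addr} (h : NegOcc A m) : AtomOcc A m := by
  obtain ⟨a, ha, h⟩ := h
  refine ⟨a, ha, ?_⟩
  rcases h with rfl | ⟨n, rfl⟩ <;> trivial

theorem PosOcc.atomOcc {A : Formula} {m : Addr} (h : PosOcc A m) : AtomOcc A m := by
  obtain ⟨a, ha, h⟩ := h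
  refine ⟨a, ha, ?_⟩
  rcases h with rfl | ⟨n, rfl⟩ <;> trivial

end Formula

/-- The sorts of links of an SMLL structure. -/
inductive LinkSort : Type
  | ax | cut | tens | parr | one | bot | sync
  deriving DecidableEq

/-- An SMLL proof-structure (with boxes): a finite directed multigraph whose
edges are typed by formulas and whose nodes are links.  Every edge is the
conclusion of exactly one link (its `src`); it is the premiss of the link
`tgt`, if any (edges with no target are the conclusions of the structure).
`pIdx` indexes an edge among the premisses of its target (for `⊗`/`⅋`-links:
`0` = left, `1` = right; for sync links it pairs premisses with conclusions);
`cIdx` indexes an edge among the conclusions of its source (for sync links,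
the `i`-th conclusion corresponds to the `i`-th premiss).  Each `bot`-link is
the lock of a box; `box n` is the innermost box containing the node `n` and
`boxes n` is the set of all boxes containing `n`. -/
structure Struct : Type 1 where
  Edge : Type
  Node : Type
  edgeFintype : Fintype Edge
  nodeFintype : Fintype Node
  edgeDecEq : DecidableEq Edge
  nodeDecEq : DecidableEq Node
  typ : Edge → Formula
  sort : Node → LinkSort
  src : Edge → Node
  tgt : Edge → Option Node
  pIdx : Edge → ℕ
  cIdx : Edge → ℕ
  box : Node → Option Node
  boxes : Node → Finset Node

attribute [instance] Struct.edgeFintype Struct.nodeFintype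
attribute [instance] Struct.edgeDecEq Struct.nodeDecEq

namespace Struct

variable (S : Struct)

/-- The conclusions of a link. -/
def concls (n : S.Node) : Finset S.Edge := Finset.univ.filter fun e => S.src e = n

/-- The premisses of a link. -/
def prems (n : S.Node) : Finset S.Edge := Finset.univ.filter fun e => S.tgt e = some n

/-- The conclusions of the structure. -/
def IsConcl (e : S.Edge) : Prop := S.tgt e = none

/-- Well-formedness of an SMLL structure: the constraints that the sort of a
link induces on the number and the types of its premisses and conclusions,
together with the coherence of the nesting of boxes. -/
def WF : Prop :=
  (∀ n, S.sort n = .ax → S.prems n = ∅ ∧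
    ∃ e f, e ≠ f ∧ S.concls n = {e, f} ∧ S.typ f = (S.typ e).dual) ∧
  (∀ n, S.sort n = .cut → S.concls n = ∅ ∧
    ∃ e f, e ≠ f ∧ S.prems n = {e, f} ∧ S.typ f = (S.typ e).dual) ∧
  (∀ n, S.sort n = .tens → ∃ e f g, e ≠ f ∧ S.prems n = {e, f} ∧
    S.pIdx e = 0 ∧ S.pIdx f = 1 ∧ S.concls n = {g} ∧
    S.typ g = .tens (S.typ e) (S.typ f)) ∧
  (∀ n, S.sort n = .parr → ∃ e f g, e ≠ f ∧ S.prems n = {e, f} ∧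
    S.pIdx e = 0 ∧ S.pIdx f = 1 ∧ S.concls n = {g} ∧
    S.typ g = .parr (S.typ e) (S.typ f)) ∧
  (∀ n, S.sort n = .one → S.prems n = ∅ ∧ ∃ e, S.concls n = {e} ∧ S.typ e = .one) ∧
  (∀ n, S.sort n = .bot → S.prems n = ∅ ∧ ∃ e, S.concls n = {e} ∧ S.typ e = .bot) ∧
  (∀ n, S.sort n = .sync →
    (∀ e ∈ S.prems n, (S.typ e).Polarized) ∧
    (∀ e ∈ S.prems n, ∃! f, f ∈ S.concls n ∧ S.cIdx f = S.pIdx e) ∧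
    (∀ f ∈ S.concls n, ∃! e, e ∈ S.prems n ∧ S.pIdx e = S.cIdx f) ∧
    (∀ e ∈ S.prems n, ∀ f ∈ S.concls n, S.cIdx f = S.pIdx e → S.typ f = S.typ e)) ∧
  (∀ n b, b ∈ S.boxes n → S.sort b = .bot) ∧
  (∀ n, S.box n = none → S.boxes n = ∅) ∧
  (∀ n b, S.box n = some b → b ∉ S.boxes b ∧ S.boxes n = insert b (S.boxes b)) ∧
  (∀ e n, S.tgt e = some n → S.boxes n ⊆ S.boxes (S.src e))

/-- `b` is the representative of the node `m` in the level-`ℓ` graph (the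
graph in which each box strictly below level `ℓ` is collapsed to a single
box-node, identified with its `bot`-link).  For `ℓ = none` this is the
`0`-graph. -/
def RepAt (ℓ : Option S.Node) (m b : S.Node) : Prop :=
  (S.box m = ℓ ∧ b = m) ∨ (b ∈ S.boxes m ∧ S.box b = ℓ)

/-- Edge `e` joins the nodes `u` and `v` (undirectedly) in the level-`ℓ` graph. -/
def ConnectsAt (ℓ : Option S.Node) (e : S.Edge) (u v : S.Node) : Prop :=
  ∃ t, S.tgt e = some t ∧ (S.box t = ℓ ∨ S.box (S.src e) = ℓ) ∧
    ((S.RepAt ℓ (S.src e) u ∧ S.RepAt ℓ t v) ∨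
     (S.RepAt ℓ (S.src e) v ∧ S.RepAt ℓ t u))

/-- The out-edges of a sync link are its positive conclusions and its negative
premisses. -/
def OutEdgeOf (l : S.Node) (e : S.Edge) : Prop :=
  S.sort l = .sync ∧
  ((S.src e = l ∧ (S.typ e).Positive) ∨ (S.tgt e = some l ∧ (S.typ e).Negative))

/-- There is a switching cycle in the level-`ℓ` graph: a cyclic undirected
simple path which uses at most one of the two premisses of each `⅋`-link and
at most one out-edge of each sync link. -/
def SwitchingCycleAt (ℓ : Option S.Node) : Prop :=
  ∃ (k : ℕ) (v : Fin (k + 1) → S.Node) (e : Fin (k + 1) → S.Edge),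
    Function.Injective v ∧ Function.Injective e ∧
    (∀ i, S.ConnectsAt ℓ (e i) (v i) (v (i + 1))) ∧
    (∀ p, S.sort p = .parr → Set.Subsingleton {i | S.tgt (e i) = some p}) ∧
    (∀ l, S.sort l = .sync → Set.Subsingleton {i | S.OutEdgeOf l (e i)})

/-- Correctness criterion: no switching cycle in the `0`-graph, and,
recursively, no switching cycle in the graph of the content of any box. -/
def Correct : Prop := ∀ ℓ : Option S.Node, ¬ S.SwitchingCycleAt ℓ

/-- A net is a well-formed correct structure. -/
def IsNet : Prop := S.WF ∧ S.Correct

/-! ## Sync paths and hereditary conclusions -/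

/-- One step of a sync path: entering a sync link on a premiss and coming out
on the corresponding conclusion. -/
def SyncStepE (e f : S.Edge) : Prop :=
  ∃ l, S.sort l = .sync ∧ S.tgt e = some l ∧ S.src f = l ∧ S.cIdx f = S.pIdx e

/-- `e` is a hereditary conclusion of the link `l`: there is a sync path from
a conclusion of `l` to `e`. -/
def HereditaryConcl (l : S.Node) (e : S.Edge) : Prop :=
  ∃ f, S.src f = l ∧ Relation.ReflTransGen S.SyncStepE f e

/-- The edge emerges from a box: its source is a `bot`-link (the edge is the
lock of a box) or lies inside some box. -/
def FromBox (e : S.Edge) : Prop := S.sort (S.src e) = .bot ∨ S.box (S.src e) ≠ none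

/-- `e` is a hereditary conclusion of a box. -/
def HereditaryBoxConcl (e : S.Edge) : Prop :=
  ∃ f, S.FromBox f ∧ Relation.ReflTransGen S.SyncStepE f e

/-- A ready cut: a cut at depth 0 neither of whose premisses is a hereditary
conclusion of a box. -/
def ReadyCut (c : S.Node) : Prop :=
  S.sort c = .cut ∧ S.box c = none ∧ ∀ e ∈ S.prems c, ¬ S.HereditaryBoxConcl e

/-! ## Polarized paths and the order on links -/

/-- A node is polarized when all of its conclusions are polarized. -/
def PolarizedNode (n : S.Node) : Prop := ∀ e ∈ S.concls n, (S.typ e).Polarized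

/-- A single step of a polarized path from link `a` to link `b` along the
polarized edge `e`: downwards on positive edges, upwards on negative edges,
connecting polarized nodes and never entering boxes. -/
def PolStep (e : S.Edge) (a b : S.Node) : Prop :=
  S.box a = none ∧ S.box b = none ∧ S.PolarizedNode a ∧ S.PolarizedNode b ∧
  (((S.typ e).Positive ∧ S.src e = a ∧ S.tgt e = some b) ∨
   ((S.typ e).Negative ∧ S.tgt e = some a ∧ S.src e = b))

/-- `a ≺ b` : there is a (simple) polarized path from `a` to `b`. -/
def prec (a b : S.Node) : Prop :=
  ∃ (k : ℕ) (v : Fin (k + 2) → S.Node) (e : Fin (k + 1) → S.Edge),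
    v 0 = a ∧ v (Fin.last _) = b ∧
    Function.Injective v ∧ Function.Injective e ∧
    ∀ i : Fin (k + 1), S.PolStep (e i) (v i.castSucc) (v i.succ)

/-- SMLL⁰ structures: no unit links (hence no boxes). -/
def UnitFree : Prop := ∀ n : S.Node, S.sort n ≠ .one ∧ S.sort n ≠ .bot

/-- Closed structures: no `⊥` occurs in the conclusions. -/
def Closed : Prop := ∀ e : S.Edge, S.tgt e = none → (S.typ e).hasBotB = false

end Struct

/-! ## Reduction -/

/-- A partial injection `j` whose (some-)range is exactly `X`. -/
def PInjOnto {α β : Type*} (j : α → Option β) (X : Set β) : Prop :=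
  (∀ a a' b, j a = some b → j a' = some b → a = a') ∧
  (∀ a b, j a = some b → b ∈ X) ∧
  (∀ b ∈ X, ∃ a, j a = some b)

/-- `j` is total. -/
def JTotal {α β : Type*} (j : α → Option β) : Prop := ∀ a, j a ≠ none

/-- The structures `Q` and `R` agree, along the correspondences `jN`, `jE`,
on all edges outside `XE` and all nodes outside `XN`. -/
def AgreesOn (Q R : Struct) (jN : Q.Node → Option R.Node)
    (jE : Q.Edge → Option R.Edge) (XE : Set R.Edge) (XN : Set R.Node) : Prop :=
  (∀ x y, jE x = some y → y ∉ XE →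
    Q.typ x = R.typ y ∧ jN (Q.src x) = some (R.src y) ∧
    (Q.tgt x).bind jN = R.tgt y ∧ Q.pIdx x = R.pIdx y ∧ Q.cIdx x = R.cIdx y) ∧
  (∀ n m, jN n = some m → m ∉ XN →
    Q.sort n = R.sort m ∧ (Q.box n).bind jN = R.box m ∧
    (∀ b b', jN b = some b' → (b ∈ Q.boxes n ↔ b' ∈ R.boxes m)))

/-- The `ax/cut` step: a cut between a conclusion `v` of an axiom `a` and the
dual premiss is removed together with the axiom; the remaining conclusion `u`
of the axiom and the remaining premiss `q` of the cut are merged. -/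
def AxCutStep (R Q : Struct) : Prop :=
  ∃ (a c : R.Node) (v u q : R.Edge),
    R.sort a = .ax ∧ R.sort c = .cut ∧ R.box a = none ∧ R.box c = none ∧
    v ≠ u ∧ v ≠ q ∧ u ≠ q ∧
    R.concls a = {v, u} ∧ R.prems c = {v, q} ∧
    ∃ (jN : Q.Node → Option R.Node) (jE : Q.Edge → Option R.Edge),
      JTotal jN ∧ JTotal jE ∧
      PInjOnto jN {n | n ≠ a ∧ n ≠ c} ∧
      PInjOnto jE {x | x ≠ v ∧ x ≠ u} ∧
      AgreesOn Q R jN jE {q} ∅ ∧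
      (∀ x, jE x = some q →
        Q.typ x = R.typ q ∧ jN (Q.src x) = some (R.src q) ∧
        (Q.tgt x).bind jN = R.tgt u ∧ Q.pIdx x = R.pIdx u ∧ Q.cIdx x = R.cIdx q)

/-- The `⊗/⅋` step: a cut between `A ⊗ B` and `A⊥ ⅋ B⊥` is replaced by two
cuts between the respective premisses. -/
def TensParrStep (R Q : Struct) : Prop :=
  ∃ (c t p : R.Node) (s s' a1 a2 b1 b2 : R.Edge),
    R.sort c = .cut ∧ R.sort t = .tens ∧ R.sort p = .parr ∧
    R.box c = none ∧ R.box t = none ∧ R.box p = none ∧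
    s ≠ s' ∧ R.prems c = {s, s'} ∧ R.concls t = {s} ∧ R.concls p = {s'} ∧
    a1 ≠ a2 ∧ R.prems t = {a1, a2} ∧ R.pIdx a1 = 0 ∧ R.pIdx a2 = 1 ∧
    b1 ≠ b2 ∧ R.prems p = {b1, b2} ∧ R.pIdx b1 = 0 ∧ R.pIdx b2 = 1 ∧
    ∃ (jN : Q.Node → Option R.Node) (jE : Q.Edge → Option R.Edge) (c' : Q.Node),
      JTotal jE ∧
      PInjOnto jN {n | n ≠ t ∧ n ≠ p} ∧
      PInjOnto jE {x | x ≠ s ∧ x ≠ s'} ∧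
      jN c' = none ∧ (∀ n, jN n = none → n = c') ∧
      Q.sort c' = .cut ∧ Q.box c' = none ∧ Q.boxes c' = ∅ ∧
      AgreesOn Q R jN jE {a1, a2, b1, b2} ∅ ∧
      (∀ x y, jE x = some y → y = a1 ∨ y = b1 →
        Q.typ x = R.typ y ∧ jN (Q.src x) = some (R.src y) ∧
        (Q.tgt x).bind jN = some c ∧ Q.cIdx x = R.cIdx y) ∧
      (∀ x y, jE x = some y → y = a2 ∨ y = b2 →
        Q.typ x = R.typ y ∧ jN (Q.src x) = some (R.src y) ∧
        Q.tgt x = some c' ∧ Q.cIdx x = R.cIdx y)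

/-- Commutation of a sync link with a `⊗` or `⅋` link: the sync link acting
on the conclusion `z` of the multiplicative link `m` (with corresponding sync
conclusion `w`) is pushed above `m`, now acting on the two premisses `x`, `y`
of `m` via two fresh sync positions (indices `i₁`, `i₂`) with fresh edges
`x'`, `y'`. -/
def SyncMultStep (R Q : Struct) : Prop :=
  ∃ (l m : R.Node) (z w x y : R.Edge) (i₁ i₂ : ℕ),
    R.sort l = .sync ∧ (R.sort m = .tens ∨ R.sort m = .parr) ∧
    R.box l = none ∧ R.box m = none ∧
    R.src z = m ∧ R.tgt z = some l ∧ R.src w = l ∧ R.cIdx w = R.pIdx z ∧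
    x ≠ y ∧ R.prems m = {x, y} ∧ R.pIdx x = 0 ∧ R.pIdx y = 1 ∧
    i₁ ≠ i₂ ∧
    (∀ e, R.tgt e = some l → R.pIdx e ≠ i₁ ∧ R.pIdx e ≠ i₂) ∧
    (∀ e, R.src e = l → R.cIdx e ≠ i₁ ∧ R.cIdx e ≠ i₂) ∧
    ∃ (jN : Q.Node → Option R.Node) (jE : Q.Edge → Option R.Edge)
      (l' m' : Q.Node) (x' y' : Q.Edge),
      JTotal jN ∧ PInjOnto jN Set.univ ∧
      PInjOnto jE {e | e ≠ z} ∧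
      jN l' = some l ∧ jN m' = some m ∧
      x' ≠ y' ∧ jE x' = none ∧ jE y' = none ∧ (∀ e, jE e = none → e = x' ∨ e = y') ∧
      AgreesOn Q R jN jE {x, y, w} ∅ ∧
      (∀ e, jE e = some x →
        Q.typ e = R.typ x ∧ jN (Q.src e) = some (R.src x) ∧
        Q.tgt e = some l' ∧ Q.pIdx e = i₁ ∧ Q.cIdx e = R.cIdx x) ∧
      (∀ e, jE e = some y →
        Q.typ e = R.typ y ∧ jN (Q.src e) = some (R.src y) ∧
        Q.tgt e = some l' ∧ Q.pIdx e = i₂ ∧ Q.cIdx e = R.cIdx y) ∧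
      (∀ e, jE e = some w →
        Q.typ e = R.typ w ∧ Q.src e = m' ∧
        (Q.tgt e).bind jN = R.tgt w ∧ Q.pIdx e = R.pIdx w ∧ Q.cIdx e = R.cIdx w) ∧
      (Q.typ x' = R.typ x ∧ Q.src x' = l' ∧ Q.tgt x' = some m' ∧
        Q.pIdx x' = 0 ∧ Q.cIdx x' = i₁) ∧
      (Q.typ y' = R.typ y ∧ Q.src y' = l' ∧ Q.tgt y' = some m' ∧
        Q.pIdx y' = 1 ∧ Q.cIdx y' = i₂)

/-- Commutation of a sync link with an axiom: a sync link acting on a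
positive conclusion `u` of an axiom (with corresponding conclusion `u'`) is
moved to the axiom's other conclusion `v` (of type `P⊥`), with a fresh sync
position of index `j` and fresh edge `v'`. -/
def SyncAxStep (R Q : Struct) : Prop :=
  ∃ (l a : R.Node) (u u' v : R.Edge) (j : ℕ),
    R.sort l = .sync ∧ R.sort a = .ax ∧ R.box l = none ∧ R.box a = none ∧
    (R.typ u).Positive ∧ u ≠ v ∧ R.concls a = {u, v} ∧
    R.tgt u = some l ∧ R.src u' = l ∧ R.cIdx u' = R.pIdx u ∧ u' ≠ u ∧ u' ≠ v ∧
    (∀ e, R.tgt e = some l → R.pIdx e ≠ j) ∧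
    (∀ e, R.src e = l → R.cIdx e ≠ j) ∧
    ∃ (jN : Q.Node → Option R.Node) (jE : Q.Edge → Option R.Edge)
      (l' a' : Q.Node) (v' : Q.Edge),
      JTotal jN ∧ PInjOnto jN Set.univ ∧ PInjOnto jE {e | e ≠ u} ∧
      jN l' = some l ∧ jN a' = some a ∧
      jE v' = none ∧ (∀ e, jE e = none → e = v') ∧
      AgreesOn Q R jN jE {u', v} ∅ ∧
      (∀ e, jE e = some u' →
        Q.typ e = R.typ u' ∧ Q.src e = a' ∧ Q.cIdx e = R.cIdx u ∧
        (Q.tgt e).bind jN = R.tgt u' ∧ Q.pIdx e = R.pIdx u') ∧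
      (∀ e, jE e = some v →
        Q.typ e = R.typ v ∧ Q.src e = a' ∧ Q.cIdx e = R.cIdx v ∧
        Q.tgt e = some l' ∧ Q.pIdx e = j) ∧
      (Q.typ v' = R.typ v ∧ Q.src v' = l' ∧ Q.cIdx v' = j ∧
        (Q.tgt v').bind jN = R.tgt v ∧ Q.pIdx v' = R.pIdx v)

/-- Commutation of a sync link with a cut: a sync link acting on the premiss
`d'` (of negative type `P⊥`) of a cut is moved to the other premiss `q`. -/
def SyncCutStep (R Q : Struct) : Prop :=
  ∃ (l c : R.Node) (d d' q : R.Edge) (j : ℕ),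
    R.sort l = .sync ∧ R.sort c = .cut ∧ R.box l = none ∧ R.box c = none ∧
    (R.typ d').Negative ∧
    R.src d' = l ∧ R.tgt d' = some c ∧ R.tgt d = some l ∧ R.pIdx d = R.cIdx d' ∧
    d' ≠ q ∧ d ≠ q ∧ d ≠ d' ∧ R.prems c = {d', q} ∧
    (∀ e, R.tgt e = some l → R.pIdx e ≠ j) ∧
    (∀ e, R.src e = l → R.cIdx e ≠ j) ∧
    ∃ (jN : Q.Node → Option R.Node) (jE : Q.Edge → Option R.Edge)
      (l' c' : Q.Node) (q' : Q.Edge),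
      JTotal jN ∧ PInjOnto jN Set.univ ∧ PInjOnto jE {e | e ≠ d'} ∧
      jN l' = some l ∧ jN c' = some c ∧
      jE q' = none ∧ (∀ e, jE e = none → e = q') ∧
      AgreesOn Q R jN jE {d, q} ∅ ∧
      (∀ e, jE e = some d →
        Q.typ e = R.typ d ∧ jN (Q.src e) = some (R.src d) ∧ Q.cIdx e = R.cIdx d ∧
        Q.tgt e = some c' ∧ Q.pIdx e = R.pIdx d') ∧
      (∀ e, jE e = some q →
        Q.typ e = R.typ q ∧ jN (Q.src e) = some (R.src q) ∧ Q.cIdx e = R.cIdx q ∧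
        Q.tgt e = some l' ∧ Q.pIdx e = j) ∧
      (Q.typ q' = R.typ q ∧ Q.src q' = l' ∧ Q.cIdx q' = j ∧
        Q.tgt q' = some c' ∧ Q.pIdx q' = R.pIdx q)

/-- Sync elimination: a sync link all of whose premisses are conclusions of
`one`-links is erased, merging each premiss with its corresponding
conclusion. -/
def SyncElimStep (R Q : Struct) : Prop :=
  ∃ l : R.Node, R.sort l = .sync ∧ R.box l = none ∧
    (∀ e ∈ R.prems l, R.sort (R.src e) = .one) ∧
    ∃ (jN : Q.Node → Option R.Node) (jE : Q.Edge → Option R.Edge),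
      JTotal jN ∧ JTotal jE ∧
      PInjOnto jN {n | n ≠ l} ∧
      PInjOnto jE {e | R.src e ≠ l} ∧
      AgreesOn Q R jN jE {e | R.tgt e = some l} ∅ ∧
      (∀ x e f, jE x = some e → R.tgt e = some l → R.src f = l →
        R.cIdx f = R.pIdx e →
        Q.typ x = R.typ e ∧ jN (Q.src x) = some (R.src e) ∧
        (Q.tgt x).bind jN = R.tgt f ∧ Q.pIdx x = R.pIdx f ∧ Q.cIdx x = R.cIdx e)

/-- The `one/⊥` step (box opening): a cut between the conclusion `o` of a
`one`-link `n₁` and the lock `k` of a box `b` removes the cut, the `one`-link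
and the `bot`-link, and opens the box. -/
def OneBotStep (R Q : Struct) : Prop :=
  ∃ (c n₁ b : R.Node) (o k : R.Edge),
    R.sort c = .cut ∧ R.sort n₁ = .one ∧ R.sort b = .bot ∧
    R.box c = none ∧ R.box n₁ = none ∧ R.box b = none ∧
    o ≠ k ∧ R.prems c = {o, k} ∧ R.src o = n₁ ∧ R.src k = b ∧
    ∃ (jN : Q.Node → Option R.Node) (jE : Q.Edge → Option R.Edge),
      JTotal jN ∧ JTotal jE ∧
      PInjOnto jN {n | n ≠ c ∧ n ≠ n₁ ∧ n ≠ b} ∧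
      PInjOnto jE {e | e ≠ o ∧ e ≠ k} ∧
      (∀ x e, jE x = some e →
        Q.typ x = R.typ e ∧ jN (Q.src x) = some (R.src e) ∧
        (Q.tgt x).bind jN = R.tgt e ∧ Q.pIdx x = R.pIdx e ∧ Q.cIdx x = R.cIdx e) ∧
      (∀ n m, jN n = some m →
        Q.sort n = R.sort m ∧
        (∀ b₀ b₀', jN b₀ = some b₀' → (b₀ ∈ Q.boxes n ↔ b₀' ∈ R.boxes m ∧ b₀' ≠ b)) ∧
        (R.box m = some b → Q.box n = none) ∧
        (R.box m ≠ some b → (Q.box n).bind jN = R.box m))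

/-- The sync-commutation and sync-elimination steps. -/
def SyncRed (R Q : Struct) : Prop :=
  SyncMultStep R Q ∨ SyncAxStep R Q ∨ SyncCutStep R Q ∨ SyncElimStep R Q

/-- The reduction relation `→` on SMLL structures (applied at depth 0 only). -/
def Step (R Q : Struct) : Prop :=
  AxCutStep R Q ∨ TensParrStep R Q ∨ SyncRed R Q ∨ OneBotStep R Q

/-- Isomorphism of structures. -/
def Isom (R Q : Struct) : Prop :=
  ∃ (en : R.Node ≃ Q.Node) (ee : R.Edge ≃ Q.Edge),
    (∀ e, Q.typ (ee e) = R.typ e) ∧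
    (∀ e, Q.src (ee e) = en (R.src e)) ∧
    (∀ e, Q.tgt (ee e) = (R.tgt e).map en) ∧
    (∀ e, Q.pIdx (ee e) = R.pIdx e) ∧
    (∀ e, Q.cIdx (ee e) = R.cIdx e) ∧
    (∀ n, Q.sort (en n) = R.sort n) ∧
    (∀ n, Q.box (en n) = (R.box n).map en) ∧
    (∀ n, Q.boxes (en n) = (R.boxes n).image en)

/-! ## The SIAM: a synchronous interaction abstract machine -/

namespace Struct

variable (S : Struct)

/-- The value of a token: either an occurrence of an atom on an edge, or a
position `(e, i)` on the lock `e` of a box (`BOTBOX`). -/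
inductive PosVal (S : Struct) : Type
  | atom : S.Edge → Formula.Addr → PosVal S
  | lock : S.Edge → ℕ → PosVal S

/-- Initial positions: negative atom occurrences in the conclusions. -/
def InitPos (p : S.Edge × Formula.Addr) : Prop :=
  S.tgt p.1 = none ∧ Formula.NegOcc (S.typ p.1) p.2

/-- Final positions: positive atom occurrences in the conclusions. -/
def FinPos (p : S.Edge × Formula.Addr) : Prop :=
  S.tgt p.1 = none ∧ Formula.PosOcc (S.typ p.1) p.2

/-- One positions: conclusions of `one`-links. -/
def OnePos (p : S.Edge × Formula.Addr) : Prop :=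
  S.sort (S.src p.1) = .one ∧ p.2 = []

/-- Valid token values: genuine atom occurrences, or positions on the lock of
a box. -/
def ValidVal : PosVal S → Prop
  | .atom e m => Formula.AtomOcc (S.typ e) m
  | .lock e _ => S.sort (S.src e) = .bot

end Struct

/-- A state of the SIAM machine `M_S`: a (partial) function from
`INIT(S) ∪ L` (with `L ⊆ ONES(S)`) to the positions of `S`; it records, for
each token, its origin and its current position. -/
structure SState (S : Struct) where
  f : S.Edge × Formula.Addr → Option (Struct.PosVal S)
  dom_subset : ∀ p, f p ≠ none → S.InitPos p ∨ S.OnePos p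
  init_total : ∀ p, S.InitPos p → f p ≠ none
  val_valid : ∀ p v, f p = some v → S.ValidVal v

namespace Struct

variable (S : Struct)

/-- The box `b` is unlocked in state `T`: some token sits on its lock. -/
def Unlocked (T : SState S) (b : S.Node) : Prop :=
  ∃ p e i, T.f p = some (.lock e i) ∧ S.src e = b

/-- A link is active: all the boxes containing it are unlocked. -/
def Active (T : SState S) (n : S.Node) : Prop :=
  ∀ b ∈ S.boxes n, S.Unlocked T b

end Struct

open Classical in
/-- The initial state `I_S`: the identity on the initial positions. -/
noncomputable def initState (S : Struct) : SState S where
  f := fun p => if S.InitPos p then some (.atom p.1 p.2) else none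
  dom_subset := by
    intro p hp
    by_cases h : S.InitPos p
    · exact Or.inl h
    · simp [h] at hp
  init_total := by intro p hp; simp [hp]
  val_valid := by
    intro p v hv
    by_cases h : S.InitPos p
    · simp only [if_pos h, Option.some.injEq] at hv
      subst hv
      exact h.2.atomOcc
    · simp [h] at hv

/-- The transition relation of the SIAM.  Tokens on negative atom occurrences
move upwards, tokens on positive atom occurrences move downwards; all tokens
cross a sync link simultaneously, when each of its in-edges is saturated;
active `one`-links may spawn a token; a token reaching the lock of a box
unlocks it.  Tokens may only cross active links (so they can enter a box only
when it is unlocked). -/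
inductive STrans (S : Struct) : SState S → SState S → Prop
  | axUp {T T' : SState S} {p : S.Edge × Formula.Addr} {e e' : S.Edge}
      {m : Formula.Addr} {a : S.Node} :
      T.f p = some (.atom e m) →
      Formula.NegOcc (S.typ e) m →
      S.src e = a → S.sort a = .ax → S.Active T a →
      S.src e' = a → e' ≠ e →
      (∀ q, q ≠ p → T'.f q = T.f q) →
      T'.f p = some (.atom e' m) →
      STrans S T T'
  | cutDown {T T' : SState S} {p : S.Edge × Formula.Addr} {e e' : S.Edge}
      {m : Formula.Addr} {c : S.Node} :
      T.f p = some (.atom e m) →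
      Formula.PosOcc (S.typ e) m →
      S.tgt e = some c → S.sort c = .cut → S.Active T c →
      S.tgt e' = some c → e' ≠ e →
      (∀ q, q ≠ p → T'.f q = T.f q) →
      T'.f p = some (.atom e' m) →
      STrans S T T'
  | multDown {T T' : SState S} {p : S.Edge × Formula.Addr} {e g : S.Edge}
      {m : Formula.Addr} {n : S.Node} {b : Bool} :
      T.f p = some (.atom e m) →
      Formula.PosOcc (S.typ e) m →
      S.tgt e = some n → (S.sort n = .tens ∨ S.sort n = .parr) → S.Active T n →
      S.src g = n →
      S.pIdx e = (if b then 1 else 0) →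
      (∀ q, q ≠ p → T'.f q = T.f q) →
      T'.f p = some (.atom g (b :: m)) →
      STrans S T T'
  | multUp {T T' : SState S} {p : S.Edge × Formula.Addr} {e g : S.Edge}
      {m : Formula.Addr} {n : S.Node} {b : Bool} :
      T.f p = some (.atom g (b :: m)) →
      Formula.NegOcc (S.typ g) (b :: m) →
      S.src g = n → (S.sort n = .tens ∨ S.sort n = .parr) → S.Active T n →
      S.tgt e = some n →
      S.pIdx e = (if b then 1 else 0) →
      (∀ q, q ≠ p → T'.f q = T.f q) →
      T'.f p = some (.atom e m) →
      STrans S T T'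
  | lockTok {T T' : SState S} {p : S.Edge × Formula.Addr} {e : S.Edge}
      {b' : S.Node} :
      T.f p = some (.atom e []) →
      S.typ e = .bot →
      S.src e = b' → S.sort b' = .bot → S.Active T b' →
      (∀ q, q ≠ p → T'.f q = T.f q) →
      T'.f p = some (.lock e 0) →
      STrans S T T'
  | oneSpawn {T T' : SState S} {n : S.Node} {e : S.Edge} :
      S.sort n = .one → S.Active T n → S.src e = n →
      T.f (e, []) = none →
      (∀ q, q ≠ (e, []) → T'.f q = T.f q) →
      T'.f (e, []) = some (.atom e []) →
      STrans S T T'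
  | syncCross {T T' : SState S} {l : S.Node} :
      S.sort l = .sync → S.Active T l →
      (∃ q e m, T.f q = some (.atom e m) ∧
        ((S.tgt e = some l ∧ (S.typ e).Positive) ∨
         (S.src e = l ∧ (S.typ e).Negative))) →
      (∀ e, ((S.tgt e = some l ∧ (S.typ e).Positive) ∨
             (S.src e = l ∧ (S.typ e).Negative)) →
        ∀ m, Formula.AtomOcc (S.typ e) m → ∃ q, T.f q = some (.atom e m)) →
      (∀ q e m, T.f q = some (.atom e m) → S.tgt e = some l → (S.typ e).Positive →
        ∃ e', S.src e' = l ∧ S.cIdx e' = S.pIdx e ∧ T'.f q = some (.atom e' m)) →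
      (∀ q e m, T.f q = some (.atom e m) → S.src e = l → (S.typ e).Negative →
        ∃ e', S.tgt e' = some l ∧ S.pIdx e' = S.cIdx e ∧ T'.f q = some (.atom e' m)) →
      (∀ q, (∀ e m, T.f q = some (.atom e m) →
          ¬(S.tgt e = some l ∧ (S.typ e).Positive) ∧
          ¬(S.src e = l ∧ (S.typ e).Negative)) →
        T'.f q = T.f q) →
      STrans S T T'

/-- A final state: its image consists of all the final positions together
with positions on the locks of boxes. -/
def SState.Final {S : Struct} (T : SState S) : Prop :=
  (∀ q v, T.f q = some v →
    (∃ e m, v = .atom e m ∧ S.FinPos (e, m)) ∨ (∃ e i, v = .lock e i)) ∧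
  (∀ e m, S.FinPos (e, m) → ∃ q, T.f q = some (.atom e m))

/-- The machine of `S` deadlocks: some maximal transition sequence from the
initial state ends in a non-final state. -/
def Deadlocks (S : Struct) : Prop :=
  ∃ T : SState S, Relation.ReflTransGen (STrans S) (initState S) T ∧
    (∀ T', ¬ STrans S T T') ∧ ¬ T.Final

/-- The machine of `S` is deadlock free: every maximal transition sequence
from the initial state ends in a final state. -/
def DeadlockFree (S : Struct) : Prop :=
  ∀ T : SState S, Relation.ReflTransGen (STrans S) (initState S) T →
    (∀ T', ¬ STrans S T T') → T.Final

/-! ## The closure of a net -/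

/-- A structure with a designated (main) conclusion. -/
structure PNet : Type 1 where
  S : Struct
  main : S.Edge

/-- The net consisting of a single `one`-link. -/
def oneNet : PNet where
  S :=
    { Edge := Unit
      Node := Unit
      edgeFintype := inferInstance
      nodeFintype := inferInstance
      edgeDecEq := inferInstance
      nodeDecEq := inferInstance
      typ := fun _ => .one
      sort := fun _ => .one
      src := fun _ => ()
      tgt := fun _ => none
      pIdx := fun _ => 0
      cIdx := fun _ => 0
      box := fun _ => none
      boxes := fun _ => ∅ }
  main := ()

/-- The net consisting of a single axiom of conclusions `A⊥, A`, with main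
conclusion `A`. -/
def axNet (A : Formula) : PNet where
  S :=
    { Edge := Bool
      Node := Unit
      edgeFintype := inferInstance
      nodeFintype := inferInstance
      edgeDecEq := inferInstance
      nodeDecEq := inferInstance
      typ := fun e => if e then A else A.dual
      sort := fun _ => .ax
      src := fun _ => ()
      tgt := fun _ => none
      pIdx := fun _ => 0
      cIdx := fun e => if e then 1 else 0
      box := fun _ => none
      boxes := fun _ => ∅ }
  main := true

/-- Joining the main conclusions of two nets by a binary link of sort `s`
and conclusion type `C`. -/
def joinNet (s : LinkSort) (C : Formula) (P Q : PNet) : PNet where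
  S :=
    { Edge := Option (P.S.Edge ⊕ Q.S.Edge)
      Node := Option (P.S.Node ⊕ Q.S.Node)
      edgeFintype := inferInstance
      nodeFintype := inferInstance
      edgeDecEq := inferInstance
      nodeDecEq := inferInstance
      typ := fun e =>
        match e with
        | none => C
        | some (.inl x) => P.S.typ x
        | some (.inr y) => Q.S.typ y
      sort := fun n =>
        match n with
        | none => s
        | some (.inl x) => P.S.sort x
        | some (.inr y) => Q.S.sort y
      src := fun e =>
        match e with
        | none => none
        | some (.inl x) => some (.inl (P.S.src x))
        | some (.inr y) => some (.inr (Q.S.src y))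
      tgt := fun e =>
        match e with
        | none => none
        | some (.inl x) =>
            if x = P.main then some none
            else (P.S.tgt x).map fun n => some (.inl n)
        | some (.inr y) =>
            if y = Q.main then some none
            else (Q.S.tgt y).map fun n => some (.inr n)
      pIdx := fun e =>
        match e with
        | none => 0
        | some (.inl x) => if x = P.main then 0 else P.S.pIdx x
        | some (.inr y) => if y = Q.main then 1 else Q.S.pIdx y
      cIdx := fun e =>
        match e with
        | none => 0
        | some (.inl x) => P.S.cIdx x
        | some (.inr y) => Q.S.cIdx y
      box := fun n =>
        match n with
        | none => none
        | some (.inl x) => (P.S.box x).map fun m => some (.inl m)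
        | some (.inr y) => (Q.S.box y).map fun m => some (.inr m)
      boxes := fun n =>
        match n with
        | none => ∅
        | some (.inl x) => (P.S.boxes x).image fun m => some (.inl m)
        | some (.inr y) => (Q.S.boxes y).image fun m => some (.inr m) }
  main := none

/-- The net `R°(A)`, by induction on `A`: it has conclusions `Γ, A` with no
occurrence of `⊥` in `Γ`, and main conclusion `A`. -/
def circNet : Formula → PNet
  | .one => oneNet
  | .bot => axNet .bot
  | .var n => axNet (.var n)
  | .covar n => axNet (.covar n)
  | .tens A B => joinNet .tens (.tens A B) (circNet A) (circNet B)
  | .parr A B => joinNet .parr (.parr A B) (circNet A) (circNet B)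

/-- The conclusions of `R` containing an occurrence of `⊥`. -/
abbrev BadC (R : Struct) :=
  {e : R.Edge // R.tgt e = none ∧ (R.typ e).hasBotB = true}

/-- The closure `R̂` of `R`: each conclusion `A` of `R` containing `⊥` is cut
against the main conclusion of a copy of `R°(A⊥)`. -/
def netClosure (R : Struct) : Struct where
  Edge := R.Edge ⊕ Σ e : BadC R, (circNet (R.typ e.val).dual).S.Edge
  Node := R.Node ⊕ ((Σ e : BadC R, (circNet (R.typ e.val).dual).S.Node) ⊕ BadC R)
  edgeFintype := inferInstance
  nodeFintype := inferInstance
  edgeDecEq := inferInstance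
  nodeDecEq := inferInstance
  typ := fun e =>
    match e with
    | .inl e => R.typ e
    | .inr ⟨b, x⟩ => (circNet (R.typ b.val).dual).S.typ x
  sort := fun n =>
    match n with
    | .inl n => R.sort n
    | .inr (.inl ⟨b, x⟩) => (circNet (R.typ b.val).dual).S.sort x
    | .inr (.inr _) => .cut
  src := fun e =>
    match e with
    | .inl e => .inl (R.src e)
    | .inr ⟨b, x⟩ => .inr (.inl ⟨b, (circNet (R.typ b.val).dual).S.src x⟩)
  tgt := fun e =>
    match e with
    | .inl e =>
        if h : R.tgt e = none ∧ (R.typ e).hasBotB = true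
        then some (.inr (.inr ⟨e, h⟩))
        else (R.tgt e).map Sum.inl
    | .inr ⟨b, x⟩ =>
        if x = (circNet (R.typ b.val).dual).main
        then some (.inr (.inr b))
        else ((circNet (R.typ b.val).dual).S.tgt x).map fun n => .inr (.inl ⟨b, n⟩)
  pIdx := fun e =>
    match e with
    | .inl e => R.pIdx e
    | .inr ⟨b, x⟩ =>
        if x = (circNet (R.typ b.val).dual).main then 1
        else (circNet (R.typ b.val).dual).S.pIdx x
  cIdx := fun e =>
    match e with
    | .inl e => R.cIdx e
    | .inr ⟨b, x⟩ => (circNet (R.typ b.val).dual).S.cIdx x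
  box := fun n =>
    match n with
    | .inl n => (R.box n).map Sum.inl
    | .inr (.inl ⟨b, x⟩) =>
        ((circNet (R.typ b.val).dual).S.box x).map fun m => .inr (.inl ⟨b, m⟩)
    | .inr (.inr _) => none
  boxes := fun n =>
    match n with
    | .inl n => (R.boxes n).image Sum.inl
    | .inr (.inl ⟨b, x⟩) =>
        ((circNet (R.typ b.val).dual).S.boxes x).image fun m => .inr (.inl ⟨b, m⟩)
    | .inr (.inr _) => ∅

namespace Siam

section Cyc
variable {V : Type}

def Turn (fl : V → V → Prop) (u v w : V) : Prop := u ≠ w ∧ ¬ (fl v u ∧ fl v w)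

def HasCyc (adj fl : V → V → Prop) : Prop :=
  ∃ (k : ℕ) (f : ℕ → V), 0 < k ∧ (∀ i, f (i + k) = f i) ∧
    (∀ i j, i < k → j < k → f i = f j → i = j) ∧
    (∀ i, adj (f i) (f (i + 1))) ∧ ∀ i, Turn fl (f i) (f (i + 1)) (f (i + 2))

theorem hasCyc_seg {adj fl : V → V → Prop} (f : ℕ → V) (j : ℕ) (hj : 2 ≤ j)
    (h0 : f j = f 0) (hinj : ∀ a b, a < j → b < j → f a = f b → a = b)
    (hadj : ∀ i, i < j → adj (f i) (f (i + 1)))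
    (hturn : ∀ i, i + 2 ≤ j → Turn fl (f i) (f (i + 1)) (f (i + 2)))
    (hclose : Turn fl (f (j - 1)) (f 0) (f 1)) : HasCyc adj fl := by
  have key : ∀ i, i % j < j := fun i => Nat.mod_lt _ (by omega)
  have m1 : ∀ i, f ((i + 1) % j) = f (i % j + 1) := by
    intro i
    by_cases h : i % j + 1 < j
    · rw [Nat.add_mod, Nat.mod_eq_of_lt (show 1 < j by omega), Nat.mod_eq_of_lt h]
    · have : i % j + 1 = j := by have := key i; omega
      rw [Nat.add_mod, Nat.mod_eq_of_lt (show 1 < j by omega), this, Nat.mod_self, h0]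
  refine ⟨j, fun n => f (n % j), by omega, ?_, ?_, ?_, ?_⟩
  · intro i; simp
  · intro a b ha hb h
    simp only [Nat.mod_eq_of_lt ha, Nat.mod_eq_of_lt hb] at h
    exact hinj a b ha hb h
  · intro i
    show adj (f (i % j)) (f ((i + 1) % j))
    rw [m1]; exact hadj _ (key i)
  · intro i
    show Turn fl (f (i % j)) (f ((i + 1) % j)) (f ((i + 2) % j))
    have h2 := m1 (i + 1)
    rw [show i + 1 + 1 = i + 2 by omega] at h2
    have hk := key i
    by_cases h : i % j + 1 < j
    · have e : (i + 1) % j = i % j + 1 := by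
        rw [Nat.add_mod, Nat.mod_eq_of_lt (show 1 < j by omega), Nat.mod_eq_of_lt h]
      rw [h2, e]
      exact hturn _ (by omega)
    · have e0 : i % j + 1 = j := by omega
      have e : (i + 1) % j = 0 := by
        rw [Nat.add_mod, Nat.mod_eq_of_lt (show 1 < j by omega), e0, Nat.mod_self]
      rw [h2, e, show i % j = j - 1 by omega]
      exact hclose

theorem hasCyc_rot {k : ℕ} {f : ℕ → V} (hk : 0 < k)
    (hp : ∀ i, f (i + k) = f i) (hinj : ∀ i j, i < k → j < k → f i = f j → i = j) (r : ℕ) :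
    (∀ i, f (r + (i + k)) = f (r + i)) ∧
    (∀ i j, i < k → j < k → f (r + i) = f (r + j) → i = j) := by
  have hm : ∀ i, f (i % k) = f i := by
    intro i
    have : ∀ q, f (i % k + k * q) = f (i % k) := by
      intro q
      induction q with
      | zero => simp
      | succ q ih => rw [Nat.mul_succ, ← Nat.add_assoc, hp, ih]
    rw [← this (i / k), Nat.mod_add_div]
  refine ⟨fun i => by rw [← Nat.add_assoc, hp], ?_⟩
  intro i j hi hj h
  rw [← hm (r + i), ← hm (r + j)] at h
  have h1 := hinj _ _ (Nat.mod_lt _ hk) (Nat.mod_lt _ hk) h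
  have h2 : i ≡ j [MOD k] := Nat.ModEq.add_left_cancel' r h1
  unfold Nat.ModEq at h2
  rwa [Nat.mod_eq_of_lt hi, Nat.mod_eq_of_lt hj] at h2

theorem bool3 : ∀ a b c : Bool, a ≠ c → b ≠ c → a = b := by decide

open Classical in
theorem split_step {adj adj' fl fl' : V → V → Prop} {κ : V} {c : Bool → V}
    (hsymm : ∀ u v, adj' u v → adj' v u)
    (hA : ∀ u v, adj' u v →
      adj (if ∃ i, u = c i then κ else u) (if ∃ i, v = c i then κ else v))
    (hk : ∀ v, ¬ adj' κ v)
    (h12 : ∀ i j, ¬ adj' (c i) (c j))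
    (hF0 : ∀ u v, adj' u v → (∀ i, u ≠ c i) → (∀ i, v ≠ c i) → fl u v → fl' u v)
    (hF1 : ∀ u i, adj' u (c i) → fl u κ → fl' u (c i))
    (h3 : ∀ i a b, adj' (c i) a → adj' (c i) b → a ≠ b → ¬ (fl κ a ∧ fl κ b))
    (h4 : ∃ x y, ∀ a b, adj' (c false) a → adj' (c true) b →
      ((a = b ∧ ¬ (fl' a (c false) ∧ fl' a (c true))) ∨ (fl κ a ∧ fl κ b)) → a = x ∧ b = y) :
    HasCyc adj' fl' → HasCyc adj fl := by
  set π : V → V := fun v => if ∃ i, v = c i then κ else v with hπ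
  have πc : ∀ i, π (c i) = κ := fun i => by simp only [hπ]; rw [if_pos ⟨i, rfl⟩]
  have πn : ∀ v, (∀ i, v ≠ c i) → π v = v := fun v h => by
    simp only [hπ]; rw [if_neg]; rintro ⟨i, hi⟩; exact h i hi
  have fl_π : ∀ u v, adj' u v → (∀ i, u ≠ c i) → fl u (π v) → fl' u v := by
    intro u v ha hu hf
    by_cases hv : ∃ i, v = c i
    · obtain ⟨i, rfl⟩ := hv
      rw [πc] at hf; exact hF1 u i ha hf
    · push Not at hv
      rw [πn v hv] at hf; exact hF0 u v ha hu hv hf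
  -- excursions
  have exc : ∀ (f : ℕ → V) (j : ℕ), 2 ≤ j → (∃ i, f 0 = c i) → (∃ i, f j = c i) →
      (∀ t, 0 < t → t < j → ∀ i, f t ≠ c i) →
      (∀ a b, a < j → b < j → f a = f b → a = b) →
      (∀ i, adj' (f i) (f (i + 1))) → (∀ i, Turn fl' (f i) (f (i + 1)) (f (i + 2))) →
      f 1 ≠ f (j - 1) → ¬ (fl κ (f 1) ∧ fl κ (f (j - 1))) → HasCyc adj fl := by
    intro f j hj h0 hjc hin hinj hadj hturn hne hnf
    obtain ⟨i0, hi0⟩ := h0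
    obtain ⟨ij, hij⟩ := hjc
    have π0 : π (f 0) = κ := by rw [hi0, πc]
    have πj : π (f j) = κ := by rw [hij, πc]
    have πin : ∀ t, 0 < t → t < j → π (f t) = f t := fun t h h' => πn _ (hin t h h')
    have nk : ∀ t, f t ≠ κ := fun t h => hk _ (h ▸ hadj t)
    refine hasCyc_seg (fun t => π (f t)) j hj (by simp only [π0, πj]) ?_ ?_ ?_ ?_
    · intro a b ha hb h
      rcases Nat.eq_zero_or_pos a with rfl | ha' <;> rcases Nat.eq_zero_or_pos b with rfl | hb'
      · rfl
      · simp only [π0, πin b hb' hb] at h; exact absurd h.symm (nk b)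
      · simp only [π0, πin a ha' ha] at h; exact absurd h (nk a)
      · simp only [πin b hb' hb, πin a ha' ha] at h; exact hinj _ _ ha hb h
    · intro i hi; exact hA _ _ (hadj i)
    · intro i hi
      have hm : π (f (i + 1)) = f (i + 1) := πin _ (by omega) (by omega)
      have hmn := hin (i + 1) (by omega) (by omega)
      refine ⟨?_, ?_⟩
      · intro h
        rcases Nat.eq_zero_or_pos i with rfl | hi'
        · rcases Nat.lt_or_eq_of_le hi with h2 | h2
          · simp only [π0, πin (0 + 2) (by omega) h2] at h; exact nk _ h.symm
          · apply hne; rw [← h2]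
        · rcases Nat.lt_or_eq_of_le hi with h2 | h2
          · simp only [πin i hi' (by omega), πin (i + 2) (by omega) h2] at h
            exact (hturn i).1 h
          · simp only [h2, πj, πin i hi' (by omega)] at h; exact nk _ h
      · rintro ⟨h1, h2⟩
        simp only [hm] at h1 h2
        exact (hturn i).2 ⟨fl_π _ _ (hsymm _ _ (hadj i)) hmn h1, fl_π _ _ (hadj (i + 1)) hmn h2⟩
    · show Turn fl (π (f (j - 1))) (π (f 0)) (π (f 1))
      rw [π0, πin 1 (by omega) (by omega), πin (j - 1) (by omega) (by omega)]
      exact ⟨hne.symm, fun h => hnf h.symm⟩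
  rintro ⟨k, f, hk0, hp, hinj, hadj, hturn⟩
  have nk : ∀ t, f t ≠ κ := fun t h => hk _ (h ▸ hadj t)
  have hk3 : 3 ≤ k := by
    have hz := hp 0
    rw [Nat.zero_add] at hz
    have h2 := (hturn 0).1
    rw [Nat.zero_add] at h2
    by_contra hlt
    have : k = 1 ∨ k = 2 := by omega
    rcases this with rfl | rfl
    · have := hp 1; simp only [Nat.reduceAdd] at this; apply h2; rw [this, hz]
    · exact h2 hz.symm
  by_cases hvis : ∃ t i, f t = c i
  · obtain ⟨r, i, hr⟩ := hvis
    obtain ⟨hp', hinj'⟩ := hasCyc_rot hk0 hp hinj r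
    set g : ℕ → V := fun t => f (r + t) with hg
    have gadj : ∀ t, adj' (g t) (g (t + 1)) := fun t => hadj (r + t)
    have gturn : ∀ t, Turn fl' (g t) (g (t + 1)) (g (t + 2)) := fun t => hturn (r + t)
    have gp : ∀ t, g (t + k) = g t := hp'
    have g0 : g 0 = c i := hr
    have gk : g k = c i := by have := gp 0; rw [Nat.zero_add] at this; rw [this, g0]
    have gclose : Turn fl' (g (k - 1)) (g 0) (g 1) := by
      have := gturn (k - 1)
      rw [show k - 1 + 1 = 0 + k by omega, show k - 1 + 2 = 1 + k by omega, gp, gp] at this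
      exact this
    by_cases hoth : ∃ j, j < k ∧ 0 < j ∧ ∃ i', g j = c i'
    · obtain ⟨j, hjk, hj0, i', hj⟩ := hoth
      have hii : i' ≠ i := by
        rintro rfl
        have := hinj' 0 j hk0 hjk (by show g 0 = g j; rw [g0, hj])
        omega
      have only : ∀ t, t < k → ∀ i'', g t = c i'' → t = 0 ∨ t = j := by
        intro t ht i'' h
        by_cases e : i'' = i
        · left; exact hinj' t 0 ht hk0 (by show g t = g 0; rw [h, g0, e])
        · right
          have : i'' = i' := bool3 _ _ _ e hii
          exact hinj' t j ht hjk (by show g t = g j; rw [h, hj, this])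
      have hj2 : 2 ≤ j := by
        by_contra hlt
        have : j = 1 := by omega
        subst this
        have := gadj 0
        rw [g0, Nat.zero_add, hj] at this
        exact h12 _ _ this
      have hkj2 : 2 ≤ k - j := by
        by_contra hlt
        have e : j + 1 = k := by omega
        have := gadj j
        rw [e, gk, hj] at this
        exact h12 _ _ this
      by_contra hno
      have badP : g 1 = g (j - 1) ∨ (fl κ (g 1) ∧ fl κ (g (j - 1))) := by
        by_contra hb
        push Not at hb
        refine hno (exc g j hj2 ⟨i, g0⟩ ⟨i', hj⟩ ?_ ?_ gadj gturn hb.1 fun h => hb.2 h.1 h.2)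
        · intro t ht htj i'' h
          rcases only t (by omega) i'' h with h | h <;> omega
        · intro a b ha hb h; exact hinj' a b (by omega) (by omega) h
      have badQ : g (j + 1) = g (k - 1) ∨ (fl κ (g (j + 1)) ∧ fl κ (g (k - 1))) := by
        by_contra hb
        push Not at hb
        have e1 : j + (k - j - 1) = k - 1 := by omega
        refine hno (exc (fun t => g (j + t)) (k - j) hkj2 ⟨i', hj⟩
          ⟨i, by show g (j + (k - j)) = _; rw [show j + (k - j) = k by omega, gk]⟩ ?_ ?_
          (fun t => gadj (j + t)) (fun t => gturn (j + t)) (by simp only [e1]; exact hb.1)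
          (by simp only [e1]; exact fun h => hb.2 h.1 h.2))
        · intro t ht htj i'' h
          rcases only (j + t) (by omega) i'' h with h | h <;> omega
        · intro a b ha hb h
          have := hinj' (j + a) (j + b) (by omega) (by omega) h
          omega
      have aP : adj' (c i) (g 1) := g0 ▸ gadj 0
      have bP : adj' (c i') (g (j - 1)) := by
        have := gadj (j - 1)
        rw [show j - 1 + 1 = j by omega, hj] at this
        exact hsymm _ _ this
      have cQ : adj' (c i') (g (j + 1)) := hj ▸ gadj j
      have dQ : adj' (c i) (g (k - 1)) := by
        have := gadj (k - 1)
        rw [show k - 1 + 1 = k by omega, gk] at this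
        exact hsymm _ _ this
      have degP : g 1 = g (j - 1) → ¬ (fl' (g 1) (c i) ∧ fl' (g 1) (c i')) := by
        intro h
        have := hinj' 1 (j - 1) (by omega) (by omega) h
        have e : j = 2 := by omega
        have t := (gturn 0).2
        simp only [Nat.zero_add] at t
        rw [g0, ← e, hj] at t
        exact t
      have degQ : g (j + 1) = g (k - 1) → ¬ (fl' (g (j + 1)) (c i') ∧ fl' (g (j + 1)) (c i)) := by
        intro h
        have := hinj' (j + 1) (k - 1) (by omega) (by omega) h
        have t := (gturn j).2
        rw [hj, show j + 2 = k by omega, gk] at t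
        exact t
      obtain ⟨x, y, hxy⟩ := h4
      have fin : g 1 = g (k - 1) := by
        cases i with
        | false =>
          have : i' = true := bool3 _ _ _ hii (by decide)
          subst this
          have P := hxy _ _ aP bP (badP.imp (fun h => ⟨h, degP h⟩) id)
          have Q := hxy _ _ dQ cQ (badQ.imp (fun h => ⟨h.symm, fun h' => degQ h (h ▸ h'.symm)⟩)
            And.symm)
          rw [P.1, Q.1]
        | true =>
          have : i' = false := bool3 _ _ _ hii (by decide)
          subst this
          have P := hxy _ _ bP aP (badP.imp (fun h => ⟨h.symm, fun h' => degP h (h ▸ h'.symm)⟩)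
            And.symm)
          have Q := hxy _ _ cQ dQ (badQ.imp (fun h => ⟨h, degQ h⟩) id)
          rw [P.2, Q.2]
      have := hinj' 1 (k - 1) (by omega) (by omega) fin
      omega
    · push Not at hoth
      have hd : adj' (c i) (g (k - 1)) := by
        have := gadj (k - 1)
        rw [show k - 1 + 1 = k by omega, gk] at this
        exact hsymm _ _ this
      exact exc g k (by omega) ⟨i, g0⟩ ⟨i, gk⟩ (fun t ht htk i' => hoth t htk ht i') hinj' gadj
        gturn gclose.1.symm (h3 i _ _ (g0 ▸ gadj 0) hd gclose.1.symm)
  · push Not at hvis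
    refine ⟨k, f, hk0, hp, hinj, fun i => ?_, fun i => ⟨(hturn i).1, fun h => (hturn i).2 ?_⟩⟩
    · have := hA _ _ (hadj i)
      rw [if_neg, if_neg] at this
      · exact this
      · rintro ⟨j, hj⟩; exact hvis _ _ hj
      · rintro ⟨j, hj⟩; exact hvis _ _ hj
    · exact ⟨hF0 _ _ (hsymm _ _ (hadj i)) (hvis _) (hvis _) h.1,
        hF0 _ _ (hadj (i + 1)) (hvis _) (hvis _) h.2⟩

end Cyc

end Siam

namespace Siam
open Formula

theorem sub_append (A : Formula) (m r : Addr) :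
    sub A (m ++ r) = (sub A m).bind (fun B => sub B r) := by
  induction m generalizing A with
  | nil => simp [sub]
  | cons b m ih => cases A <;> cases b <;> simp [sub, ih]

theorem sub_dual (A : Formula) (m : Addr) : sub A.dual m = (sub A m).map dual := by
  induction m generalizing A with
  | nil => simp [sub]
  | cons b m ih => cases A <;> cases b <;> simp [sub, dual, ih]

theorem sub_finite (A : Formula) : {m : Addr | sub A m ≠ none}.Finite := by
  induction A with
  | one => exact (Set.finite_singleton []).subset (by intro m hm; cases m <;> simp_all [sub])
  | bot => exact (Set.finite_singleton []).subset (by intro m hm; cases m <;> simp_all [sub])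
  | var n => exact (Set.finite_singleton []).subset (by intro m hm; cases m <;> simp_all [sub])
  | covar n => exact (Set.finite_singleton []).subset (by intro m hm; cases m <;> simp_all [sub])
  | tens A B ha hb =>
    refine (((ha.image (List.cons false)).union (hb.image (List.cons true))).union
      (Set.finite_singleton [])).subset ?_
    intro m hm
    rcases m with _ | ⟨_ | _, m⟩
    · simp
    · left; left; exact ⟨m, by simpa [sub] using hm, rfl⟩
    · left; right; exact ⟨m, by simpa [sub] using hm, rfl⟩
  | parr A B ha hb =>
    refine (((ha.image (List.cons false)).union (hb.image (List.cons true))).union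
      (Set.finite_singleton [])).subset ?_
    intro m hm
    rcases m with _ | ⟨_ | _, m⟩
    · simp
    · left; left; exact ⟨m, by simpa [sub] using hm, rfl⟩
    · left; right; exact ⟨m, by simpa [sub] using hm, rfl⟩

def sz : Formula → ℕ
  | tens A B => sz A + sz B + 1
  | parr A B => sz A + sz B + 1
  | _ => 0

def polF : Formula → Bool
  | tens _ _ => true
  | one => true
  | var _ => true
  | _ => false

def pol (o : Option Formula) : Bool := (o.map polF).getD false
def osz (o : Option Formula) : ℕ := (o.map sz).getD 0

theorem sz_dual (A : Formula) : sz A.dual = sz A := by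
  induction A <;> simp_all [sz, dual]

theorem osz_dual (o : Option Formula) : osz (o.map dual) = osz o := by
  cases o <;> simp [osz, sz_dual]

theorem pol_dual (o : Option Formula) (h : o ≠ none) : pol (o.map dual) = !pol o := by
  cases o with
  | none => exact absurd rfl h
  | some A => cases A <;> rfl

theorem osz_child (A : Formula) (m : Addr) (j : Bool) (h : 0 < osz (sub A m)) :
    osz (sub A (m ++ [j])) < osz (sub A m) := by
  rw [sub_append]
  cases hs : sub A m with
  | none => simp [hs, osz] at h
  | some B =>
    rw [hs] at h
    cases B <;> cases j <;> simp [osz, sz, sub] at * <;> omega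

theorem osz_parent (A : Formula) (m : Addr) (j : Bool) (h : sub A (m ++ [j]) ≠ none) :
    0 < osz (sub A m) := by
  rw [sub_append] at h
  cases hs : sub A m with
  | none => simp [hs] at h
  | some B =>
    rw [hs] at h
    cases B <;> cases j <;> simp [osz, sz, sub] at *

theorem osz_ne_none {o : Option Formula} (h : 0 < osz o) : o ≠ none := by
  rintro rfl; simp [osz] at h

structure PS (Θ Sp : Type) where
  F : Θ → Formula
  NB : Θ → Bool → Addr → Θ → Bool → Addr → Prop
  Ex : Sp → Θ → Prop
  ExF : Sp → Θ → Prop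
  SS : Sp → Sp → Prop
  SF : Sp → Sp → Prop
  a0 : ∀ {θ s m θ₁ s₁ m₁ θ₂ s₂ m₂}, NB θ s m θ₁ s₁ m₁ → NB θ s m θ₂ s₂ m₂ →
    θ₁ = θ₂ ∧ s₁ = s₂ ∧ m₁ = m₂
  a1 : ∀ {θ s m θ' s' m'}, NB θ s m θ' s' m' → NB θ' s' m' θ s m
  a2 : ∀ {θ s m θ' s' m'}, NB θ s m θ' s' m' →
    sub (F θ') m' = if s = s' then (sub (F θ) m).map dual else sub (F θ) m
  a3 : ∀ {θ s m j θ' s' m'}, NB θ s (m ++ [j]) θ' s' m' →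
    (∃ m0, m' = m0 ++ [j] ∧ NB θ s m θ' s' m0) ∨ (m = [] ∧ m' = [])
  a3' : ∀ {θ s m θ' s' m'} (j), NB θ s m θ' s' m' → NB θ s (m ++ [j]) θ' s' (m' ++ [j])
  a4 : ∀ {θ s s' i j θ' s1 s2}, NB θ s [i] θ' s1 [] → NB θ s' [j] θ' s2 [] → i = j
  a5 : ∀ {σ θ m}, Ex σ θ → ¬ ExF σ θ → 0 < osz (sub (F θ) m) →
    (∀ r θ' s' m', ¬ NB θ (pol (sub (F θ) m)) r θ' s' m') ∧
    ∀ τ, Ex τ θ → ¬ ExF τ θ → τ = σ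
  a7 : ∀ {θ s m s' m'}, ¬ NB θ s m θ s' m'
  ssymm : ∀ {σ τ}, SS σ τ → SS τ σ

namespace PS
variable {Θ Sp : Type} (X : PS Θ Sp)

abbrev VV (Θ Sp : Type) := (Θ × Addr) ⊕ Sp

def z (p : Θ × Addr) : ℕ := osz (sub (X.F p.1) p.2)
def J (p q : Θ × Addr) : Prop := ∃ s s', X.NB p.1 s p.2 q.1 s' q.2
def ch (p : Θ × Addr) (j : Bool) : Θ × Addr := (p.1, p.2 ++ [j])
def AJ (p q : Θ × Addr) : Prop := X.J p q ∨ (∃ j, X.J (ch p j) q) ∨ ∃ j, X.J p (ch q j)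
def live (S : Set (Θ × Addr)) (p : Θ × Addr) : Prop := p ∉ S ∧ (p.2 = [] ∨ (p.1, p.2.dropLast) ∈ S)

def Adj (S : Set (Θ × Addr)) : VV Θ Sp → VV Θ Sp → Prop
  | .inl p, .inl q => live S p ∧ live S q ∧ X.AJ p q
  | .inl p, .inr σ => live S p ∧ X.Ex σ p.1
  | .inr σ, .inl p => live S p ∧ X.Ex σ p.1
  | .inr σ, .inr τ => X.SS σ τ

def fl : VV Θ Sp → VV Θ Sp → Prop
  | .inl p, .inl q => ∃ j s', X.NB p.1 (pol (sub (X.F p.1) p.2)) (p.2 ++ [j]) q.1 s' q.2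
  | .inl _, .inr _ => False
  | .inr σ, .inl p => X.ExF σ p.1
  | .inr σ, .inr τ => X.SF σ τ

variable {X}

theorem J_symm {p q} (h : X.J p q) : X.J q p := by
  obtain ⟨s, s', h⟩ := h; exact ⟨s', s, X.a1 h⟩

theorem AJ_symm {p q} (h : X.AJ p q) : X.AJ q p := by
  rcases h with h | ⟨j, h⟩ | ⟨j, h⟩
  · exact Or.inl (J_symm h)
  · exact Or.inr (Or.inr ⟨j, J_symm h⟩)
  · exact Or.inr (Or.inl ⟨j, J_symm h⟩)

theorem Adj_symm {S} : ∀ u v, X.Adj S u v → X.Adj S v u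
  | .inl _, .inl _, h => ⟨h.2.1, h.1, AJ_symm h.2.2⟩
  | .inl _, .inr _, h => h
  | .inr _, .inl _, h => h
  | .inr _, .inr _, h => X.ssymm h

theorem z_J {p q} (h : X.J p q) : X.z q = X.z p := by
  obtain ⟨s, s', h⟩ := h
  unfold z; rw [X.a2 h]
  split_ifs
  · rw [osz_dual]
  · rfl

theorem z_ch {p} (h : 0 < X.z p) (j : Bool) : X.z (ch p j) < X.z p := osz_child _ _ _ h

theorem J_ch {p q j} (h : X.J (ch p j) q) :
    (∃ q0, q = ch q0 j ∧ X.J p q0) ∨ (p.2 = [] ∧ q.2 = []) := by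
  obtain ⟨s, s', h⟩ := h
  rcases X.a3 h with ⟨m0, h1, h2⟩ | h
  · left; exact ⟨(q.1, m0), Prod.ext rfl h1, s, s', h2⟩
  · right; exact h

theorem ch_inj {p q : Θ × Addr} {i j} (h : ch p i = ch q j) : p = q ∧ i = j := by
  unfold ch at h
  have h1 := congrArg Prod.fst h
  have h2 := congrArg Prod.snd h
  simp at h1 h2
  exact ⟨Prod.ext h1 h2.1, h2.2⟩

theorem live_ch {S} {p : Θ × Addr} {i} (h : live S (ch p i)) : p ∈ S := by
  rcases h.2 with h | h
  · simp [ch] at h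
  · simpa [ch] using h

theorem ch_ne_nil (p : Θ × Addr) (i) : (ch p i).2 ≠ [] := by simp [ch]

theorem J_ch_uniq {p w i j} (h1 : X.J (ch p i) w) (h2 : X.J (ch p j) w) : i = j := by
  rcases J_ch h1 with ⟨q1, e1, _⟩ | ⟨e1, e1'⟩ <;> rcases J_ch h2 with ⟨q2, e2, _⟩ | ⟨e2, e2'⟩
  · exact (ch_inj (e1.symm.trans e2)).2
  · rw [e1] at e2'; exact absurd e2' (ch_ne_nil _ _)
  · rw [e2] at e1'; exact absurd e1' (ch_ne_nil _ _)
  · obtain ⟨s, s', h1⟩ := h1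
    obtain ⟨t, t', h2⟩ := h2
    simp only [ch, e1, e1', List.nil_append] at h1 h2
    exact X.a4 h1 h2

theorem step {S : Set (Θ × Addr)} {κ : Θ × Addr} (hκ : κ ∉ S) (hz : 0 < X.z κ)
    (hinv : ∀ q ∈ S, ∀ p, p ∉ S → X.z p ≤ X.z q)
    (hmax : ∀ p, p ∉ S → X.z p ≤ X.z κ) :
    HasCyc (X.Adj (insert κ S)) X.fl → HasCyc (X.Adj S) X.fl := by
  classical
  have hSz : ∀ q ∈ S, X.z κ ≤ X.z q := fun q hq => hinv q hq κ hκ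
  have hchS : ∀ i, ch κ i ∉ S := fun i h => by
    have := hSz _ h; have := z_ch hz i; omega
  have hchκ : ∀ i, ch κ i ≠ κ := fun i h => by
    have := z_ch hz i; rw [h] at this; omega
  have liveκ : live S κ := by
    refine ⟨hκ, ?_⟩
    by_cases h : κ.2 = []
    · left; exact h
    · right
      by_contra hn
      have e : κ = ch (κ.1, κ.2.dropLast) (κ.2.getLast h) :=
        Prod.ext rfl (by simp [ch, List.dropLast_append_getLast])
      have h1 := hmax _ hn
      have h2 : 0 < X.z (κ.1, κ.2.dropLast) := by
        refine osz_parent _ _ (κ.2.getLast h) ?_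
        have := osz_ne_none hz
        rw [e] at this; exact this
      have h3 := z_ch h2 (κ.2.getLast h)
      rw [← e] at h3; omega
  have live' : ∀ p, live (insert κ S) p → (live S p ∧ p ≠ κ) ∨ ∃ i, p = ch κ i := by
    intro p hp
    have hp1 : p ∉ S ∧ p ≠ κ := ⟨fun h => hp.1 (Or.inr h), fun h => hp.1 (Or.inl h)⟩
    by_cases h : p.2 = []
    · left; exact ⟨⟨hp1.1, Or.inl h⟩, hp1.2⟩
    · rcases hp.2 with h' | h' | h'
      · exact absurd h' h
      · right
        refine ⟨p.2.getLast h, Prod.ext (by rw [← h']; rfl) ?_⟩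
        rw [← h']; simp [ch, List.dropLast_append_getLast]
      · left; exact ⟨⟨hp1.1, Or.inr h'⟩, hp1.2⟩
  -- analysis of the neighbours of a child
  have nbr : ∀ i w, live (insert κ S) w → X.AJ (ch κ i) w →
      live S w ∧ w ≠ κ ∧ (∀ j, w ≠ ch κ j) ∧ (X.J (ch κ i) w ∨ X.J κ w) := by
    intro i w hw h
    have hne : w.1 ≠ κ.1 := by
      intro e
      rcases h with ⟨s, s', h⟩ | ⟨j, s, s', h⟩ | ⟨j, s, s', h⟩
      · rw [e] at h; exact X.a7 h
      · rw [e] at h; exact X.a7 h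
      · simp only [ch] at h; rw [e] at h; exact X.a7 h
    have hwκ : w ≠ κ := fun h => hne (by rw [h])
    have hwc : ∀ j, w ≠ ch κ j := fun j h => hne (by rw [h]; rfl)
    have hl : live S w := by
      rcases live' w hw with h | ⟨j, h⟩
      · exact h.1
      · exact absurd h (hwc j)
    refine ⟨hl, hwκ, hwc, ?_⟩
    rcases h with h | ⟨j, h⟩ | ⟨j, h⟩
    · exact Or.inl h
    · rcases J_ch h with ⟨q0, rfl, h2⟩ | ⟨h2, _⟩
      · have := hSz _ (live_ch hl)
        have h3 := z_J h2
        have := z_ch hz i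
        omega
      · exact absurd h2 (ch_ne_nil _ _)
    · rcases J_ch h with ⟨q0, h1, h2⟩ | ⟨_, h2⟩
      · obtain ⟨rfl, rfl⟩ := ch_inj h1
        exact Or.inr h2
      · exact absurd h2 (ch_ne_nil _ _)
  have nbrF : ∀ i w, live (insert κ S) w → X.AJ (ch κ i) w → X.fl (Sum.inl κ) (Sum.inl w) →
      ∃ s', X.NB κ.1 (pol (sub (X.F κ.1) κ.2)) (κ.2 ++ [i]) w.1 s' w.2 := by
    rintro i w hw h ⟨j, s', hf⟩
    have hJ : X.J (ch κ j) w := ⟨_, _, hf⟩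
    rcases (nbr i w hw h).2.2.2 with h1 | h1
    · have := J_ch_uniq h1 hJ
      subst this; exact ⟨s', hf⟩
    · have e1 := z_J h1
      have e2 := z_J hJ
      have := z_ch hz j
      omega
  have cinl : ∀ (p : Θ × Addr), (∃ i, (Sum.inl p : VV Θ Sp) = Sum.inl (ch κ i)) ↔ ∃ i, p = ch κ i := by
    intro p; simp
  refine split_step (κ := Sum.inl κ) (c := fun i => Sum.inl (ch κ i)) Adj_symm ?_ ?_ ?_ ?_ ?_ ?_ ?_
  · -- hA
    have one : ∀ i w, live (insert κ S) w → X.AJ (ch κ i) w → X.AJ κ w := by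
      intro i w hw h
      rcases (nbr i w hw h).2.2.2 with h | h
      · exact Or.inr (Or.inl ⟨i, h⟩)
      · exact Or.inl h
    have lv : ∀ p, live (insert κ S) p → (¬ ∃ i, p = ch κ i) → live S p := fun p h h' =>
      (live' p h).elim (fun h => h.1) (fun h => absurd h h')
    rintro (p | σ) (q | τ) h
    · obtain ⟨hp, hq, h⟩ := h
      by_cases h1 : ∃ i, p = ch κ i
      · obtain ⟨i, rfl⟩ := h1
        have := nbr i q hq h
        rw [if_pos ⟨i, rfl⟩, if_neg (by rw [cinl]; rintro ⟨j, hj⟩; exact this.2.2.1 j hj)]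
        exact ⟨liveκ, this.1, one i q hq h⟩
      · by_cases h2 : ∃ i, q = ch κ i
        · obtain ⟨i, rfl⟩ := h2
          rw [if_neg (by rwa [cinl]), if_pos ⟨i, rfl⟩]
          exact ⟨lv p hp h1, liveκ, AJ_symm (one i p hp (AJ_symm h))⟩
        · rw [if_neg (by rwa [cinl]), if_neg (by rwa [cinl])]
          exact ⟨lv p hp h1, lv q hq h2, h⟩
    · rw [if_neg (by simp : ¬ ∃ i, (Sum.inr τ : VV Θ Sp) = Sum.inl (ch κ i))]
      by_cases h1 : ∃ i, p = ch κ i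
      · obtain ⟨i, rfl⟩ := h1
        rw [if_pos ⟨i, rfl⟩]; exact ⟨liveκ, h.2⟩
      · rw [if_neg (by rwa [cinl])]; exact ⟨lv p h.1 h1, h.2⟩
    · rw [if_neg (by simp : ¬ ∃ i, (Sum.inr σ : VV Θ Sp) = Sum.inl (ch κ i))]
      by_cases h1 : ∃ i, q = ch κ i
      · obtain ⟨i, rfl⟩ := h1
        rw [if_pos ⟨i, rfl⟩]; exact ⟨liveκ, h.2⟩
      · rw [if_neg (by rwa [cinl])]; exact ⟨lv q h.1 h1, h.2⟩
    · rw [if_neg (by simp : ¬ ∃ i, (Sum.inr σ : VV Θ Sp) = Sum.inl (ch κ i)),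
        if_neg (by simp : ¬ ∃ i, (Sum.inr τ : VV Θ Sp) = Sum.inl (ch κ i))]
      exact h
  · -- hk
    rintro (q | τ) h <;> exact h.1.1 (Or.inl rfl)
  · -- h12
    intro i j h
    exact (nbr i _ h.2.1 h.2.2).2.2.1 j rfl
  · intro u v _ _ _ h; exact h
  · -- hF1
    rintro (p | σ) i h hf
    · exfalso
      obtain ⟨j, s', hf⟩ := hf
      have hJ : X.J (ch p j) κ := ⟨_, _, hf⟩
      have hp := (nbr i p h.1 (AJ_symm h.2.2)).1
      have e := z_J hJ
      have h0 : 0 < X.z p := osz_parent _ _ j (osz_ne_none (o := sub (X.F p.1) (p.2 ++ [j]))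
        (by have : 0 < X.z (ch p j) := e ▸ hz
            exact this))
      have := z_ch h0 j
      have := hmax _ hp.1
      omega
    · exact hf
  · -- h3
    rintro i (a | a) (b | b) ha hb hab ⟨fa, fb⟩
    · obtain ⟨s, h1⟩ := nbrF i a ha.2.1 ha.2.2 fa
      obtain ⟨s', h2⟩ := nbrF i b hb.2.1 hb.2.2 fb
      obtain ⟨e1, _, e2⟩ := X.a0 h1 h2
      exact hab (congrArg _ (Prod.ext e1 e2))
    · exact fb
    · exact fa
    · exact fa
  · -- h4
    set p := pol (sub (X.F κ.1) κ.2) with hp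
    have typeI : ∀ w, live (insert κ S) w → X.AJ (ch κ false) w → X.AJ (ch κ true) w →
        ¬ (X.fl (Sum.inl w) (Sum.inl (ch κ false)) ∧ X.fl (Sum.inl w) (Sum.inl (ch κ true))) →
        live S w ∧ ∃ s', X.NB κ.1 p κ.2 w.1 s' w.2 := by
      intro w hw h0 h1 hnf
      refine ⟨(nbr _ w hw h0).1, ?_⟩
      have hJ : X.J κ w := by
        rcases (nbr _ w hw h0).2.2.2 with a | a
        · rcases (nbr _ w hw h1).2.2.2 with b | b
          · exact absurd (J_ch_uniq a b) (by decide)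
          · exact b
        · exact a
      obtain ⟨s, s', hn⟩ := hJ
      have hs : s' ≠ pol (sub (X.F w.1) w.2) := by
        intro e
        apply hnf
        constructor
        · exact ⟨false, s, e ▸ X.a1 (X.a3' false hn)⟩
        · exact ⟨true, s, e ▸ X.a1 (X.a3' true hn)⟩
      have h2 := X.a2 hn
      have hne : sub (X.F κ.1) κ.2 ≠ none := osz_ne_none hz
      have : s = p := by
        by_cases e : s = s'
        · rw [if_pos e] at h2
          rw [h2, pol_dual _ hne, ← hp] at hs
          subst e
          revert hs; cases s <;> cases p <;> simp
        · rw [if_neg e] at h2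
          rw [h2, ← hp] at hs
          exact bool3 _ _ s' e hs.symm
      subst this
      exact ⟨s', hn⟩
    have typeII : ∀ a b : VV Θ Sp, X.Adj (insert κ S) (Sum.inl (ch κ false)) a →
        X.Adj (insert κ S) (Sum.inl (ch κ true)) b → X.fl (Sum.inl κ) a → X.fl (Sum.inl κ) b →
        ∃ a' b', a = Sum.inl a' ∧ b = Sum.inl b' ∧ live S a' ∧
          (∃ s', X.NB κ.1 p (κ.2 ++ [false]) a'.1 s' a'.2) ∧
          (∃ s', X.NB κ.1 p (κ.2 ++ [true]) b'.1 s' b'.2) := by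
      rintro (a | a) (b | b) ha hb fa fb
      · exact ⟨a, b, rfl, rfl, (nbr _ a ha.2.1 ha.2.2).1, nbrF _ a ha.2.1 ha.2.2 fa,
          nbrF _ b hb.2.1 hb.2.2 fb⟩
      · exact fb.elim
      · exact fa.elim
      · exact fa.elim
    by_cases c1 : ∃ σ, X.Ex σ κ.1 ∧ ¬ X.ExF σ κ.1
    · obtain ⟨σ, hσ, hσ'⟩ := c1
      obtain ⟨k1, k2⟩ := X.a5 hσ hσ' hz
      refine ⟨Sum.inr σ, Sum.inr σ, ?_⟩
      rintro a b ha hb (⟨rfl, hnf⟩ | ⟨fa, fb⟩)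
      · rcases a with w | τ
        · obtain ⟨_, s', h⟩ := typeI w ha.2.1 ha.2.2 hb.2.2 hnf
          exact absurd h (k1 _ _ _ _)
        · have : τ = σ := k2 τ ha.2 (fun h => hnf ⟨h, h⟩)
          rw [this]; exact ⟨rfl, rfl⟩
      · obtain ⟨a', b', _, _, _, ⟨s', h⟩, _⟩ := typeII a b ha hb fa fb
        exact absurd h (k1 _ _ _ _)
    · push Not at c1
      by_cases c2 : ∃ w, live S w ∧ ∃ s', X.NB κ.1 p κ.2 w.1 s' w.2
      · obtain ⟨w, hw, s', hn⟩ := c2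
        refine ⟨Sum.inl w, Sum.inl w, ?_⟩
        rintro a b ha hb (⟨rfl, hnf⟩ | ⟨fa, fb⟩)
        · rcases a with w' | τ
          · obtain ⟨_, s'', h⟩ := typeI w' ha.2.1 ha.2.2 hb.2.2 hnf
            obtain ⟨e1, _, e2⟩ := X.a0 h hn
            have : w' = w := Prod.ext e1 e2
            rw [this]; exact ⟨rfl, rfl⟩
          · exact absurd ⟨c1 τ ha.2, c1 τ ha.2⟩ hnf
        · obtain ⟨a', b', _, _, hl, ⟨s'', h⟩, _⟩ := typeII a b ha hb fa fb
          obtain ⟨e1, _, e2⟩ := X.a0 h (X.a3' false hn)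
          have : a' = ch w false := Prod.ext e1 e2
          rw [this] at hl
          exact absurd (live_ch hl) hw.1
      · by_cases c3 : ∃ a' b' : Θ × Addr, (∃ s', X.NB κ.1 p (κ.2 ++ [false]) a'.1 s' a'.2) ∧
          (∃ s', X.NB κ.1 p (κ.2 ++ [true]) b'.1 s' b'.2)
        · obtain ⟨a0, b0, ⟨s1, h1⟩, s2, h2⟩ := c3
          refine ⟨Sum.inl a0, Sum.inl b0, ?_⟩
          rintro a b ha hb (⟨rfl, hnf⟩ | ⟨fa, fb⟩)
          · rcases a with w' | τ
            · exact absurd ⟨w', typeI w' ha.2.1 ha.2.2 hb.2.2 hnf⟩ c2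
            · exact absurd ⟨c1 τ ha.2, c1 τ ha.2⟩ hnf
          · obtain ⟨a', b', rfl, rfl, hl, ⟨s3, h3⟩, s4, h4⟩ := typeII a b ha hb fa fb
            obtain ⟨e1, _, e2⟩ := X.a0 h3 h1
            obtain ⟨e3, _, e4⟩ := X.a0 h4 h2
            exact ⟨congrArg _ (Prod.ext e1 e2), congrArg _ (Prod.ext e3 e4)⟩
        · refine ⟨Sum.inl κ, Sum.inl κ, ?_⟩
          rintro a b ha hb (⟨rfl, hnf⟩ | ⟨fa, fb⟩)
          · rcases a with w' | τ
            · exact absurd ⟨w', typeI w' ha.2.1 ha.2.2 hb.2.2 hnf⟩ c2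
            · exact absurd ⟨c1 τ ha.2, c1 τ ha.2⟩ hnf
          · obtain ⟨a', b', _, _, _, h3, h4⟩ := typeII a b ha hb fa fb
            exact absurd ⟨a', b', h3, h4⟩ c3

theorem comp_finite [Finite Θ] (X : PS Θ Sp) : {p | 0 < X.z p}.Finite := by
  have : {p : Θ × Addr | 0 < X.z p} ⊆ ⋃ θ : Θ, (fun m => (θ, m)) '' {m | sub (X.F θ) m ≠ none} := by
    intro p hp
    simp only [Set.mem_iUnion]
    exact ⟨p.1, p.2, osz_ne_none hp, rfl⟩
  exact (Set.finite_iUnion fun θ => (sub_finite _).image _).subset this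

theorem all_cyc [Finite Θ] (X : PS Θ Sp) (h : HasCyc (X.Adj {p | 0 < X.z p}) X.fl) :
    HasCyc (X.Adj ∅) X.fl := by
  have hC := comp_finite X
  have main : ∀ n, ∀ S : Set (Θ × Addr), S ⊆ {p | 0 < X.z p} →
      (∀ q ∈ S, ∀ p, p ∉ S → X.z p ≤ X.z q) → ({p | 0 < X.z p} \ S).ncard = n →
      HasCyc (X.Adj {p | 0 < X.z p}) X.fl → HasCyc (X.Adj S) X.fl := by
    intro n
    induction n with
    | zero =>
      intro S hS hinv hn h
      rw [Set.ncard_eq_zero (hC.subset Set.diff_subset), Set.diff_eq_empty] at hn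
      rwa [Set.Subset.antisymm hS hn]
    | succ n ih =>
      intro S hS hinv hn h
      have hfin : ({p | 0 < X.z p} \ S).Finite := hC.subset Set.diff_subset
      have hne : ({p | 0 < X.z p} \ S).Nonempty := by
        rw [← Set.ncard_pos hfin]; omega
      obtain ⟨κ, hκ, hmax⟩ := Set.exists_max_image _ X.z hfin hne
      have hmax' : ∀ p, p ∉ S → X.z p ≤ X.z κ := by
        intro p hp
        by_cases h0 : 0 < X.z p
        · exact hmax p ⟨h0, hp⟩
        · omega
      refine step hκ.2 hκ.1 hinv hmax' (ih (insert κ S) ?_ ?_ ?_ h)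
      · rintro q (rfl | hq)
        · exact hκ.1
        · exact hS hq
      · rintro q (rfl | hq) p hp
        · exact hmax' p fun h => hp (Or.inr h)
        · exact hinv q hq p fun h => hp (Or.inr h)
      · have : {p | 0 < X.z p} \ insert κ S = ({p | 0 < X.z p} \ S) \ {κ} := by
          ext p; simp only [Set.mem_diff, Set.mem_insert_iff, Set.mem_singleton_iff]; tauto
        rw [this, Set.ncard_diff_singleton_of_mem hκ, hn]; rfl
  exact main _ ∅ (Set.empty_subset _) (by simp) rfl h

end PS

end Siam

namespace Siam
open Formula

theorem dual_dual (A : Formula) : A.dual.dual = A := by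
  induction A <;> simp_all [dual]

theorem mem_concls {R : Struct} {n : R.Node} {e : R.Edge} : e ∈ R.concls n ↔ R.src e = n := by
  simp [Struct.concls]

theorem mem_prems {R : Struct} {n : R.Node} {e : R.Edge} : e ∈ R.prems n ↔ R.tgt e = some n := by
  simp [Struct.prems]

/-- boolean index as a number -/
def bn (b : Bool) : ℕ := if b then 1 else 0

theorem bn_inj {a b : Bool} (h : bn a = bn b) : a = b := by
  cases a <;> cases b <;> simp_all [bn]

/-- consequences of well-formedness -/
structure Fx (R : Struct) : Prop where
  ax_dual : ∀ {n e f}, R.sort n = .ax → R.src e = n → R.src f = n → e ≠ f →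
    R.typ f = (R.typ e).dual
  ax_three : ∀ {n e f g}, R.sort n = .ax → R.src e = n → R.src f = n → R.src g = n → e ≠ f →
    g ≠ f → e = g
  ax_other : ∀ {e}, R.sort (R.src e) = .ax → ∃ f, R.src f = R.src e ∧ f ≠ e
  ax_prem : ∀ {n e}, R.sort n = .ax → R.tgt e ≠ some n
  cut_dual : ∀ {n e f}, R.sort n = .cut → R.tgt e = some n → R.tgt f = some n → e ≠ f →
    R.typ f = (R.typ e).dual
  cut_three : ∀ {n e f g}, R.sort n = .cut → R.tgt e = some n → R.tgt f = some n →
    R.tgt g = some n → e ≠ f → g ≠ f → e = g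
  cut_other : ∀ {e n}, R.tgt e = some n → R.sort n = .cut → ∃ f, R.tgt f = some n ∧ f ≠ e
  cut_concl : ∀ {n e}, R.sort n = .cut → R.src e ≠ n
  m_concl : ∀ {n}, R.sort n = .tens ∨ R.sort n = .parr → ∃ g, R.src g = n
  m_uniq : ∀ {n g g'}, R.sort n = .tens ∨ R.sort n = .parr → R.src g = n → R.src g' = n → g = g'
  m_prem : ∀ {n} (b : Bool), R.sort n = .tens ∨ R.sort n = .parr →
    ∃ e, R.tgt e = some n ∧ R.pIdx e = bn b
  m_idx : ∀ {n e}, R.sort n = .tens ∨ R.sort n = .parr → R.tgt e = some n → ∃ b, R.pIdx e = bn b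
  m_inj : ∀ {n e e'}, R.sort n = .tens ∨ R.sort n = .parr → R.tgt e = some n → R.tgt e' = some n →
    R.pIdx e = R.pIdx e' → e = e'
  m_sub : ∀ {n e g b m}, R.sort n = .tens ∨ R.sort n = .parr → R.tgt e = some n → R.src g = n →
    R.pIdx e = bn b → sub (R.typ g) (b :: m) = sub (R.typ e) m
  m_tens : ∀ {g}, R.sort (R.src g) = .tens → ∃ A B, R.typ g = .tens A B
  m_parr : ∀ {g}, R.sort (R.src g) = .parr → ∃ A B, R.typ g = .parr A B
  one_typ : ∀ {e}, R.sort (R.src e) = .one → R.typ e = .one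
  one_prem : ∀ {n e}, R.sort n = .one → R.tgt e ≠ some n
  one_uniq : ∀ {n e f}, R.sort n = .one → R.src e = n → R.src f = n → e = f
  one_concl : ∀ {n}, R.sort n = .one → ∃ e, R.src e = n
  bot_typ : ∀ {e}, R.sort (R.src e) = .bot → R.typ e = .bot
  bot_prem : ∀ {n e}, R.sort n = .bot → R.tgt e ≠ some n
  bot_uniq : ∀ {n e f}, R.sort n = .bot → R.src e = n → R.src f = n → e = f
  bot_concl : ∀ {n}, R.sort n = .bot → ∃ e, R.src e = n
  sy_pol : ∀ {l e}, R.sort l = .sync → R.src e = l ∨ R.tgt e = some l → (R.typ e).Polarized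
  sy_down : ∀ {l e}, R.sort l = .sync → R.tgt e = some l →
    ∃ f, R.src f = l ∧ R.cIdx f = R.pIdx e
  sy_up : ∀ {l f}, R.sort l = .sync → R.src f = l → ∃ e, R.tgt e = some l ∧ R.pIdx e = R.cIdx f
  sy_injd : ∀ {l e f f'}, R.sort l = .sync → R.tgt e = some l → R.src f = l → R.src f' = l →
    R.cIdx f = R.pIdx e → R.cIdx f' = R.pIdx e → f = f'
  sy_inju : ∀ {l e e' f}, R.sort l = .sync → R.tgt e = some l → R.tgt e' = some l → R.src f = l →
    R.cIdx f = R.pIdx e → R.cIdx f = R.pIdx e' → e = e'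
  sy_typ : ∀ {l e f}, R.sort l = .sync → R.tgt e = some l → R.src f = l →
    R.cIdx f = R.pIdx e → R.typ f = R.typ e
  bx_bot : ∀ {n b}, b ∈ R.boxes n → R.sort b = .bot
  bx_none : ∀ {n}, R.box n = none → R.boxes n = ∅
  bx_some : ∀ {n b}, R.box n = some b → b ∉ R.boxes b ∧ R.boxes n = insert b (R.boxes b)
  bx_tgt : ∀ {e n}, R.tgt e = some n → R.boxes n ⊆ R.boxes (R.src e)

theorem fx {R : Struct} (h : R.WF) : Fx R := by
  obtain ⟨hax, hcut, htens, hparr, hone, hbot, hsync, hb1, hb2, hb3, hb4⟩ := h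
  have hm : ∀ n, R.sort n = .tens ∨ R.sort n = .parr → ∃ e f g, e ≠ f ∧
      (∀ x, R.tgt x = some n ↔ x = e ∨ x = f) ∧ R.pIdx e = 0 ∧ R.pIdx f = 1 ∧
      (∀ x, R.src x = n ↔ x = g) ∧ (R.typ g = .tens (R.typ e) (R.typ f) ∨
        R.typ g = .parr (R.typ e) (R.typ f)) := by
    rintro n (h | h)
    · obtain ⟨e, f, g, h1, h2, h3, h4, h5, h6⟩ := htens n h
      refine ⟨e, f, g, h1, fun x => ?_, h3, h4, fun x => ?_, Or.inl h6⟩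
      · rw [← mem_prems, h2]; simp
      · rw [← mem_concls, h5]; simp
    · obtain ⟨e, f, g, h1, h2, h3, h4, h5, h6⟩ := hparr n h
      refine ⟨e, f, g, h1, fun x => ?_, h3, h4, fun x => ?_, Or.inr h6⟩
      · rw [← mem_prems, h2]; simp
      · rw [← mem_concls, h5]; simp
  have hax' : ∀ n, R.sort n = .ax → ∃ e f, e ≠ f ∧ (∀ x, R.src x = n ↔ x = e ∨ x = f) ∧
      R.typ f = (R.typ e).dual ∧ R.typ e = (R.typ f).dual := by
    intro n h
    obtain ⟨_, e, f, h1, h2, h3⟩ := hax n h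
    refine ⟨e, f, h1, fun x => ?_, h3, by rw [h3, dual_dual]⟩
    rw [← mem_concls, h2]; simp
  have hcut' : ∀ n, R.sort n = .cut → ∃ e f, e ≠ f ∧ (∀ x, R.tgt x = some n ↔ x = e ∨ x = f) ∧
      R.typ f = (R.typ e).dual ∧ R.typ e = (R.typ f).dual := by
    intro n h
    obtain ⟨_, e, f, h1, h2, h3⟩ := hcut n h
    refine ⟨e, f, h1, fun x => ?_, h3, by rw [h3, dual_dual]⟩
    rw [← mem_prems, h2]; simp
  constructor
  · intro n e f hn he hf hne
    obtain ⟨x, y, h1, h2, h3, h4⟩ := hax' n hn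
    rw [h2] at he hf
    rcases he with rfl | rfl <;> rcases hf with rfl | rfl
    · exact absurd rfl hne
    · exact h3
    · exact h4
    · exact absurd rfl hne
  · intro n e f g hn he hf hg h1 h2
    obtain ⟨x, y, h0, h2, h3, h4⟩ := hax' n hn
    rw [h2] at he hf hg
    grind
  · intro e hn
    obtain ⟨x, y, h1, h2, h3, h4⟩ := hax' _ hn
    rcases (h2 e).1 rfl with rfl | rfl
    · exact ⟨y, (h2 y).2 (Or.inr rfl), h1.symm⟩
    · exact ⟨x, (h2 x).2 (Or.inl rfl), h1⟩
  · intro n e hn he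
    rw [← mem_prems, (hax n hn).1] at he; simp at he
  · intro n e f hn he hf hne
    obtain ⟨x, y, h1, h2, h3, h4⟩ := hcut' n hn
    rw [h2] at he hf
    rcases he with rfl | rfl <;> rcases hf with rfl | rfl
    · exact absurd rfl hne
    · exact h3
    · exact h4
    · exact absurd rfl hne
  · intro n e f g hn he hf hg h1 h2
    obtain ⟨x, y, h0, h2, h3, h4⟩ := hcut' n hn
    rw [h2] at he hf hg
    grind
  · intro e n he hn
    obtain ⟨x, y, h1, h2, h3, h4⟩ := hcut' _ hn
    rcases (h2 e).1 he with rfl | rfl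
    · exact ⟨y, (h2 y).2 (Or.inr rfl), h1.symm⟩
    · exact ⟨x, (h2 x).2 (Or.inl rfl), h1⟩
  · intro n e hn he
    rw [← mem_concls, (hcut n hn).1] at he; simp at he
  · intro n hn
    obtain ⟨e, f, g, _, _, _, _, h, _⟩ := hm n hn
    exact ⟨g, (h g).2 rfl⟩
  · intro n x y hn hx hy
    obtain ⟨e, f, g, _, _, _, _, h, _⟩ := hm n hn
    rw [h] at hx hy; rw [hx, hy]
  · intro n b hn
    obtain ⟨e, f, g, _, h, h0, h1, _, _⟩ := hm n hn
    cases b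
    · exact ⟨e, (h e).2 (Or.inl rfl), h0⟩
    · exact ⟨f, (h f).2 (Or.inr rfl), h1⟩
  · intro n x hn hx
    obtain ⟨e, f, g, _, h, h0, h1, _, _⟩ := hm n hn
    rcases (h x).1 hx with rfl | rfl
    · exact ⟨false, h0⟩
    · exact ⟨true, h1⟩
  · intro n x y hn hx hy hxy
    obtain ⟨e, f, g, _, h, h0, h1, _, _⟩ := hm n hn
    rcases (h x).1 hx with rfl | rfl <;> rcases (h y).1 hy with rfl | rfl
    · rfl
    · omega
    · omega
    · rfl
  · intro n x y b m hn hx hy hb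
    obtain ⟨e, f, g, _, h, h0, h1, h2, h3⟩ := hm n hn
    rw [h2] at hy; subst hy
    rcases (h x).1 hx with rfl | rfl
    · rw [h0] at hb
      have : b = false := bn_inj (b := false) hb.symm
      subst this
      rcases h3 with h3 | h3 <;> rw [h3] <;> rfl
    · rw [h1] at hb
      have : b = true := bn_inj (b := true) hb.symm
      subst this
      rcases h3 with h3 | h3 <;> rw [h3] <;> rfl
  · intro x hx
    obtain ⟨e, f, g, _, _, _, _, h5, h6⟩ := htens _ hx
    have : x ∈ R.concls (R.src x) := mem_concls.2 rfl
    rw [h5, Finset.mem_singleton] at this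
    exact ⟨_, _, this ▸ h6⟩
  · intro x hx
    obtain ⟨e, f, g, _, _, _, _, h5, h6⟩ := hparr _ hx
    have : x ∈ R.concls (R.src x) := mem_concls.2 rfl
    rw [h5, Finset.mem_singleton] at this
    exact ⟨_, _, this ▸ h6⟩
  · intro x hx
    obtain ⟨_, g, h5, h6⟩ := hone _ hx
    have : x ∈ R.concls (R.src x) := mem_concls.2 rfl
    rw [h5, Finset.mem_singleton] at this
    exact this ▸ h6
  · intro n e hn he
    rw [← mem_prems, (hone n hn).1] at he; simp at he
  · intro n e f hn he hf
    obtain ⟨_, g, h5, h6⟩ := hone _ hn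
    rw [← mem_concls, h5, Finset.mem_singleton] at he hf
    rw [he, hf]
  · intro n hn
    obtain ⟨_, g, h5, h6⟩ := hone _ hn
    exact ⟨g, by rw [← mem_concls, h5, Finset.mem_singleton]⟩
  · intro x hx
    obtain ⟨_, g, h5, h6⟩ := hbot _ hx
    have : x ∈ R.concls (R.src x) := mem_concls.2 rfl
    rw [h5, Finset.mem_singleton] at this
    exact this ▸ h6
  · intro n e hn he
    rw [← mem_prems, (hbot n hn).1] at he; simp at he
  · intro n e f hn he hf
    obtain ⟨_, g, h5, h6⟩ := hbot _ hn
    rw [← mem_concls, h5, Finset.mem_singleton] at he hf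
    rw [he, hf]
  · intro n hn
    obtain ⟨_, g, h5, h6⟩ := hbot _ hn
    exact ⟨g, by rw [← mem_concls, h5, Finset.mem_singleton]⟩
  · intro l e hl he
    obtain ⟨h1, h2, h3, h4⟩ := hsync l hl
    rcases he with he | he
    · obtain ⟨x, ⟨hx1, hx2⟩, _⟩ := h3 e (mem_concls.2 he)
      rw [h4 x hx1 e (mem_concls.2 he) hx2.symm]; exact h1 x hx1
    · exact h1 e (mem_prems.2 he)
  · intro l e hl he
    obtain ⟨h1, h2, h3, h4⟩ := hsync l hl
    obtain ⟨f, hf, _⟩ := h2 e (mem_prems.2 he)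
    exact ⟨f, mem_concls.1 hf.1, hf.2⟩
  · intro l e hl he
    obtain ⟨h1, h2, h3, h4⟩ := hsync l hl
    obtain ⟨f, hf, _⟩ := h3 e (mem_concls.2 he)
    exact ⟨f, mem_prems.1 hf.1, hf.2⟩
  · intro l e f f' hl he hf hf' i1 i2
    obtain ⟨h1, h2, h3, h4⟩ := hsync l hl
    exact (h2 e (mem_prems.2 he)).unique ⟨mem_concls.2 hf, i1⟩ ⟨mem_concls.2 hf', i2⟩
  · intro l e e' f hl he he' hf i1 i2
    obtain ⟨h1, h2, h3, h4⟩ := hsync l hl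
    exact (h3 f (mem_concls.2 hf)).unique ⟨mem_prems.2 he, i1.symm⟩ ⟨mem_prems.2 he', i2.symm⟩
  · intro l e f hl he hf i
    exact (hsync l hl).2.2.2 e (mem_prems.2 he) f (mem_concls.2 hf) i
  · intro n b; exact hb1 n b
  · intro n; exact hb2 n
  · intro n b; exact hb3 n b
  · intro e n; exact hb4 e n

/-! the concrete point system -/

def RepOK (R : Struct) (n : R.Node) (e : R.Edge) : Prop :=
  if R.sort n = .cut then R.tgt e = some n else R.src e = n

open Classical in
noncomputable def rep (R : Struct) (n : R.Node) : Option R.Edge :=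
  if h : ∃ e, RepOK R n e then some h.choose else none

theorem rep_ok {R : Struct} {n : R.Node} {e : R.Edge} (h : rep R n = some e) : RepOK R n e := by
  unfold rep at h
  split_ifs at h with h'
  simp only [Option.some.injEq] at h
  subst h
  exact h'.choose_spec

theorem rep_ex {R : Struct} {n : R.Node} {e : R.Edge} (h : RepOK R n e) : ∃ f, rep R n = some f := by
  unfold rep
  rw [dif_pos ⟨e, h⟩]; exact ⟨_, rfl⟩

noncomputable def FF (R : Struct) : R.Edge ⊕ R.Node → Formula
  | .inl e => R.typ e
  | .inr n => ((rep R n).map R.typ).getD .one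

def Jn (R : Struct) (n : R.Node) (s : Bool) (m : Addr) (e : R.Edge) (s' : Bool) (m' : Addr) : Prop :=
  (R.sort n = .ax ∧ R.src e = n ∧ m = m' ∧ s' = false ∧
    ((rep R n = some e ∧ s = true) ∨ (rep R n ≠ some e ∧ s = false))) ∨
  (R.sort n = .cut ∧ R.tgt e = some n ∧ m = m' ∧ s' = true ∧
    ((rep R n = some e ∧ s = false) ∨ (rep R n ≠ some e ∧ s = true))) ∨
  ((R.sort n = .tens ∨ R.sort n = .parr ∨ R.sort n = .one) ∧ R.src e = n ∧ m = m' ∧ s = true ∧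
    s' = false) ∨
  ((R.sort n = .tens ∨ R.sort n = .parr) ∧ R.tgt e = some n ∧ s = false ∧ s' = true ∧
    ∃ b, R.pIdx e = bn b ∧ m = b :: m')

def NBc (R : Struct) : R.Edge ⊕ R.Node → Bool → Addr → R.Edge ⊕ R.Node → Bool → Addr → Prop
  | .inl e, s, m, .inr n, s', m' => Jn R n s' m' e s m
  | .inr n, s, m, .inl e, s', m' => Jn R n s m e s' m'
  | _, _, _, _, _, _ => False

def Exc (R : Struct) (σ : R.Node) : R.Edge ⊕ R.Node → Prop
  | .inl e => (R.sort σ = .sync ∧ (R.src e = σ ∨ R.tgt e = some σ)) ∨ (R.sort σ = .bot ∧ R.src e = σ)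
  | .inr n => R.box n = some σ ∧ R.sort n ≠ .sync ∧ R.sort n ≠ .bot

def ExFc (R : Struct) (σ : R.Node) : R.Edge ⊕ R.Node → Prop
  | .inl e => R.OutEdgeOf σ e
  | .inr n => R.box n = some σ ∧ R.sort n ≠ .sync ∧ R.sort n ≠ .bot

def SFc (R : Struct) (b n : R.Node) : Prop := R.box n = some b ∧ (R.sort n = .sync ∨ R.sort n = .bot)

def SSc (R : Struct) (b n : R.Node) : Prop := SFc R b n ∨ SFc R n b

theorem jn_sort {R : Struct} {n s m e s' m'} (h : Jn R n s m e s' m') :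
    R.sort n ≠ .sync ∧ R.sort n ≠ .bot := by
  rcases h with ⟨h, _⟩ | ⟨h, _⟩ | ⟨h | h | h, _⟩ | ⟨h | h, _⟩ <;> rw [h] <;> decide

theorem jn_inc {R : Struct} {n s m e s' m'} (h : Jn R n s m e s' m') :
    if s' = true then R.tgt e = some n else R.src e = n := by
  rcases h with ⟨_, h, _, rfl, _⟩ | ⟨_, h, _, rfl, _⟩ | ⟨_, h, _, _, rfl⟩ | ⟨_, h, _, rfl, _⟩ <;>
    simpa using h

theorem jn_f1 {R : Struct} (h : Fx R) {n s m e₁ s₁ m₁ e₂ s₂ m₂} (h1 : Jn R n s m e₁ s₁ m₁)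
    (h2 : Jn R n s m e₂ s₂ m₂) : e₁ = e₂ ∧ s₁ = s₂ ∧ m₁ = m₂ := by
  rcases h1 with ⟨a1, a2, rfl, rfl, a4⟩ | ⟨a1, a2, rfl, rfl, a4⟩ | ⟨a1, a2, rfl, rfl, rfl⟩ |
    ⟨a1, a2, rfl, rfl, b, a4, rfl⟩ <;>
  rcases h2 with ⟨b1, b2, rfl, rfl, b4⟩ | ⟨b1, b2, rfl, rfl, b4⟩ | ⟨b1, b2, rfl, b3, rfl⟩ |
    ⟨b1, b2, b3, rfl, b', b4, b5⟩
  · refine ⟨?_, rfl, rfl⟩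
    rcases a4 with ⟨a4, rfl⟩ | ⟨a4, rfl⟩ <;> rcases b4 with ⟨b4, b5⟩ | ⟨b4, b5⟩
    · rw [a4] at b4; simpa using b4
    · simp at b5
    · simp at b5
    · obtain ⟨r, hr⟩ := rep_ex (R := R) (n := n) (e := e₁) (by simp [RepOK, a1, a2])
      have := rep_ok hr
      simp only [RepOK, a1, reduceCtorEq, if_false] at this
      exact h.ax_three a1 a2 this b2 (by rintro rfl; exact a4 hr) (by rintro rfl; exact b4 hr)
  all_goals try (simp_all; done)
  · refine ⟨?_, rfl, rfl⟩
    rcases a4 with ⟨a4, rfl⟩ | ⟨a4, rfl⟩ <;> rcases b4 with ⟨b4, b5⟩ | ⟨b4, b5⟩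
    · rw [a4] at b4; simpa using b4
    · simp at b5
    · simp at b5
    · obtain ⟨r, hr⟩ := rep_ex (R := R) (n := n) (e := e₁) (by simp [RepOK, a1, a2])
      have := rep_ok hr
      simp only [RepOK, a1, if_true] at this
      exact h.cut_three a1 a2 this b2 (by rintro rfl; exact a4 hr) (by rintro rfl; exact b4 hr)
  · refine ⟨?_, rfl, rfl⟩
    by_cases ho : R.sort n = .one
    · exact h.one_uniq ho a2 b2
    · exact h.m_uniq (by tauto) a2 b2
  · simp only [List.cons.injEq] at b5
    obtain ⟨rfl, rfl⟩ := b5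
    exact ⟨h.m_inj a1 a2 b2 (by rw [a4, b4]), rfl, rfl⟩

theorem jn_f2 {R : Struct} {n₁ s₁ m₁ n₂ s₂ m₂ e s m} (h1 : Jn R n₁ s₁ m₁ e s m)
    (h2 : Jn R n₂ s₂ m₂ e s m) : n₁ = n₂ ∧ s₁ = s₂ ∧ m₁ = m₂ := by
  have i1 := jn_inc h1
  have i2 := jn_inc h2
  have : n₁ = n₂ := by
    split_ifs at i1 i2 with hs
    · rw [i1] at i2; simpa using i2
    · rw [← i1, ← i2]
  subst this
  refine ⟨rfl, ?_⟩
  rcases h1 with ⟨a1, a2, rfl, rfl, a4⟩ | ⟨a1, a2, rfl, rfl, a4⟩ | ⟨a1, a2, rfl, rfl, rfl⟩ |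
    ⟨a1, a2, rfl, rfl, b, a4, rfl⟩ <;>
  rcases h2 with ⟨b1, b2, rfl, b3, b4⟩ | ⟨b1, b2, rfl, b3, b4⟩ | ⟨b1, b2, rfl, rfl, b3⟩ |
    ⟨b1, b2, rfl, b3, b', b4, rfl⟩
  all_goals try (simp_all; done)
  · refine ⟨?_, rfl⟩; rcases a4 with ⟨_, rfl⟩ | ⟨_, rfl⟩ <;> rcases b4 with ⟨_, rfl⟩ | ⟨_, rfl⟩ <;> tauto
  · refine ⟨?_, rfl⟩; rcases a4 with ⟨_, rfl⟩ | ⟨_, rfl⟩ <;> rcases b4 with ⟨_, rfl⟩ | ⟨_, rfl⟩ <;> tauto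
  · refine ⟨rfl, ?_⟩
    rw [bn_inj (a4.symm.trans b4)]

theorem jn_sub {R : Struct} (h : Fx R) {n s m e s' m'} (h1 : Jn R n s m e s' m') :
    sub (FF R (.inr n)) m = if s = s' then (sub (R.typ e) m').map dual else sub (R.typ e) m' := by
  rcases h1 with ⟨a1, a2, rfl, rfl, ⟨a4, rfl⟩ | ⟨a4, rfl⟩⟩ | ⟨a1, a2, rfl, rfl, ⟨a4, rfl⟩ | ⟨a4, rfl⟩⟩ |
    ⟨a1, a2, rfl, rfl, rfl⟩ | ⟨a1, a2, rfl, rfl, b, a4, rfl⟩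
  · simp [FF, a4]
  · obtain ⟨r, hr⟩ := rep_ex (R := R) (n := n) (e := e) (by simp [RepOK, a1, a2])
    have := rep_ok hr
    simp only [RepOK, a1, reduceCtorEq, if_false] at this
    have := h.ax_dual a1 a2 this (by rintro rfl; exact a4 hr)
    simp [FF, hr, this, sub_dual]
  · simp [FF, a4]
  · obtain ⟨r, hr⟩ := rep_ex (R := R) (n := n) (e := e) (by simp [RepOK, a1, a2])
    have := rep_ok hr
    simp only [RepOK, a1, if_true] at this
    have := h.cut_dual a1 a2 this (by rintro rfl; exact a4 hr)
    simp [FF, hr, this, sub_dual]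
  · have hc : R.sort n ≠ .cut := by rcases a1 with a | a | a <;> rw [a] <;> decide
    obtain ⟨r, hr⟩ := rep_ex (R := R) (n := n) (e := e) (by simp [RepOK, hc, a2])
    have := rep_ok hr
    simp only [RepOK, hc, if_false] at this
    have : r = e := by
      by_cases ho : R.sort n = .one
      · exact h.one_uniq ho this a2
      · exact h.m_uniq (by tauto) this a2
    simp [FF, hr, this]
  · have hc : R.sort n ≠ .cut := by rcases a1 with a | a <;> rw [a] <;> decide
    obtain ⟨g, hg⟩ := h.m_concl a1
    obtain ⟨r, hr⟩ := rep_ex (R := R) (n := n) (e := g) (by simp [RepOK, hc, hg])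
    have := rep_ok hr
    simp only [RepOK, hc, if_false] at this
    simp [FF, hr, h.m_sub a1 a2 this a4]

theorem jn_app {R : Struct} {n s m e s' m'} (j : Bool) (h : Jn R n s m e s' m') :
    Jn R n s (m ++ [j]) e s' (m' ++ [j]) := by
  rcases h with ⟨a1, a2, rfl, a3⟩ | ⟨a1, a2, rfl, a3⟩ | ⟨a1, a2, rfl, a3⟩ | ⟨a1, a2, a3, a3', b, a4, rfl⟩
  · exact Or.inl ⟨a1, a2, rfl, a3⟩
  · exact Or.inr (Or.inl ⟨a1, a2, rfl, a3⟩)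
  · exact Or.inr (Or.inr (Or.inl ⟨a1, a2, rfl, a3⟩))
  · exact Or.inr (Or.inr (Or.inr ⟨a1, a2, a3, a3', b, a4, rfl⟩))

theorem jn_r {R : Struct} {n s m e s' m' j} (h : Jn R n s m e s' (m' ++ [j])) :
    ∃ m0, m = m0 ++ [j] ∧ Jn R n s m0 e s' m' := by
  rcases h with ⟨a1, a2, rfl, a3⟩ | ⟨a1, a2, rfl, a3⟩ | ⟨a1, a2, rfl, a3⟩ | ⟨a1, a2, a3, a3', b, a4, rfl⟩
  · exact ⟨_, rfl, Or.inl ⟨a1, a2, rfl, a3⟩⟩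
  · exact ⟨_, rfl, Or.inr (Or.inl ⟨a1, a2, rfl, a3⟩)⟩
  · exact ⟨_, rfl, Or.inr (Or.inr (Or.inl ⟨a1, a2, rfl, a3⟩))⟩
  · exact ⟨b :: m', rfl, Or.inr (Or.inr (Or.inr ⟨a1, a2, a3, a3', b, a4, rfl⟩))⟩

theorem jn_l {R : Struct} {n s m e s' m' j} (h : Jn R n s (m ++ [j]) e s' m') :
    (∃ m0, m' = m0 ++ [j] ∧ Jn R n s m e s' m0) ∨ (m = [] ∧ m' = []) := by
  rcases h with ⟨a1, a2, rfl, a3⟩ | ⟨a1, a2, rfl, a3⟩ | ⟨a1, a2, rfl, a3⟩ | ⟨a1, a2, a3, a3', b, a4, a5⟩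
  · exact Or.inl ⟨_, rfl, Or.inl ⟨a1, a2, rfl, a3⟩⟩
  · exact Or.inl ⟨_, rfl, Or.inr (Or.inl ⟨a1, a2, rfl, a3⟩)⟩
  · exact Or.inl ⟨_, rfl, Or.inr (Or.inr (Or.inl ⟨a1, a2, rfl, a3⟩))⟩
  · rcases m with _ | ⟨c, m⟩
    · simp only [List.nil_append, List.cons.injEq] at a5
      exact Or.inr ⟨rfl, a5.2.symm⟩
    · simp only [List.cons_append, List.cons.injEq] at a5
      obtain ⟨rfl, rfl⟩ := a5
      exact Or.inl ⟨m, rfl, Or.inr (Or.inr (Or.inr ⟨a1, a2, a3, a3', c, a4, rfl⟩))⟩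

theorem pol_pos {A : Formula} (h : A.Positive) : ∀ m B, sub A m = some B → B.Positive := by
  induction h with
  | one => intro m B hB; cases m <;> simp [sub] at hB; subst hB; exact .one
  | tens hA hB iA iB =>
    intro m C hC
    rcases m with _ | ⟨_ | _, m⟩
    · simp [sub] at hC; subst hC; exact .tens hA hB
    · exact iA m C hC
    · exact iB m C hC

theorem pol_neg {A : Formula} (h : A.Negative) : ∀ m B, sub A m = some B → B.Negative := by
  induction h with
  | bot => intro m B hB; cases m <;> simp [sub] at hB; subst hB; exact .bot
  | parr hA hB iA iB =>
    intro m C hC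
    rcases m with _ | ⟨_ | _, m⟩
    · simp [sub] at hC; subst hC; exact .parr hA hB
    · exact iA m C hC
    · exact iB m C hC

theorem pol_pos' {A : Formula} (h : A.Positive) {m} (h' : sub A m ≠ none) : pol (sub A m) = true := by
  cases hs : sub A m with
  | none => exact absurd hs h'
  | some B => cases pol_pos h m B hs <;> rfl

theorem pol_neg' {A : Formula} (h : A.Negative) {m} (h' : sub A m ≠ none) : pol (sub A m) = false := by
  cases hs : sub A m with
  | none => exact absurd hs h'
  | some B => cases pol_neg h m B hs <;> rfl

noncomputable def psOf {R : Struct} (h : Fx R) : PS (R.Edge ⊕ R.Node) R.Node where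
  F := FF R
  NB := NBc R
  Ex := Exc R
  ExF := ExFc R
  SS := SSc R
  SF := SFc R
  a0 := by
    rintro (e | n) s m (e₁ | n₁) s₁ m₁ (e₂ | n₂) s₂ m₂ h1 h2
    all_goals first | exact h1.elim | exact h2.elim | skip
    · obtain ⟨rfl, rfl, rfl⟩ := jn_f2 h1 h2; exact ⟨rfl, rfl, rfl⟩
    · obtain ⟨rfl, rfl, rfl⟩ := jn_f1 h h1 h2; exact ⟨rfl, rfl, rfl⟩
  a1 := by
    rintro (e | n) s m (e₁ | n₁) s₁ m₁ h1
    all_goals first | exact h1.elim | exact h1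
  a2 := by
    rintro (e | n) s m (e₁ | n₁) s₁ m₁ h1
    all_goals first | exact h1.elim | skip
    · rw [jn_sub h h1]; simp only [FF, eq_comm]
    · rw [jn_sub h h1]
      simp only [FF]
      by_cases e : s = s₁
      · simp only [if_pos e]
        cases sub (R.typ e₁) m₁ <;> simp [dual_dual]
      · simp only [if_neg e]
  a3 := by
    rintro (e | n) s m j (e₁ | n₁) s₁ m₁ h1
    all_goals first | exact h1.elim | skip
    · exact Or.inl (jn_r h1)
    · exact jn_l h1
  a3' := by
    rintro (e | n) s m (e₁ | n₁) s₁ m₁ j h1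
    all_goals first | exact h1.elim | exact jn_app j h1
  a4 := by
    rintro (e | n) s s' i j (e₁ | n₁) s₁ s₂ h1 h2
    all_goals first | exact h1.elim | skip
    · obtain ⟨_, h, _⟩ := jn_r (m' := []) h1
      simp at h
    · rcases h1 with ⟨_, _, h, _⟩ | ⟨_, _, h, _⟩ | ⟨_, _, h, _⟩ | ⟨a1, a2, a3, a3', b, a4, a5⟩
      · simp at h
      · simp at h
      · simp at h
      · rcases h2 with ⟨_, _, h, _⟩ | ⟨_, _, h, _⟩ | ⟨_, _, h, _⟩ | ⟨_, _, _, _, b', b4, b5⟩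
        · simp at h
        · simp at h
        · simp at h
        · simp at a5 b5
          rw [a5, b5]; exact bn_inj (a4.symm.trans b4)
  a5 := by
    rintro σ (e | n) m h1 h2 h3
    · have hne := osz_ne_none h3
      simp only [FF] at h3 hne ⊢
      rcases h1 with ⟨hs, h1⟩ | ⟨hs, h1⟩
      · have hp := h.sy_pol hs h1
        rcases hp with hp | hp
        · rw [pol_pos' hp hne]
          have ht : R.tgt e = some σ := h1.resolve_left fun h => h2 ⟨hs, Or.inl ⟨h, hp⟩⟩
          refine ⟨?_, ?_⟩
          · rintro r (e' | n) s' m' hn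
            · exact hn
            · have i1 := jn_inc hn
              simp only [if_true, ht, Option.some.injEq] at i1
              subst i1
              exact (jn_sort hn).1 hs
          · rintro τ (⟨ht1, ht2 | ht2⟩ | ⟨ht1, ht2⟩) hτ
            · exact absurd ⟨ht1, Or.inl ⟨ht2, hp⟩⟩ hτ
            · rw [ht] at ht2; simpa using ht2.symm
            · rw [← ht2] at ht1; rw [h.bot_typ ht1] at hp; cases hp
        · rw [pol_neg' hp hne]
          have ht : R.src e = σ := h1.resolve_right fun h => h2 ⟨hs, Or.inr ⟨h, hp⟩⟩
          refine ⟨?_, ?_⟩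
          · rintro r (e' | n) s' m' hn
            · exact hn
            · have i1 := jn_inc hn
              simp only [Bool.false_eq_true, if_false, ht] at i1
              subst i1
              exact (jn_sort hn).1 hs
          · rintro τ (⟨ht1, ht2 | ht2⟩ | ⟨ht1, ht2⟩) hτ
            · rw [← ht2, ← ht]
            · exact absurd ⟨ht1, Or.inr ⟨ht2, hp⟩⟩ hτ
            · rw [← ht2, ← ht]
      · subst h1
        rw [h.bot_typ hs] at h3
        cases m <;> simp [sub, osz, sz] at h3
    · exact absurd h1 h2
  a7 := by
    rintro (e | n) s m s' m' h <;> exact h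
  ssymm := fun h => h.symm

end Siam

namespace Siam
open Formula

def BAdj (R : Struct) : R.Edge ⊕ R.Node → R.Edge ⊕ R.Node → Prop
  | .inl e, .inr n => R.src e = n ∨ R.tgt e = some n
  | .inr n, .inl e => R.src e = n ∨ R.tgt e = some n
  | .inr b, .inr n => R.box n = some b ∨ R.box b = some n
  | .inl _, .inl _ => False

def BF (R : Struct) : R.Edge ⊕ R.Node → R.Edge ⊕ R.Node → Prop
  | .inr n, .inl e => (R.sort n = .parr ∧ R.tgt e = some n) ∨ R.OutEdgeOf n e
  | .inr b, .inr n => R.box n = some b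
  | .inl _, _ => False

theorem hasCyc_map {V V' : Type} {adj fl : V → V → Prop} {adj' fl' : V' → V' → Prop} (φ : V → V')
    (hs : ∀ u v, adj u v → adj v u)
    (hi : ∀ u v u' v', adj u v → adj u' v' → φ u = φ u' → u = u')
    (ha : ∀ u v, adj u v → adj' (φ u) (φ v))
    (hf : ∀ u v, adj u v → fl' (φ u) (φ v) → fl u v) :
    HasCyc adj fl → HasCyc adj' fl' := by
  rintro ⟨k, f, h1, h2, h3, h4, h5⟩
  refine ⟨k, fun i => φ (f i), h1, fun i => by simp only [h2], ?_, fun i => ha _ _ (h4 i), ?_⟩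
  · intro i j hi' hj h
    exact h3 i j hi' hj (hi _ _ _ _ (h4 i) (h4 j) h)
  · intro i
    refine ⟨fun h => (h5 i).1 (hi _ _ _ _ (h4 i) (h4 (i + 2)) h), ?_⟩
    rintro ⟨h, h'⟩
    exact (h5 i).2 ⟨hf _ _ (hs _ _ (h4 i)) h, hf _ _ (h4 (i + 1)) h'⟩

def phi {R : Struct} : PS.VV (R.Edge ⊕ R.Node) R.Node → R.Edge ⊕ R.Node
  | .inl (.inl e, _) => .inl e
  | .inl (.inr n, _) => .inr n
  | .inr σ => .inr σ

theorem live_empty {Θ : Type} {p : Θ × Addr} (h : PS.live ∅ p) : p.2 = [] := by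
  rcases h.2 with h | h
  · exact h
  · exact h.elim

theorem AJ_inc {R : Struct} (h : Fx R) {e : R.Edge} {n : R.Node} {m m'}
    (hj : (psOf h).AJ (.inr n, m) (.inl e, m')) : (R.src e = n ∨ R.tgt e = some n) ∧
      R.sort n ≠ .sync ∧ R.sort n ≠ .bot := by
  have : ∃ s a s' b, Jn R n s a e s' b := by
    rcases hj with ⟨s, s', hj⟩ | ⟨j, s, s', hj⟩ | ⟨j, s, s', hj⟩
    · exact ⟨_, _, _, _, hj⟩
    · exact ⟨_, _, _, _, hj⟩
    · exact ⟨_, _, _, _, hj⟩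
  obtain ⟨s, a, s', b, hj⟩ := this
  refine ⟨?_, jn_sort hj⟩
  have := jn_inc hj
  split_ifs at this
  · exact Or.inr this
  · exact Or.inl this

theorem AJ_ee {R : Struct} (h : Fx R) {e e' : R.Edge} {m m'}
    (hj : (psOf h).AJ (.inl e, m) (.inl e', m')) : False := by
  rcases hj with ⟨s, s', hj⟩ | ⟨j, s, s', hj⟩ | ⟨j, s, s', hj⟩ <;> exact hj

theorem AJ_nn {R : Struct} (h : Fx R) {e e' : R.Node} {m m'}
    (hj : (psOf h).AJ (.inr e, m) (.inr e', m')) : False := by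
  rcases hj with ⟨s, s', hj⟩ | ⟨j, s, s', hj⟩ | ⟨j, s, s', hj⟩ <;> exact hj

theorem base_cyc {R : Struct} (h : Fx R) (hc : HasCyc ((psOf h).Adj ∅) (psOf h).fl) :
    HasCyc (BAdj R) (BF R) := by
  have bb : ∀ {b n}, R.box n = some b → R.sort b = .bot := fun {b n} hb =>
    h.bx_bot (n := n) (by rw [(h.bx_some hb).2]; simp)
  have ptS : ∀ n m v, (psOf h).Adj ∅ (.inl (.inr n, m)) v →
      m = [] ∧ R.sort n ≠ .sync ∧ R.sort n ≠ .bot := by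
    rintro n m (⟨e | n', m'⟩ | σ) ha
    · exact ⟨live_empty ha.1, (AJ_inc h ha.2.2).2⟩
    · exact (AJ_nn h ha.2.2).elim
    · exact ⟨live_empty ha.1, ha.2.2⟩
  have spS : ∀ σ v, (psOf h).Adj ∅ (.inr σ) v → R.sort σ = .sync ∨ R.sort σ = .bot := by
    rintro σ (⟨e | n', m'⟩ | τ) ha
    · rcases ha.2 with h | h
      · exact Or.inl h.1
      · exact Or.inr h.1
    · exact Or.inr (bb ha.2.1)
    · rcases ha with h | h
      · exact Or.inr (bb h.1)
      · exact h.2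
  refine hasCyc_map phi PS.Adj_symm ?_ ?_ ?_ hc
  · rintro (⟨e | n, m⟩ | σ) v (⟨e' | n', m'⟩ | τ) v' h1 h2 heq
    · simp only [phi, Sum.inl.injEq] at heq
      have e1 : m = [] := by rcases v with v | v <;> exact live_empty h1.1
      have e2 : m' = [] := by rcases v' with v' | v' <;> exact live_empty h2.1
      rw [heq, e1, e2]
    · simp [phi] at heq
    · simp [phi] at heq
    · simp [phi] at heq
    · simp only [phi, Sum.inr.injEq] at heq
      rw [heq, (ptS _ _ _ h1).1, (ptS _ _ _ h2).1]
    · simp only [phi, Sum.inr.injEq] at heq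
      subst heq
      have := spS _ _ h2; have := ptS _ _ _ h1; tauto
    · simp [phi] at heq
    · simp only [phi, Sum.inr.injEq] at heq
      subst heq
      have := spS _ _ h1; have := ptS _ _ _ h2; tauto
    · simp only [phi, Sum.inr.injEq] at heq
      rw [heq]
  · rintro (⟨e | n, m⟩ | σ) (⟨e' | n', m'⟩ | τ) ha
    · exact (AJ_ee h ha.2.2).elim
    · exact (AJ_inc h (PS.AJ_symm ha.2.2)).1
    · rcases ha.2 with h | h
      · exact h.2
      · exact Or.inl h.2
    · exact (AJ_inc h ha.2.2).1
    · exact (AJ_nn h ha.2.2).elim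
    · exact Or.inr ha.2.1
    · rcases ha.2 with h | h
      · exact h.2
      · exact Or.inl h.2
    · exact Or.inl ha.2.1
    · rcases ha with h | h
      · exact Or.inl h.1
      · exact Or.inr h.1
  · rintro (⟨e | n, m⟩ | σ) (⟨e' | n', m'⟩ | τ) ha hf
    · exact hf.elim
    · exact hf.elim
    · exact hf.elim
    · have hs := ptS _ _ _ ha
      have e1 : m = [] := live_empty ha.1
      have e2 : m' = [] := live_empty ha.2.1
      subst e1 e2
      rcases hf with ⟨hp, ht⟩ | hf
      · obtain ⟨j, hj⟩ := h.m_idx (Or.inr hp) ht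
        obtain ⟨g, hg⟩ := h.m_concl (Or.inr hp)
        obtain ⟨A, B, hAB⟩ := h.m_parr (g := g) (hg ▸ hp)
        have h1 : Jn R n true [] g false [] :=
          Or.inr (Or.inr (Or.inl ⟨Or.inr (Or.inl hp), hg, rfl, rfl, rfl⟩))
        have h2 := jn_sub h h1
        simp only [Bool.true_eq_false, if_false, hAB] at h2
        refine ⟨j, true, ?_⟩
        show Jn R n (pol (sub (FF R (.inr n)) [])) [j] e' true []
        rw [h2]
        exact Or.inr (Or.inr (Or.inr ⟨Or.inr hp, ht, rfl, rfl, j, hj, rfl⟩))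
      · exact absurd hf.1 hs.2.1
    · exact (AJ_nn h ha.2.2).elim
    · exact absurd (bb hf) (ptS _ _ _ ha).2.2
    · rcases hf with ⟨hp, ht⟩ | hf
      · rcases spS _ _ ha with h | h <;> rw [hp] at h <;> simp at h
      · exact hf
    · exact ha.2
    · rcases ha with ha | ha
      · exact ha
      · exfalso
        have h1 := h.bx_some hf
        have h2 := h.bx_some ha.1
        apply h1.1; rw [h2.2, h1.2]; simp

/-! box combinatorics -/

theorem anc {R : Struct} (h : Fx R) : ∀ {n b}, b ∈ R.boxes n →
    b ∉ R.boxes b ∧ insert b (R.boxes b) ⊆ R.boxes n := by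
  have : ∀ k n, (R.boxes n).card = k → ∀ b, b ∈ R.boxes n →
      b ∉ R.boxes b ∧ insert b (R.boxes b) ⊆ R.boxes n := by
    intro k
    induction k using Nat.strong_induction_on with
    | _ k ih =>
      intro n hk b hb
      cases hbox : R.box n with
      | none => rw [h.bx_none hbox] at hb; simp at hb
      | some c =>
        obtain ⟨h1, h2⟩ := h.bx_some hbox
        by_cases e : b = c
        · subst e; exact ⟨h1, h2 ▸ Finset.Subset.refl _⟩
        · have hbc : b ∈ R.boxes c := by rw [h2] at hb; simpa [e] using hb
          have hlt : (R.boxes c).card < k := by rw [← hk, h2, Finset.card_insert_of_notMem h1]; omega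
          obtain ⟨i1, i2⟩ := ih _ hlt c rfl b hbc
          exact ⟨i1, i2.trans (by rw [h2]; exact Finset.subset_insert _ _)⟩
  intro n b hb
  exact this _ n rfl b hb

theorem not_self {R : Struct} (h : Fx R) {n} : n ∉ R.boxes n := fun hn => (anc h hn).1 hn

theorem chain {R : Struct} (h : Fx R) {n a b} (ha : R.boxes a ⊆ R.boxes n)
    (hb : R.boxes b ⊆ R.boxes n) : R.boxes a ⊆ R.boxes b ∨ R.boxes b ⊆ R.boxes a := by
  have : ∀ k n, (R.boxes n).card = k → R.boxes a ⊆ R.boxes n → R.boxes b ⊆ R.boxes n →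
      R.boxes a ⊆ R.boxes b ∨ R.boxes b ⊆ R.boxes a := by
    intro k
    induction k using Nat.strong_induction_on with
    | _ k ih =>
      intro n hk ha hb
      cases hbox : R.box n with
      | none => rw [h.bx_none hbox, Finset.subset_empty] at ha; rw [ha]; simp
      | some c =>
        obtain ⟨h1, h2⟩ := h.bx_some hbox
        by_cases ca : c ∈ R.boxes a
        · right; exact hb.trans (h2 ▸ (anc h ca).2)
        by_cases cb : c ∈ R.boxes b
        · left; exact ha.trans (h2 ▸ (anc h cb).2)
        have hlt : (R.boxes c).card < k := by rw [← hk, h2, Finset.card_insert_of_notMem h1]; omega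
        rw [h2] at ha hb
        exact ih _ hlt c rfl ((Finset.subset_insert_iff_of_notMem ca).1 ha)
          ((Finset.subset_insert_iff_of_notMem cb).1 hb)
  exact this _ n rfl ha hb

theorem box_mem {R : Struct} (h : Fx R) {n b} (hb : R.box n = some b) : b ∈ R.boxes n := by
  rw [(h.bx_some hb).2]; simp

theorem box_eq {R : Struct} (h : Fx R) {a b} (hab : R.boxes a = R.boxes b) : R.box a = R.box b := by
  cases ha : R.box a with
  | none =>
    cases hb : R.box b with
    | none => rfl
    | some c => have := box_mem h hb; rw [← hab, h.bx_none ha] at this; simp at this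
  | some c =>
    cases hb : R.box b with
    | none => have := box_mem h ha; rw [hab, h.bx_none hb] at this; simp at this
    | some d =>
      by_cases e : c = d
      · rw [e]
      · exfalso
        have h1 := (h.bx_some ha).2
        have h2 := (h.bx_some hb).2
        have hc : c ∈ R.boxes d := by
          have := box_mem h ha; rw [hab, h2] at this; simpa [e] using this
        have hd : d ∈ R.boxes c := by
          have := box_mem h hb; rw [← hab, h1] at this; simpa [Ne.symm e] using this
        exact not_self h ((anc h hd).2 (Finset.mem_insert_of_mem hc))

theorem boxes_eq {R : Struct} (h : Fx R) {a b} (hab : R.box a = R.box b) : R.boxes a = R.boxes b := by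
  cases ha : R.box a with
  | none => rw [h.bx_none ha, h.bx_none (hab ▸ ha)]
  | some c =>
    have hb : R.box b = some c := hab ▸ ha
    exact (h.bx_some ha).2.trans (h.bx_some hb).2.symm

theorem tri {R : Struct} (h : Fx R) {n r s} (hr : r ∈ R.boxes n) (hs : s ∈ R.boxes n) :
    r = s ∨ r ∈ R.boxes s ∨ s ∈ R.boxes r := by
  by_contra hn
  push Not at hn
  have : ∀ k n, (R.boxes n).card = k → r ∈ R.boxes n → s ∈ R.boxes n → False := by
    intro k
    induction k using Nat.strong_induction_on with
    | _ k ih =>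
      intro n hk hr hs
      cases hbox : R.box n with
      | none => rw [h.bx_none hbox] at hr; simp at hr
      | some c =>
        obtain ⟨h1, h2⟩ := h.bx_some hbox
        have hlt : (R.boxes c).card < k := by rw [← hk, h2, Finset.card_insert_of_notMem h1]; omega
        rw [h2, Finset.mem_insert] at hr hs
        rcases hr with rfl | hr <;> rcases hs with rfl | hs
        · exact hn.1 rfl
        · exact hn.2.2 hs
        · exact hn.2.1 hr
        · exact ih _ hlt c rfl hr hs
  exact this _ n rfl hr hs

theorem rep_uniq {R : Struct} (h : Fx R) {ℓ m r r'} (h1 : R.RepAt ℓ m r) (h2 : R.RepAt ℓ m r') :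
    r = r' := by
  rcases h1 with ⟨a, rfl⟩ | ⟨a, b⟩ <;> rcases h2 with ⟨a', rfl⟩ | ⟨a', b'⟩
  · rfl
  · exfalso
    have := boxes_eq h (a.trans b'.symm)
    rw [this] at a'; exact not_self h a'
  · exfalso
    have := boxes_eq h (a'.trans b.symm)
    rw [this] at a; exact not_self h a
  · have e := boxes_eq h (b.trans b'.symm)
    rcases tri h a a' with h' | h' | h'
    · exact h'
    · rw [← e] at h'; exact absurd h' (not_self h)
    · rw [e] at h'; exact absurd h' (not_self h)

theorem rep_exists {R : Struct} (h : Fx R) {n0 : R.Node} : ∀ {m}, R.boxes n0 ⊆ R.boxes m →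
    ∃ r, R.RepAt (R.box n0) m r := by
  have : ∀ k m, (R.boxes m).card = k → R.boxes n0 ⊆ R.boxes m → ∃ r, R.RepAt (R.box n0) m r := by
    intro k
    induction k using Nat.strong_induction_on with
    | _ k ih =>
      intro m hk hm
      by_cases e : R.boxes n0 = R.boxes m
      · exact ⟨m, Or.inl ⟨(box_eq h e).symm, rfl⟩⟩
      · cases hbox : R.box m with
        | none => exfalso; apply e; rw [h.bx_none hbox, Finset.subset_empty] at hm; rw [hm, h.bx_none hbox]
        | some c =>
          obtain ⟨h1, h2⟩ := h.bx_some hbox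
          have hlt : (R.boxes c).card < k := by
            rw [← hk, h2, Finset.card_insert_of_notMem h1]; omega
          have hc : c ∉ R.boxes n0 := fun hc => e (Finset.Subset.antisymm hm (h2 ▸ (anc h hc).2))
          have hm' : R.boxes n0 ⊆ R.boxes c := by
            rw [h2] at hm; exact (Finset.subset_insert_iff_of_notMem hc).1 hm
          obtain ⟨r, hr⟩ := ih _ hlt c rfl hm'
          rcases hr with ⟨a, rfl⟩ | ⟨a, b⟩
          · exact ⟨r, Or.inr ⟨box_mem h hbox, a⟩⟩
          · exact ⟨r, Or.inr ⟨h2 ▸ Finset.mem_insert_of_mem a, b⟩⟩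
  intro m hm
  exact this _ m rfl hm

end Siam

namespace Siam
open Formula

theorem compress {V : Type} (u : ℕ → V) : ∀ n, ∃ (k : ℕ) (idx : ℕ → ℕ),
    (∀ j, j < k → idx j < n ∧ u (idx j) ≠ u (idx j + 1)) ∧
    (∀ i j, i < j → j < k → idx i < idx j) ∧
    (k = 0 → ∀ i, i ≤ n → u i = u 0) ∧
    (0 < k → u 0 = u (idx 0) ∧ u (idx (k - 1) + 1) = u n) ∧
    ∀ j, j + 1 < k → u (idx j + 1) = u (idx (j + 1)) := by
  intro n
  induction n with
  | zero => exact ⟨0, id, by simp, by simp, by simp, by simp, by simp⟩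
  | succ n ih =>
    obtain ⟨k, idx, h1, h2, h3, h4, h5⟩ := ih
    by_cases e : u n = u (n + 1)
    · refine ⟨k, idx, fun j hj => ⟨by have := (h1 j hj).1; omega, (h1 j hj).2⟩, h2, ?_, ?_, h5⟩
      · intro hk i hi
        rcases Nat.lt_or_ge n i with h | h
        · have : i = n + 1 := by omega
          rw [this, ← e]; exact h3 hk n le_rfl
        · exact h3 hk i h
      · intro hk; rw [← e]; exact h4 hk
    · refine ⟨k + 1, Function.update idx k n, ?_, ?_, by omega, ?_, ?_⟩
      · intro j hj
        by_cases hjk : j = k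
        · subst hjk; rw [Function.update_self]; exact ⟨by omega, e⟩
        · rw [Function.update_of_ne hjk]
          have := h1 j (by omega)
          exact ⟨by omega, this.2⟩
      · intro i j hij hj
        rw [Function.update_of_ne (show i ≠ k by omega)]
        by_cases hjk : j = k
        · subst hjk; rw [Function.update_self]; exact (h1 i hij).1
        · rw [Function.update_of_ne hjk]; exact h2 i j hij (by omega)
      · intro _
        rw [Nat.add_sub_cancel, Function.update_self]
        refine ⟨?_, rfl⟩
        by_cases hk : k = 0
        · subst hk; rw [Function.update_self]; exact (h3 rfl n le_rfl).symm
        · rw [Function.update_of_ne (Ne.symm hk)]; exact (h4 (by omega)).1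
      · intro j hj
        rw [Function.update_of_ne (show j ≠ k by omega)]
        by_cases hjk : j + 1 = k
        · rw [hjk, Function.update_self]
          have := (h4 (by omega)).2
          rw [show k - 1 = j by omega] at this; exact this
        · rw [Function.update_of_ne hjk]; exact h5 j (by omega)

section loc
variable {V : Type} {adj fl : V → V → Prop} {k : ℕ} {f : ℕ → V}

theorem cyc_mod (hk : 0 < k) (hp : ∀ i, f (i + k) = f i)
    (hinj : ∀ i j, i < k → j < k → f i = f j → i = j) {i j : ℕ} (h : f i = f j) :
    i % k = j % k := by
  have hm : ∀ i, f (i % k) = f i := fun i => Function.Periodic.map_mod_nat hp i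
  exact hinj _ _ (Nat.mod_lt _ hk) (Nat.mod_lt _ hk) (by rw [hm, hm, h])

theorem cyc_succ (hk : 0 < k) (hp : ∀ i, f (i + k) = f i)
    (hinj : ∀ i j, i < k → j < k → f i = f j → i = j) {i j : ℕ} (h : f i = f j) :
    f (i + 1) = f (j + 1) := by
  have hm : ∀ i, f (i % k) = f i := fun i => Function.Periodic.map_mod_nat hp i
  rw [← hm (i + 1), ← hm (j + 1), Nat.add_mod, cyc_mod hk hp hinj h, ← Nat.add_mod]

theorem cyc_pred (hk : 0 < k) (hp : ∀ i, f (i + k) = f i)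
    (hinj : ∀ i j, i < k → j < k → f i = f j → i = j) {i j : ℕ} (h : f (i + 1) = f (j + 1)) :
    f i = f j := by
  have hm : ∀ i, f (i % k) = f i := fun i => Function.Periodic.map_mod_nat hp i
  have : i % k = j % k := Nat.ModEq.add_right_cancel' 1 (cyc_mod hk hp hinj h)
  rw [← hm i, ← hm j, this]

def Cn (f : ℕ → V) (w a : V) : Prop :=
  ∃ i, (f i = w ∧ f (i + 1) = a) ∨ (f i = a ∧ f (i + 1) = w)

theorem Cn.symm {w a : V} (h : Cn f w a) : Cn f a w := by
  obtain ⟨i, h | h⟩ := h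
  · exact ⟨i, Or.inr h⟩
  · exact ⟨i, Or.inl h⟩

theorem nbr2 (hk : 0 < k) (hp : ∀ i, f (i + k) = f i)
    (hinj : ∀ i j, i < k → j < k → f i = f j → i = j) {w a : V} {i : ℕ} (hi : f (i + 1) = w)
    (h : Cn f w a) : a = f i ∨ a = f (i + 2) := by
  obtain ⟨j, ⟨h1, h2⟩ | ⟨h1, h2⟩⟩ := h
  · right; rw [← h2]; exact cyc_succ hk hp hinj (h1.trans hi.symm)
  · left; rw [← h1]; exact cyc_pred hk hp hinj (h2.trans hi.symm)

theorem Cn.at {hk : 0 < k} {hp : ∀ i, f (i + k) = f i} {w a : V} (h : Cn f w a) :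
    ∃ i, f (i + 1) = w := by
  obtain ⟨j, ⟨h1, h2⟩ | ⟨h1, h2⟩⟩ := h
  · exact ⟨j + k - 1, by rw [show j + k - 1 + 1 = j + k by omega, hp, h1]⟩
  · exact ⟨j, h2⟩

theorem nbr (hk : 0 < k) (hp : ∀ i, f (i + k) = f i)
    (hinj : ∀ i j, i < k → j < k → f i = f j → i = j)
    (ht : ∀ i, Turn fl (f i) (f (i + 1)) (f (i + 2))) {w a b : V} (ha : Cn f w a) (hb : Cn f w b)
    (hab : a ≠ b) : ¬ (fl w a ∧ fl w b) := by
  obtain ⟨i, hi⟩ := Cn.at (hk := hk) (hp := hp) ha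
  rintro ⟨h1, h2⟩
  have := (ht i).2
  rw [hi] at this
  rcases nbr2 hk hp hinj hi ha with rfl | rfl <;> rcases nbr2 hk hp hinj hi hb with rfl | rfl
  · exact hab rfl
  · exact this ⟨h1, h2⟩
  · exact this ⟨h2, h1⟩
  · exact hab rfl

end loc

theorem edgeV {R : Struct} {f : ℕ → R.Edge ⊕ R.Node} (ha : ∀ i, BAdj R (f i) (f (i + 1)))
    (ht : ∀ i, Turn (BF R) (f i) (f (i + 1)) (f (i + 2))) {i e} (hi : f (i + 1) = .inl e) :
    ∃ t, R.tgt e = some t ∧ t ≠ R.src e ∧ Cn f (.inl e) (.inr t) ∧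
      Cn f (.inl e) (.inr (R.src e)) := by
  have h1 := ha i
  have h2 := ha (i + 1)
  have h3 := (ht i).1
  have c1 : Cn f (.inl e) (f i) := ⟨i, Or.inr ⟨rfl, hi⟩⟩
  have c2 : Cn f (.inl e) (f (i + 2)) := ⟨i + 1, Or.inl ⟨hi, rfl⟩⟩
  rw [hi] at h1 h2
  rw [show i + 1 + 1 = i + 2 by omega] at h2
  generalize f i = x at *
  generalize f (i + 2) = y at *
  rcases x with x | x
  · exact h1.elim
  rcases y with y | y
  · exact h2.elim
  have h3' : x ≠ y := fun h => h3 (by rw [h])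
  rcases h1 with h1 | h1 <;> rcases h2 with h2 | h2
  · exact absurd (h1.symm.trans h2) h3'
  · exact ⟨y, h2, by rw [h1]; exact h3'.symm, c2, h1 ▸ c1⟩
  · exact ⟨x, h1, by rw [h2]; exact h3', c1, h2 ▸ c2⟩
  · rw [h1] at h2; exact absurd (Option.some.inj h2) h3'

def asN (R : Struct) : R.Edge ⊕ R.Node → R.Node
  | .inl e => R.src e
  | .inr n => n

theorem bxcmp {R : Struct} (h : Fx R) {x y} (ha : BAdj R x y) :
    R.boxes (asN R x) ⊆ R.boxes (asN R y) ∨ R.boxes (asN R y) ⊆ R.boxes (asN R x) := by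
  rcases x with x | x <;> rcases y with y | y
  · exact ha.elim
  · rcases ha with ha | ha
    · left; rw [← ha]; exact Finset.Subset.refl _
    · right; exact h.bx_tgt ha
  · rcases ha with ha | ha
    · left; rw [← ha]; exact Finset.Subset.refl _
    · left; exact h.bx_tgt ha
  · rcases ha with ha | ha
    · left; show R.boxes x ⊆ R.boxes y; rw [(h.bx_some ha).2]; exact Finset.subset_insert _ _
    · right; show R.boxes y ⊆ R.boxes x; rw [(h.bx_some ha).2]; exact Finset.subset_insert _ _

/-- labelled step -/
def LS (R : Struct) (x y : R.Edge ⊕ R.Node) (e : R.Edge) : Prop :=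
  ∃ t, R.tgt e = some t ∧ ((x = .inl e ∧ y = .inr t) ∨ (x = .inr t ∧ y = .inl e))

theorem stepc {R : Struct} (h : Fx R) {ℓ x y r s} (ha : BAdj R x y) (hr : R.RepAt ℓ (asN R x) r)
    (hs : R.RepAt ℓ (asN R y) s) : r = s ∨ ∃ e, LS R x y e ∧ R.ConnectsAt ℓ e r s := by
  rcases x with x | x <;> rcases y with y | y
  · exact ha.elim
  · rcases ha with ha | ha
    · left; subst ha; exact rep_uniq h hr hs
    · rcases hs with ⟨h1, rfl⟩ | ⟨h1, h2⟩
      · right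
        exact ⟨x, ⟨_, ha, Or.inl ⟨rfl, rfl⟩⟩, _, ha, Or.inl h1, Or.inl ⟨hr, Or.inl ⟨h1, rfl⟩⟩⟩
      · left; exact rep_uniq h hr (Or.inr ⟨h.bx_tgt ha h1, h2⟩)
  · rcases ha with ha | ha
    · left; subst ha; exact rep_uniq h hr hs
    · rcases hr with ⟨h1, rfl⟩ | ⟨h1, h2⟩
      · right
        exact ⟨y, ⟨_, ha, Or.inr ⟨rfl, rfl⟩⟩, _, ha, Or.inl h1, Or.inr ⟨hs, Or.inl ⟨h1, rfl⟩⟩⟩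
      · left; exact rep_uniq h (Or.inr ⟨h.bx_tgt ha h1, h2⟩) hs
  · left
    rcases ha with ha | ha
    · rcases hr with ⟨h1, rfl⟩ | ⟨h1, h2⟩
      · exact rep_uniq h (Or.inr ⟨box_mem h ha, h1⟩) hs
      · refine rep_uniq h (Or.inr ⟨?_, h2⟩) hs
        show r ∈ R.boxes y
        rw [(h.bx_some ha).2]; exact Finset.mem_insert_of_mem h1
    · rcases hs with ⟨h1, rfl⟩ | ⟨h1, h2⟩
      · exact rep_uniq h hr (Or.inr ⟨box_mem h ha, h1⟩)
      · refine rep_uniq h hr (Or.inr ⟨?_, h2⟩)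
        show s ∈ R.boxes x
        rw [(h.bx_some ha).2]; exact Finset.mem_insert_of_mem h1

theorem no_cyc {R : Struct} (h : Fx R) (hc : HasCyc (BAdj R) (BF R)) :
    ∃ ℓ, R.SwitchingCycleAt ℓ := by
  obtain ⟨k, f, hk, hp, hinj, ha, ht⟩ := hc
  obtain ⟨i0, -, hi0⟩ := Finset.exists_min_image (Finset.range k)
    (fun i => (R.boxes (asN R (f i))).card) ⟨0, by simpa using hk⟩
  have hm : ∀ i, f (i % k) = f i := fun i => Function.Periodic.map_mod_nat hp i
  have hmin : ∀ i, (R.boxes (asN R (f i0))).card ≤ (R.boxes (asN R (f i))).card := by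
    intro i
    have := hi0 (i % k) (by simpa using Nat.mod_lt _ hk)
    rwa [hm] at this
  obtain ⟨n0, hn0⟩ : ∃ n0, n0 = asN R (f i0) := ⟨_, rfl⟩
  rw [← hn0] at hmin
  have hsub0 : ∀ j, R.boxes n0 ⊆ R.boxes (asN R (f (i0 + j))) := by
    intro j
    induction j with
    | zero => rw [hn0]; exact Finset.Subset.refl _
    | succ j ih =>
      rcases bxcmp h (ha (i0 + j)) with h1 | h1
      · exact ih.trans h1
      · rcases chain h ih h1 with h2 | h2
        · exact h2
        · exact (Finset.eq_of_subset_of_card_le h2 (hmin _)).symm.subset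
  have hsub : ∀ j, R.boxes n0 ⊆ R.boxes (asN R (f j)) := by
    intro j
    have := hsub0 (j + (i0 * k - i0))
    have e : i0 + (j + (i0 * k - i0)) = j + i0 * k := by
      have : i0 ≤ i0 * k := Nat.le_mul_of_pos_right _ hk
      omega
    rw [e, ← hm, Nat.add_mul_mod_self_right, hm] at this
    exact this
  choose u hu using fun i => rep_exists h (hsub i)
  have hstep := fun i => stepc h (ha i) (hu i) (hu (i + 1))
  have huf : ∀ i j, f i = f j → u i = u j := fun i j hij => rep_uniq h (hu i) (hij ▸ hu j)
  have hedge : ∀ i e, f (i + 1) = .inl e → ∃ t, R.tgt e = some t ∧ t ≠ R.src e ∧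
      Cn f (.inl e) (.inr t) ∧ Cn f (.inl e) (.inr (R.src e)) := fun i e => edgeV ha ht
  have hCu : ∀ w a, Cn f w a → ∃ i, f (i + 1) = a := fun w a hw =>
    Cn.at (hk := hk) (hp := hp) hw.symm
  by_cases hconst : ∀ i, u i = u (i + 1)
  · exfalso
    have hall : ∀ i, u (i0 + i) = n0 := by
      intro i
      induction i with
      | zero => exact rep_uniq h (hu i0) (Or.inl ⟨by rw [hn0], hn0⟩)
      | succ i ih => rw [← ih]; exact (hconst _).symm
    have hrep : ∀ x, (∃ i, f (i + 1) = x) → R.RepAt (R.box n0) (asN R x) n0 := by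
      rintro x ⟨i, rfl⟩
      have e : i0 + (i + 1 + (i0 * k - i0)) = i + 1 + i0 * k := by
        have : i0 ≤ i0 * k := Nat.le_mul_of_pos_right _ hk
        omega
      have := hu (i + 1)
      rwa [huf (i + 1) (i + 1 + i0 * k) (by
        rw [← hm (i + 1 + i0 * k), Nat.add_mul_mod_self_right, hm]), ← e, hall] at this
    have hon : ∃ i, f (i + 1) = .inr n0 := by
      cases hx : f i0 with
      | inr n => rw [hx] at hn0; exact ⟨i0 + k - 1, by
          rw [show i0 + k - 1 + 1 = i0 + k by omega, hp, hx, hn0]; rfl⟩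
      | inl e =>
        rw [hx] at hn0
        have hn0' : n0 = R.src e := hn0
        obtain ⟨t, -, -, -, hc⟩ := hedge (i0 + k - 1) e
          (by rw [show i0 + k - 1 + 1 = i0 + k by omega, hp, hx])
        rw [hn0']; exact hCu _ _ hc
    obtain ⟨i, hi⟩ := hon
    have key : ∀ x, Cn f (.inr n0) x → BAdj R (.inr n0) x → BF R (.inr n0) x := by
      rintro (e | c) hcn hadj
      · exfalso
        obtain ⟨j, hj⟩ := hCu _ _ hcn
        obtain ⟨t, h1, h2, h3, h4⟩ := hedge j e hj
        have r1 := hrep _ ⟨j, hj⟩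
        have r2 := hrep _ (hCu _ _ h3)
        have hb := h.bx_tgt h1
        rcases hadj with hs | hs
        · subst hs
          rcases r2 with ⟨-, q⟩ | ⟨q, -⟩
          · exact h2 q.symm
          · exact not_self h (hb q)
        · have : t = n0 := by rw [h1] at hs; exact Option.some.inj hs
          subst this
          rcases r1 with ⟨-, q⟩ | ⟨q, -⟩
          · exact h2 q
          · exact h.bot_prem (h.bx_bot q) h1
      · rcases hadj with hb | hb
        · exact hb
        · exfalso
          have hcb := box_mem h hb
          rcases hrep _ (hCu _ _ hcn) with ⟨-, q⟩ | ⟨q, -⟩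
          · have q' : n0 = c := q
            rw [← q'] at hcb; exact not_self h hcb
          · exact not_self h ((anc h q).2 (Finset.mem_insert_of_mem hcb))
    have a1 := ha i
    have a2 := ha (i + 1)
    have t1 := (ht i).2
    rw [hi] at a1 a2 t1
    have bsymm : ∀ x y, BAdj R x y → BAdj R y x := by
      rintro (x | x) (y | y) h
      · exact h.elim
      · exact h
      · exact h
      · exact h.symm
    exact t1 ⟨key _ ⟨i, Or.inr ⟨rfl, hi⟩⟩ (bsymm _ _ a1), key _ ⟨i + 1, Or.inl ⟨hi, rfl⟩⟩ a2⟩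
  · push Not at hconst
    obtain ⟨c, hc⟩ := hconst
    -- minimal loop
    have hex : ∃ d, ∃ a, 0 < d ∧ d ≤ k ∧ u a = u (a + d) ∧ ∃ i, a ≤ i ∧ i < a + d ∧
        u i ≠ u (i + 1) := ⟨k, c, hk, le_rfl, huf _ _ (hp c).symm, c, le_rfl, by omega, hc⟩
    classical
    obtain ⟨a, hd0, hdk, hua, hne⟩ := Nat.find_spec hex
    have hmn := fun d hd => Nat.find_min hex (m := d) hd
    generalize Nat.find hex = d at *
    have hinju : ∀ i j, a ≤ i → i < j → j < a + d → u i = u j → u i = u (i + 1) := by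
      intro i j h1 h2 h3 h4
      by_contra h5
      exact hmn (j - i) (by omega) ⟨i, by omega, by omega,
        by rw [show i + (j - i) = j by omega]; exact h4, i, le_rfl, by omega, h5⟩
    obtain ⟨K, idx, c1, c2, c3, c4, c5⟩ := compress (fun i => u (a + i)) d
    have hK : 0 < K := by
      rcases Nat.eq_zero_or_pos K with hK | hK
      · exfalso
        obtain ⟨i, hi1, hi2, hi3⟩ := hne
        have e1 := c3 hK (i - a) (by omega)
        have e2 := c3 hK (i + 1 - a) (by omega)
        simp only [show a + (i - a) = i by omega, show a + (i + 1 - a) = i + 1 by omega] at e1 e2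
        exact hi3 (e1.trans e2.symm)
      · exact hK
    obtain ⟨K, rfl⟩ : ∃ K', K = K' + 1 := ⟨K - 1, by omega⟩
    have hlab : ∀ j : Fin (K + 1), ∃ e, LS R (f (a + idx j)) (f (a + idx j + 1)) e ∧
        R.ConnectsAt (R.box n0) e (u (a + idx j)) (u (a + idx j + 1)) := by
      intro j
      rcases hstep (a + idx j) with h1 | h1
      · exact absurd h1 (c1 j j.2).2
      · exact h1
    choose e he1 he2 using hlab
    have hcn : ∀ j, ∃ t, R.tgt (e j) = some t ∧ t ≠ R.src (e j) ∧
        Cn f (.inl (e j)) (.inr t) ∧ Cn f (.inl (e j)) (.inr (R.src (e j))) := by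
      intro j
      obtain ⟨t, h1, h2⟩ := he1 j
      have : Cn f (.inr t) (.inl (e j)) := by
        rcases h2 with h2 | h2
        · exact ⟨_, Or.inr h2⟩
        · exact ⟨_, Or.inl h2⟩
      obtain ⟨i, hi⟩ := hCu _ _ this
      exact hedge i _ hi
    have hinjm : Function.Injective fun j : Fin (K + 1) => f (a + idx j) := by
      have : ∀ i j : Fin (K + 1), i < j → f (a + idx i) ≠ f (a + idx j) := by
        intro i j hij hf
        have hm' := cyc_mod hk hp hinj hf
        have h1 := c2 i j hij j.2
        have h2 := (c1 j j.2).1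
        have h3 : k ∣ (a + idx j) - (a + idx i) :=
          (Nat.modEq_iff_dvd' (by omega)).1 hm'
        have := Nat.le_of_dvd (by omega) h3
        omega
      intro i j hij
      rcases lt_trichotomy i j with h | h | h
      · exact absurd hij (this _ _ h)
      · exact h
      · exact absurd hij.symm (this _ _ h)
    have heinj : Function.Injective e := by
      intro i j hij
      apply hinjm
      obtain ⟨t, h1, h2⟩ := he1 i
      obtain ⟨t', h1', h2'⟩ := he1 j
      rw [← hij] at h1' h2'
      have ett : t = t' := by rw [h1] at h1'; exact Option.some.inj h1'
      subst ett
      show f (a + idx i) = f (a + idx j)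
      rcases h2 with ⟨p, q⟩ | ⟨p, q⟩ <;> rcases h2' with ⟨p', q'⟩ | ⟨p', q'⟩
      · rw [p, p']
      · exfalso
        apply (ht (a + idx i)).1
        rw [cyc_succ hk hp hinj (i := a + idx i + 1) (j := a + idx j) (by rw [q, p']), p, q']
      · exfalso
        apply (ht (a + idx i)).1
        rw [cyc_succ hk hp hinj (i := a + idx i + 1) (j := a + idx j) (by rw [q, p']), p, q']
      · rw [p, p']
    refine ⟨R.box n0, K, fun j => u (a + idx j), e, ?_, heinj, ?_, ?_, ?_⟩
    · have : ∀ i j : Fin (K + 1), i < j → u (a + idx i) ≠ u (a + idx j) := by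
        intro i j hij hf
        have h1 := c2 i j hij j.2
        have h2 := (c1 j j.2).1
        exact (c1 i i.2).2 (hinju _ _ (by omega) (by omega) (by omega) hf)
      intro i j hij
      rcases lt_trichotomy i j with h | h | h
      · exact absurd hij (this _ _ h)
      · exact h
      · exact absurd hij.symm (this _ _ h)
    · intro j
      have key : u (a + idx (j + 1 : Fin (K + 1))) = u (a + idx j + 1) := by
        by_cases hj : j = Fin.last K
        · subst hj
          have := c4 (by omega)
          simp only [Fin.last_add_one, Fin.val_zero, Fin.val_last]
          rw [← this.1]
          have h2 := this.2
          rw [Nat.add_sub_cancel] at h2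
          rw [Nat.add_assoc, h2]; exact hua
        · have hv : ((j + 1 : Fin (K + 1)) : ℕ) = j + 1 := Fin.val_add_one_of_lt (Fin.lt_last_iff_ne_last.2 hj)
          have hj' : (j : ℕ) + 1 < K + 1 := by rw [← hv]; exact (j + 1).2
          rw [hv, Nat.add_assoc]
          exact (c5 j hj').symm
      show R.ConnectsAt _ _ _ (u (a + idx (j + 1 : Fin (K + 1))))
      rw [key]; exact he2 j
    · intro p hpar i hi j hj
      by_contra hij
      have hne : e i ≠ e j := fun h => hij (heinj h)
      obtain ⟨t, h1, -, h2, -⟩ := hcn i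
      obtain ⟨t', h1', -, h2', -⟩ := hcn j
      have hi' : R.tgt (e i) = some p := hi
      have hj' : R.tgt (e j) = some p := hj
      have e1 : t = p := by rw [h1] at hi'; exact Option.some.inj hi'
      have e2 : t' = p := by rw [h1'] at hj'; exact Option.some.inj hj'
      subst e1; subst e2
      exact nbr hk hp hinj ht h2.symm h2'.symm (fun h => hne (Sum.inl.inj h))
        ⟨Or.inl ⟨hpar, h1⟩, Or.inl ⟨hpar, h1'⟩⟩
    · intro l hl i hi j hj
      by_contra hij
      have hne : e i ≠ e j := fun h => hij (heinj h)
      have hcl : ∀ i, R.OutEdgeOf l (e i) → Cn f (.inr l) (.inl (e i)) := by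
        intro i hi
        obtain ⟨t, h1, -, h2, h3⟩ := hcn i
        rcases hi.2 with ⟨q, -⟩ | ⟨q, -⟩
        · rw [q] at h3; exact h3.symm
        · have e1 : t = l := by rw [h1] at q; exact Option.some.inj q
          subst e1; exact h2.symm
      exact nbr hk hp hinj ht (hcl i hi) (hcl j hj) (fun h => hne (Sum.inl.inj h))
        ⟨Or.inr hi, Or.inr hj⟩

theorem no_loop {R : Struct} (hC : R.Correct) {e t} (ht : R.tgt e = some t) :
    R.src e ≠ t := by
  intro hs
  apply hC (R.box t)
  have hS : ∀ i j : Fin (0 + 1), i = j := fun i j => Fin.ext (by omega)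
  refine ⟨0, fun _ => t, fun _ => e, fun i j _ => hS i j,
    fun i j _ => hS i j, ?_, ?_, ?_⟩
  · intro i
    exact ⟨t, ht, Or.inl rfl, Or.inl ⟨Or.inl ⟨by rw [hs], hs.symm⟩, Or.inl ⟨rfl, rfl⟩⟩⟩
  · intro p _ i _ j _; exact hS i j
  · intro p _ i _ j _; exact hS i j

end Siam

namespace Siam
open Formula

abbrev Vt (R : Struct) := PS.VV (R.Edge ⊕ R.Node) R.Node

def At (R : Struct) : Vt R → Prop
  | .inl p => AtomOcc (FF R p.1) p.2
  | .inr _ => True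

def Dd (R : Struct) : Vt R → Vt R → Prop
  | .inl p, .inl q => ∃ s', NBc R p.1 (pol (sub (FF R p.1) p.2)) p.2 q.1 s' q.2
  | .inl p, .inr σ => Exc R σ p.1 ∧ ¬ ExFc R σ p.1
  | .inr σ, .inl p => ExFc R σ p.1
  | .inr σ, .inr τ => SFc R σ τ

theorem bne_of {a b : Bool} (h : ¬ a = b) : b = !a := by
  cases a <;> cases b <;> simp_all

theorem at_z {A m} (h : AtomOcc A m) : osz (sub A m) = 0 ∧ sub A m ≠ none ∧
    ∀ j, sub A (m ++ [j]) = none := by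
  obtain ⟨a, h1, h2⟩ := h
  refine ⟨?_, by rw [h1]; simp, fun j => ?_⟩
  · rw [h1]; cases a <;> first | rfl | exact h2.elim
  · rw [sub_append, h1]; cases a <;> first | exact False.elim h2 | simp [sub]

theorem at_live {R : Struct} (h : Fx R) {p : (R.Edge ⊕ R.Node) × Addr} (hp : At R (.inl p)) :
    PS.live {p | 0 < (psOf h).z p} p := by
  have := at_z hp
  refine ⟨?_, ?_⟩
  · intro h'
    have h'' : 0 < osz (sub (FF R p.1) p.2) := h'
    omega
  · by_cases hm : p.2 = []
    · exact Or.inl hm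
    · right
      show 0 < osz (sub (FF R p.1) p.2.dropLast)
      apply osz_parent (j := p.2.getLast hm)
      rw [List.dropLast_append_getLast]; exact this.2.1

theorem sf_irr {R : Struct} (h : Fx R) {σ τ} (h1 : SFc R σ τ) (h2 : SFc R τ σ) : False := by
  have a := box_mem h h1.1
  have b := box_mem h h2.1
  exact not_self h ((anc h a).2 (Finset.mem_insert_of_mem b))

theorem dd_adj {R : Struct} (h : Fx R) {u v : Vt R} (hu : At R u) (hv : At R v) (hd : Dd R u v) :
    (psOf h).Adj {p | 0 < (psOf h).z p} u v := by
  rcases u with p | σ <;> rcases v with q | τ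
  · obtain ⟨s', hd⟩ := hd
    exact ⟨at_live h hu, at_live h hv, Or.inl ⟨_, _, hd⟩⟩
  · exact ⟨at_live h hu, hd.1⟩
  · refine ⟨at_live h hv, ?_⟩
    obtain ⟨q, m⟩ := q
    rcases q with e | n
    · have hd' : R.OutEdgeOf σ e := hd
      left
      exact ⟨hd'.1, hd'.2.imp And.left And.left⟩
    · exact hd
  · exact Or.inl hd

theorem dd_turn {R : Struct} (h : Fx R) (hC : R.Correct) {u v w : Vt R} (hu : At R u) (hv : At R v)
    (hw : At R w) (h1 : Dd R u v) (h2 : Dd R v w) : Turn (psOf h).fl u v w := by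
  refine ⟨?_, ?_⟩
  · rintro rfl
    rcases u with ⟨p, m⟩ | σ <;> rcases v with ⟨q, m'⟩ | τ
    · obtain ⟨s1, h1⟩ := h1
      obtain ⟨s2, h2⟩ := h2
      have b1 : sub (FF R q) m' = if pol (sub (FF R p) m) = s1 then (sub (FF R p) m).map dual else
        sub (FF R p) m := (psOf h).a2 h1
      have hne := (at_z hu).2.1
      have b2 : s1 = !pol (sub (FF R q) m') := by
        rw [b1]
        split_ifs with hh
        · rw [pol_dual _ hne, hh]; simp
        · exact bne_of hh
      have loop : ∀ {e : R.Edge} {n s s' m1 m2 m3 m4}, Jn R n s m1 e true m2 →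
          Jn R n s' m3 e false m4 → False := by
        intro e n s s' m1 m2 m3 m4 j1 j2
        have i1 := jn_inc j1
        have i2 := jn_inc j2
        simp only [if_true, Bool.false_eq_true, if_false] at i1 i2
        exact no_loop hC i1 i2
      rcases p with e | n <;> rcases q with e' | n'
      · exact h1
      · have h2' : (psOf h).NB (.inr n') (pol (sub (FF R (.inr n')) m')) m' (.inl e) s2 m := h2
        have a := (psOf h).a2 h2'
        have hq := (at_z hv).2.1
        have b3 : s2 = !pol (sub (FF R (.inl e)) m) := by
          have b1' : sub (FF R (.inl e)) m = if pol (sub (FF R (.inr n')) m') = s2 then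
            (sub (FF R (.inr n')) m').map dual else sub (FF R (.inr n')) m' := a
          rw [b1']
          split_ifs with hh
          · rw [pol_dual _ hq, hh]; simp
          · exact bne_of hh
        simp only at h1 h2
        rw [b3] at h2
        cases hx : pol (sub (FF R (.inl e)) m) <;> simp only [hx] at h1 h2
        · exact loop h2 h1
        · exact loop h1 h2
      · simp only at h1 h2
        rw [b2] at h1
        cases hx : pol (sub (FF R (.inl e')) m') <;> simp only [hx] at h1 h2
        · exact loop h1 h2
        · exact loop h2 h1
      · exact h1
    · exact h1.2 h2
    · exact h2.2 h1
    · exact sf_irr h h1 h2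
  · rintro ⟨f1, f2⟩
    rcases v with p | σ <;> rcases u with q | τ
    · obtain ⟨j, s', hn⟩ := f1
      have := (psOf h).a2 hn
      have e := (at_z hv).2.2 j
      have e' : sub ((psOf h).F p.1) (p.2 ++ [j]) = none := e
      have hq : sub ((psOf h).F q.1) q.2 ≠ none := (at_z hu).2.1
      rw [e'] at this
      simp at this
      exact hq this
    · exact f1
    · exact h1.2 f1
    · exact sf_irr h h1 f1

theorem at_finite (R : Struct) : {v | At R v}.Finite := by
  have : {v | At R v} ⊆ Sum.inl '' (⋃ θ, (fun m => (θ, m)) '' {m | sub (FF R θ) m ≠ none}) ∪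
      Set.range Sum.inr := by
    rintro (p | σ) hp
    · left
      refine ⟨p, ?_, rfl⟩
      simp only [Set.mem_iUnion]
      exact ⟨p.1, p.2, (at_z hp).2.1, rfl⟩
    · right; exact ⟨σ, rfl⟩
  exact (((Set.finite_iUnion fun θ => (sub_finite _).image _).image _).union
    (Set.finite_range _)).subset this

theorem no_dead {R : Struct} (h : Fx R) (hC : R.Correct) (U : Set (Vt R))
    (hU : ∀ v ∈ U, At R v ∧ ∃ u ∈ U, Dd R u v) : U = ∅ := by
  by_contra hne
  obtain ⟨v0, hv0⟩ := Set.nonempty_iff_ne_empty.2 hne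
  choose! pr hpr using fun v hv => (hU v hv).2
  obtain ⟨g, hg0, hg⟩ : ∃ g : ℕ → Vt R, g 0 = v0 ∧ ∀ n, g (n + 1) = pr (g n) :=
    ⟨fun n => pr^[n] v0, rfl, fun n => Function.iterate_succ_apply' pr n v0⟩
  have hgU : ∀ n, g n ∈ U := by
    intro n
    induction n with
    | zero => rw [hg0]; exact hv0
    | succ n ih => rw [hg]; exact (hpr _ ih).1
  have hD : ∀ n, Dd R (g (n + 1)) (g n) := fun n => by rw [hg]; exact (hpr _ (hgU n)).2
  have hA : ∀ n, At R (g n) := fun n => (hU _ (hgU n)).1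
  have hex : ∃ d, ∃ i, 0 < d ∧ g i = g (i + d) := by
    obtain ⟨i, j, hij, he⟩ := (at_finite R).exists_lt_map_eq_of_forall_mem (f := g) hA
    exact ⟨j - i, i, by omega, by rw [show i + (j - i) = j by omega]; exact he⟩
  classical
  obtain ⟨i, hd, hi⟩ := Nat.find_spec hex
  have hmn := fun d hd => Nat.find_min hex (m := d) hd
  generalize Nat.find hex = d at *
  have hd2 : 2 ≤ d := by
    by_contra hlt
    have : d = 1 := by omega
    subst this
    have hx := hD i
    have ha := dd_turn h hC (hA _) (hA _) (hA i) (hi ▸ hx : Dd R (g i) (g i)) (hi ▸ hx)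
    exact ha.1 rfl
  suffices key : HasCyc ((psOf h).Adj {p | 0 < (psOf h).z p}) (psOf h).fl by
    obtain ⟨ℓ, hℓ⟩ := no_cyc h (base_cyc h ((psOf h).all_cyc key))
    exact hC ℓ hℓ
  refine hasCyc_seg (fun t => g (i + (d - t))) d hd2 (by simp [hi]) ?_ ?_ ?_ ?_
  · intro a b ha hb hab
    by_contra hne
    rcases Nat.lt_or_gt_of_ne hne with hl | hl
    · refine hmn (b - a) (by omega) ⟨i + (d - b), by omega, ?_⟩
      rw [show i + (d - b) + (b - a) = i + (d - a) by omega]; exact hab.symm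
    · refine hmn (a - b) (by omega) ⟨i + (d - a), by omega, ?_⟩
      rw [show i + (d - a) + (a - b) = i + (d - b) by omega]; exact hab
  · intro t ht
    have := hD (i + (d - (t + 1)))
    rw [show i + (d - (t + 1)) + 1 = i + (d - t) by omega] at this
    exact dd_adj h (hA _) (hA _) this
  · intro t ht
    have h1 := hD (i + (d - (t + 1)))
    have h2 := hD (i + (d - (t + 2)))
    rw [show i + (d - (t + 1)) + 1 = i + (d - t) by omega] at h1
    rw [show i + (d - (t + 2)) + 1 = i + (d - (t + 1)) by omega] at h2
    exact dd_turn h hC (hA _) (hA _) (hA _) h1 h2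
  · have h1 := hD i
    have h2 := hD (i + (d - 1))
    rw [show i + (d - 1) + 1 = i + d by omega] at h2
    simp only [Nat.sub_zero, show i + (d - (d - 1)) = i + 1 by omega]
    rw [hi] at h1
    exact dd_turn h hC (hA _) (hA _) (hA _) h1 h2

end Siam

namespace Siam
open Formula Struct

inductive Nx (R : Struct) : R.Node → PosVal R → PosVal R → Prop
  | ax {n e e' m} : NegOcc (R.typ e) m → R.src e = n → R.sort n = .ax → R.src e' = n → e' ≠ e →
      Nx R n (.atom e m) (.atom e' m)
  | cut {n e e' m} : PosOcc (R.typ e) m → R.tgt e = some n → R.sort n = .cut → R.tgt e' = some n →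
      e' ≠ e → Nx R n (.atom e m) (.atom e' m)
  | multDown {n e g b m} : PosOcc (R.typ e) m → R.tgt e = some n →
      (R.sort n = .tens ∨ R.sort n = .parr) → R.src g = n → R.pIdx e = bn b →
      Nx R n (.atom e m) (.atom g (b :: m))
  | multUp {n e g b m} : NegOcc (R.typ g) (b :: m) → R.src g = n →
      (R.sort n = .tens ∨ R.sort n = .parr) → R.tgt e = some n → R.pIdx e = bn b →
      Nx R n (.atom g (b :: m)) (.atom e m)
  | lock {n e} : R.typ e = .bot → R.src e = n → R.sort n = .bot → Nx R n (.atom e []) (.lock e 0)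
  | syncDown {n e e' m} : PosOcc (R.typ e) m → R.tgt e = some n → R.sort n = .sync → R.src e' = n →
      R.cIdx e' = R.pIdx e → Nx R n (.atom e m) (.atom e' m)
  | syncUp {n e e' m} : NegOcc (R.typ e) m → R.src e = n → R.sort n = .sync → R.tgt e' = some n →
      R.pIdx e' = R.cIdx e → Nx R n (.atom e m) (.atom e' m)

theorem pos_neg {A m} (h : PosOcc A m) (h' : NegOcc A m) : False := by
  obtain ⟨a, h1, h2⟩ := h
  obtain ⟨b, h3, h4⟩ := h'
  rw [h1] at h3
  cases h3
  rcases h2 with rfl | ⟨n, rfl⟩ <;> rcases h4 with h | ⟨_, h⟩ <;> cases h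

theorem at_or {A m} (h : AtomOcc A m) : PosOcc A m ∨ NegOcc A m := by
  obtain ⟨a, h1, h2⟩ := h
  cases a
  · exact Or.inl ⟨_, h1, Or.inl rfl⟩
  · exact Or.inr ⟨_, h1, Or.inl rfl⟩
  · exact Or.inl ⟨_, h1, Or.inr ⟨_, rfl⟩⟩
  · exact Or.inr ⟨_, h1, Or.inr ⟨_, rfl⟩⟩
  · exact False.elim h2
  · exact False.elim h2

theorem pos_pol {A m} (h : PosOcc A m) : pol (sub A m) = true := by
  obtain ⟨a, h1, h2⟩ := h
  rw [h1]; rcases h2 with rfl | ⟨n, rfl⟩ <;> rfl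

theorem neg_pol {A m} (h : NegOcc A m) : pol (sub A m) = false := by
  obtain ⟨a, h1, h2⟩ := h
  rw [h1]; rcases h2 with rfl | ⟨n, rfl⟩ <;> rfl

theorem pos_iff {A m} : PosOcc A m ↔ AtomOcc A m ∧ pol (sub A m) = true := by
  refine ⟨fun h => ⟨h.atomOcc, pos_pol h⟩, fun ⟨h, h'⟩ => ?_⟩
  rcases at_or h with h | h
  · exact h
  · rw [neg_pol h] at h'; cases h'

theorem neg_iff {A m} : NegOcc A m ↔ AtomOcc A m ∧ pol (sub A m) = false := by
  refine ⟨fun h => ⟨h.atomOcc, neg_pol h⟩, fun ⟨h, h'⟩ => ?_⟩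
  rcases at_or h with h | h
  · rw [pos_pol h] at h'; cases h'
  · exact h

theorem positive_pos {A m} (h : A.Positive) (h' : AtomOcc A m) : PosOcc A m :=
  pos_iff.2 ⟨h', pol_pos' h (at_z h').2.1⟩

theorem negative_neg {A m} (h : A.Negative) (h' : AtomOcc A m) : NegOcc A m :=
  neg_iff.2 ⟨h', pol_neg' h (at_z h').2.1⟩

theorem pos_positive {A m} (h : A.Polarized) (h' : PosOcc A m) : A.Positive := by
  rcases h with h | h
  · exact h
  · exact (pos_neg h' (negative_neg h h'.atomOcc)).elim

theorem neg_negative {A m} (h : A.Polarized) (h' : NegOcc A m) : A.Negative := by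
  rcases h with h | h
  · exact (pos_neg (positive_pos h h'.atomOcc) h').elim
  · exact h

theorem posneg_excl {A : Formula} (h : A.Positive) (h' : A.Negative) : False := by
  cases h <;> cases h'

theorem occ_dual {A B : Formula} {m} (h : B = A.dual) : (NegOcc A m → PosOcc B m) ∧
    (PosOcc A m → NegOcc B m) := by
  subst h
  constructor
  · rintro ⟨a, h1, rfl | ⟨n, rfl⟩⟩
    · exact ⟨_, by rw [sub_dual, h1]; rfl, Or.inl rfl⟩
    · exact ⟨_, by rw [sub_dual, h1]; rfl, Or.inr ⟨n, rfl⟩⟩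
  · rintro ⟨a, h1, rfl | ⟨n, rfl⟩⟩
    · exact ⟨_, by rw [sub_dual, h1]; rfl, Or.inl rfl⟩
    · exact ⟨_, by rw [sub_dual, h1]; rfl, Or.inr ⟨n, rfl⟩⟩

theorem occ_eq {A B : Formula} {m m'} (h : sub A m = sub B m') : (NegOcc A m → NegOcc B m') ∧
    (PosOcc A m → PosOcc B m') := by
  unfold NegOcc PosOcc; rw [h]; exact ⟨id, id⟩

variable {R : Struct}

def InP (R : Struct) (n : R.Node) : PosVal R → Prop
  | .atom e m => (PosOcc (R.typ e) m ∧ R.tgt e = some n) ∨ (NegOcc (R.typ e) m ∧ R.src e = n)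
  | .lock _ _ => False

def OutP (R : Struct) (n : R.Node) : PosVal R → Prop
  | .atom e m => (PosOcc (R.typ e) m ∧ R.src e = n) ∨ (NegOcc (R.typ e) m ∧ R.tgt e = some n)
  | .lock e i => R.src e = n ∧ i = 0 ∧ R.sort n = .bot

theorem nx_in (h : Fx R) {n v w} (hx : Nx R n v w) : InP R n v := by
  cases hx with
  | ax a b c d e => exact Or.inr ⟨a, b⟩
  | cut a b c d e => exact Or.inl ⟨a, b⟩
  | multDown a b c d e => exact Or.inl ⟨a, b⟩
  | multUp a b c d e => exact Or.inr ⟨a, b⟩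
  | lock a b c => exact Or.inr ⟨⟨_, by rw [a]; rfl, Or.inl rfl⟩, b⟩
  | syncDown a b c d e => exact Or.inl ⟨a, b⟩
  | syncUp a b c d e => exact Or.inr ⟨a, b⟩

theorem nx_out (h : Fx R) {n v w} (hx : Nx R n v w) : OutP R n w := by
  cases hx with
  | ax a b c d e => exact Or.inl ⟨(occ_dual (h.ax_dual c b d e.symm)).1 a, d⟩
  | cut a b c d e => exact Or.inr ⟨(occ_dual (h.cut_dual c b d e.symm)).2 a, d⟩
  | multDown a b c d e => exact Or.inl ⟨(occ_eq (h.m_sub c b d e).symm).2 a, d⟩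
  | multUp a b c d e => exact Or.inr ⟨(occ_eq (h.m_sub c d b e)).1 a, d⟩
  | lock a b c => exact ⟨b, rfl, c⟩
  | syncDown a b c d e => exact Or.inl ⟨by rw [h.sy_typ c b d e]; exact a, d⟩
  | syncUp a b c d e => exact Or.inr ⟨by rw [← h.sy_typ c d b e.symm]; exact a, d⟩

theorem in_uniq {n n' v} (h : InP R n v) (h' : InP R n' v) : n = n' := by
  cases v with
  | lock => exact h.elim
  | atom e m =>
    rcases h with ⟨a, b⟩ | ⟨a, b⟩ <;> rcases h' with ⟨c, d⟩ | ⟨c, d⟩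
    · rw [b] at d; exact Option.some.inj d
    · exact (pos_neg a c).elim
    · exact (pos_neg c a).elim
    · exact b.symm.trans d

theorem out_uniq {n n' v} (h : OutP R n v) (h' : OutP R n' v) : n = n' := by
  cases v with
  | lock => exact h.1.symm.trans h'.1
  | atom e m =>
    rcases h with ⟨a, b⟩ | ⟨a, b⟩ <;> rcases h' with ⟨c, d⟩ | ⟨c, d⟩
    · exact b.symm.trans d
    · exact (pos_neg a c).elim
    · exact (pos_neg c a).elim
    · rw [b] at d; exact Option.some.inj d

theorem nx_fun (h : Fx R) {n n' v w w'} (h1 : Nx R n v w) (h2 : Nx R n' v w') : w = w' := by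
  obtain rfl := in_uniq (nx_in h h1) (nx_in h h2)
  cases h1 with
  | ax a b c d e =>
    cases h2 with
    | ax a' b' c' d' e' => rw [h.ax_three c d b d' e e'.symm.symm]
    | cut a' b' c' d' e' => rw [c] at c'; cases c'
    | multDown a' b' c' d' e' => rw [c] at c'; simp at c'
    | multUp a' b' c' d' e' => rw [c] at c'; simp at c'
    | lock a' b' c' => rw [c] at c'; cases c'
    | syncDown a' b' c' d' e' => rw [c] at c'; cases c'
    | syncUp a' b' c' d' e' => rw [c] at c'; cases c'
  | cut a b c d e =>
    cases h2 with
    | ax a' b' c' d' e' => rw [c] at c'; cases c'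
    | cut a' b' c' d' e' => rw [h.cut_three c d b d' e e']
    | multDown a' b' c' d' e' => rw [c] at c'; simp at c'
    | multUp a' b' c' d' e' => rw [c] at c'; simp at c'
    | lock a' b' c' => rw [c] at c'; cases c'
    | syncDown a' b' c' d' e' => rw [c] at c'; cases c'
    | syncUp a' b' c' d' e' => rw [c] at c'; cases c'
  | multDown a b c d e =>
    cases h2 with
    | ax a' b' c' d' e' => rw [c'] at c; simp at c
    | cut a' b' c' d' e' => rw [c'] at c; simp at c
    | multDown a' b' c' d' e' => rw [h.m_uniq c d d', bn_inj (e.symm.trans e')]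
    | multUp a' b' c' d' e' => exact (pos_neg a a').elim
    | lock a' b' c' => rw [c'] at c; simp at c
    | syncDown a' b' c' d' e' => rw [c'] at c; simp at c
    | syncUp a' b' c' d' e' => rw [c'] at c; simp at c
  | multUp a b c d e =>
    generalize hm : (_ :: _ : List Bool) = mm at h2
    cases h2 with
    | ax a' b' c' d' e' => rw [c'] at c; simp at c
    | cut a' b' c' d' e' => rw [c'] at c; simp at c
    | multDown a' b' c' d' e' => subst hm; exact (pos_neg a' a).elim
    | multUp a' b' c' d' e' =>
      cases hm
      rw [h.m_inj c d d' (e.trans e'.symm)]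
    | lock a' b' c' => rw [c'] at c; simp at c
    | syncDown a' b' c' d' e' => rw [c'] at c; simp at c
    | syncUp a' b' c' d' e' => rw [c'] at c; simp at c
  | lock a b c =>
    generalize hm : ([] : List Bool) = mm at h2
    cases h2 with
    | ax a' b' c' d' e' => rw [c] at c'; cases c'
    | cut a' b' c' d' e' => rw [c] at c'; cases c'
    | multDown a' b' c' d' e' => rw [c] at c'; simp at c'
    | multUp a' b' c' d' e' => rw [c] at c'; simp at c'
    | lock a' b' c' => rfl
    | syncDown a' b' c' d' e' => rw [c] at c'; cases c'
    | syncUp a' b' c' d' e' => rw [c] at c'; cases c'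
  | syncDown a b c d e =>
    cases h2 with
    | ax a' b' c' d' e' => rw [c] at c'; cases c'
    | cut a' b' c' d' e' => rw [c] at c'; cases c'
    | multDown a' b' c' d' e' => rw [c] at c'; simp at c'
    | multUp a' b' c' d' e' => rw [c] at c'; simp at c'
    | lock a' b' c' => rw [c] at c'; cases c'
    | syncDown a' b' c' d' e' => rw [h.sy_injd c b d d' e e']
    | syncUp a' b' c' d' e' => exact (pos_neg a a').elim
  | syncUp a b c d e =>
    cases h2 with
    | ax a' b' c' d' e' => rw [c] at c'; cases c'
    | cut a' b' c' d' e' => rw [c] at c'; cases c'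
    | multDown a' b' c' d' e' => rw [c] at c'; simp at c'
    | multUp a' b' c' d' e' => rw [c] at c'; simp at c'
    | lock a' b' c' => rw [c] at c'; cases c'
    | syncDown a' b' c' d' e' => exact (pos_neg a' a).elim
    | syncUp a' b' c' d' e' => rw [h.sy_inju c d d' b e.symm e'.symm]

theorem nx_cofun (h : Fx R) {n n' v v' w} (h1 : Nx R n v w) (h2 : Nx R n' v' w) :
    v = v' ∧ n = n' := by
  have hn := out_uniq (nx_out h h1) (nx_out h h2)
  refine ⟨?_, hn⟩
  subst hn
  have o1 := nx_out h h1
  have o2 := nx_out h h2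
  cases h1 with
  | ax a b c d e =>
    cases h2 with
    | ax a' b' c' d' e' => rw [h.ax_three c b d b' e.symm e'.symm]
    | cut a' b' c' d' e' => rw [c] at c'; cases c'
    | multDown a' b' c' d' e' => rw [c] at c'; simp at c'
    | multUp a' b' c' d' e' => rw [c] at c'; simp at c'
    | syncDown a' b' c' d' e' => rw [c] at c'; cases c'
    | syncUp a' b' c' d' e' => rw [c] at c'; cases c'
  | cut a b c d e =>
    cases h2 with
    | ax a' b' c' d' e' => rw [c] at c'; cases c'
    | cut a' b' c' d' e' => rw [h.cut_three c b d b' e.symm e'.symm]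
    | multDown a' b' c' d' e' => rw [c] at c'; simp at c'
    | multUp a' b' c' d' e' => rw [c] at c'; simp at c'
    | syncDown a' b' c' d' e' => rw [c] at c'; cases c'
    | syncUp a' b' c' d' e' => rw [c] at c'; cases c'
  | multDown a b c d e =>
    generalize hm : (_ :: _ : List Bool) = mm at h2
    cases h2 with
    | ax a' b' c' d' e' => rw [c'] at c; simp at c
    | cut a' b' c' d' e' => rw [c'] at c; simp at c
    | multDown a' b' c' d' e' =>
      cases hm
      rw [h.m_inj c b b' (e.trans e'.symm)]
    | multUp a' b' c' d' e' =>
      subst hm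
      have p1 := (occ_eq (h.m_sub c b d e).symm).2 a
      have p2 := (occ_eq (h.m_sub c d' b' e')).1 a'
      exact (pos_neg p1 p2).elim
    | syncDown a' b' c' d' e' => rw [c'] at c; simp at c
    | syncUp a' b' c' d' e' => rw [c'] at c; simp at c
  | multUp a b c d e =>
    cases h2 with
    | ax a' b' c' d' e' => rw [c'] at c; simp at c
    | cut a' b' c' d' e' => rw [c'] at c; simp at c
    | multDown a' b' c' d' e' =>
      have p1 := (occ_eq (h.m_sub c b' d' e').symm).2 a'
      have p2 := (occ_eq (h.m_sub c d b e)).1 a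
      exact (pos_neg p1 p2).elim
    | multUp a' b' c' d' e' => rw [h.m_uniq c b b', bn_inj (e.symm.trans e')]
    | syncDown a' b' c' d' e' => rw [c'] at c; simp at c
    | syncUp a' b' c' d' e' => rw [c'] at c; simp at c
  | lock a b c =>
    cases h2 with
    | lock a' b' c' => rfl
  | syncDown a b c d e =>
    cases h2 with
    | ax a' b' c' d' e' => rw [c] at c'; cases c'
    | cut a' b' c' d' e' => rw [c] at c'; cases c'
    | multDown a' b' c' d' e' => rw [c] at c'; simp at c'
    | multUp a' b' c' d' e' => rw [c] at c'; simp at c'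
    | syncDown a' b' c' d' e' => rw [h.sy_inju c b b' d e e']
    | syncUp a' b' c' d' e' =>
      rw [← h.sy_typ c b d e] at a
      rw [h.sy_typ c d' b' e'.symm] at a'
      exact (pos_neg a a').elim
  | syncUp a b c d e =>
    cases h2 with
    | ax a' b' c' d' e' => rw [c] at c'; cases c'
    | cut a' b' c' d' e' => rw [c] at c'; cases c'
    | multDown a' b' c' d' e' => rw [c] at c'; simp at c'
    | multUp a' b' c' d' e' => rw [c] at c'; simp at c'
    | syncDown a' b' c' d' e' =>
      rw [← h.sy_typ c b' d' e'] at a'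
      rw [h.sy_typ c d b e.symm] at a
      exact (pos_neg a' a).elim
    | syncUp a' b' c' d' e' => rw [h.sy_injd c d b b' e.symm e'.symm]

theorem nx_ex (h : Fx R) {n v} (hi : InP R n v) : ∃ w, Nx R n v w := by
  cases v with
  | lock => exact hi.elim
  | atom e m =>
    rcases hi with ⟨a, b⟩ | ⟨a, b⟩ <;> cases hs : R.sort n
    · exact absurd b (h.ax_prem hs)
    · obtain ⟨f, h1, h2⟩ := h.cut_other b hs
      exact ⟨_, .cut a b hs h1 h2⟩
    · obtain ⟨g, hg⟩ := h.m_concl (Or.inl hs)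
      obtain ⟨b', hb⟩ := h.m_idx (Or.inl hs) b
      exact ⟨_, .multDown a b (Or.inl hs) hg hb⟩
    · obtain ⟨g, hg⟩ := h.m_concl (Or.inr hs)
      obtain ⟨b', hb⟩ := h.m_idx (Or.inr hs) b
      exact ⟨_, .multDown a b (Or.inr hs) hg hb⟩
    · exact absurd b (h.one_prem hs)
    · exact absurd b (h.bot_prem hs)
    · obtain ⟨f, h1, h2⟩ := h.sy_down hs b
      exact ⟨_, .syncDown a b hs h1 h2⟩
    · subst b
      obtain ⟨f, h1, h2⟩ := h.ax_other hs
      exact ⟨_, .ax a rfl hs h1 h2⟩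
    · exact absurd b (h.cut_concl hs)
    · cases m with
      | nil =>
        subst b
        obtain ⟨A, B, hAB⟩ := h.m_tens hs
        obtain ⟨x, hx, hx'⟩ := a
        rw [hAB] at hx; cases hx; simp at hx'
      | cons j m =>
        obtain ⟨e', h1, h2⟩ := h.m_prem j (Or.inl hs)
        exact ⟨_, .multUp a b (Or.inl hs) h1 h2⟩
    · cases m with
      | nil =>
        subst b
        obtain ⟨A, B, hAB⟩ := h.m_parr hs
        obtain ⟨x, hx, hx'⟩ := a
        rw [hAB] at hx; cases hx; simp at hx'
      | cons j m =>
        obtain ⟨e', h1, h2⟩ := h.m_prem j (Or.inr hs)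
        exact ⟨_, .multUp a b (Or.inr hs) h1 h2⟩
    · subst b
      obtain ⟨x, hx, hx'⟩ := a
      rw [h.one_typ hs] at hx
      cases m <;> simp [sub] at hx
      subst hx; simp at hx'
    · subst b
      have ht := h.bot_typ hs
      have : m = [] := by
        obtain ⟨x, hx, hx'⟩ := a
        rw [ht] at hx
        cases m <;> simp [sub] at hx
        rfl
      subst this
      exact ⟨_, .lock ht rfl hs⟩
    · obtain ⟨f, h1, h2⟩ := h.sy_up hs b
      exact ⟨_, .syncUp a b hs h1 h2⟩

theorem nx_coex (h : Fx R) {n e m} (ho : OutP R n (.atom e m)) :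
    (∃ v, Nx R n v (.atom e m)) ∨ (R.sort n = .one ∧ m = [] ∧ R.src e = n) := by
  rcases ho with ⟨a, b⟩ | ⟨a, b⟩ <;> cases hs : R.sort n
  · subst b
    obtain ⟨f, h1, h2⟩ := h.ax_other hs
    exact Or.inl ⟨_, .ax ((occ_dual (h.ax_dual hs rfl h1 h2.symm)).2 a) h1 hs rfl h2.symm⟩
  · exact absurd b (h.cut_concl hs)
  · cases m with
    | nil =>
      subst b
      obtain ⟨A, B, hAB⟩ := h.m_tens hs
      obtain ⟨x, hx, hx'⟩ := a
      rw [hAB] at hx; cases hx; simp at hx'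
    | cons j m =>
      obtain ⟨e', h1, h2⟩ := h.m_prem j (Or.inl hs)
      exact Or.inl ⟨_, .multDown ((occ_eq (h.m_sub (Or.inl hs) h1 b h2)).2 a) h1 (Or.inl hs) b h2⟩
  · cases m with
    | nil =>
      subst b
      obtain ⟨A, B, hAB⟩ := h.m_parr hs
      obtain ⟨x, hx, hx'⟩ := a
      rw [hAB] at hx; cases hx; simp at hx'
    | cons j m =>
      obtain ⟨e', h1, h2⟩ := h.m_prem j (Or.inr hs)
      exact Or.inl ⟨_, .multDown ((occ_eq (h.m_sub (Or.inr hs) h1 b h2)).2 a) h1 (Or.inr hs) b h2⟩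
  · subst b
    have ht := h.one_typ hs
    refine Or.inr ⟨rfl, ?_, rfl⟩
    obtain ⟨x, hx, hx'⟩ := a
    rw [ht] at hx
    cases m <;> simp [sub] at hx
    rfl
  · subst b
    obtain ⟨x, hx, hx'⟩ := a
    rw [h.bot_typ hs] at hx
    cases m <;> simp [sub] at hx
    subst hx; simp at hx'
  · obtain ⟨f, h1, h2⟩ := h.sy_up hs b
    exact Or.inl ⟨_, .syncDown (by rw [← h.sy_typ hs h1 b h2.symm]; exact a) h1 hs b h2.symm⟩
  · exact absurd b (h.ax_prem hs)
  · obtain ⟨f, h1, h2⟩ := h.cut_other b hs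
    exact Or.inl ⟨_, .cut ((occ_dual (h.cut_dual hs b h1 h2.symm)).1 a) h1 hs b h2.symm⟩
  · obtain ⟨g, hg⟩ := h.m_concl (Or.inl hs)
    obtain ⟨b', hb⟩ := h.m_idx (Or.inl hs) b
    exact Or.inl ⟨_, .multUp ((occ_eq (h.m_sub (Or.inl hs) b hg hb).symm).1 a) hg (Or.inl hs) b hb⟩
  · obtain ⟨g, hg⟩ := h.m_concl (Or.inr hs)
    obtain ⟨b', hb⟩ := h.m_idx (Or.inr hs) b
    exact Or.inl ⟨_, .multUp ((occ_eq (h.m_sub (Or.inr hs) b hg hb).symm).1 a) hg (Or.inr hs) b hb⟩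
  · exact absurd b (h.one_prem hs)
  · exact absurd b (h.bot_prem hs)
  · obtain ⟨f, h1, h2⟩ := h.sy_down hs b
    exact Or.inl ⟨_, .syncUp (by rw [h.sy_typ hs b h1 h2]; exact a) h1 hs b h2.symm⟩

theorem nx_not_one (h : Fx R) {q : R.Edge × Addr} (hq : R.OnePos q) {n v}
    (hx : Nx R n v (.atom q.1 q.2)) : False := by
  have ho := nx_out h hx
  have hs := hq.1
  have hn : R.sort n = .one := by
    rcases ho with ⟨a, b⟩ | ⟨a, b⟩
    · rw [← b]; exact hs
    · obtain ⟨x, hx, hx'⟩ := a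
      rw [h.one_typ hs, hq.2] at hx
      cases hx; simp at hx'
  clear ho
  generalize PosVal.atom q.1 q.2 = w at hx
  cases hx with
  | ax a b c d e => rw [hn] at c; cases c
  | cut a b c d e => rw [hn] at c; cases c
  | multDown a b c d e => rw [hn] at c; simp at c
  | multUp a b c d e => rw [hn] at c; simp at c
  | lock a b c => rw [hn] at c; cases c
  | syncDown a b c d e => rw [hn] at c; cases c
  | syncUp a b c d e => rw [hn] at c; cases c

theorem out_valid {n v} (ho : OutP R n v) : R.ValidVal v := by
  cases v with
  | lock e i => show R.sort (R.src e) = _; rw [ho.1]; exact ho.2.2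
  | atom e m => rcases ho with ⟨a, _⟩ | ⟨a, _⟩; exacts [a.atomOcc, a.atomOcc]

end Siam

namespace Siam
open Formula Struct

variable {R : Struct}

def SyAll (T T' : SState R) (n : R.Node) : Prop :=
  R.sort n = .sync → ∀ v' w', Nx R n v' w' → ∃ q', T.f q' = some v' ∧ T'.f q' = some w'

def Mv (T T' : SState R) (q : R.Edge × Addr) : Prop :=
  ∃ n v w, T.f q = some v ∧ T'.f q = some w ∧ Nx R n v w ∧ R.Active T n ∧ SyAll T T' n

def Sp (T T' : SState R) (q : R.Edge × Addr) : Prop :=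
  T.f q = none ∧ R.OnePos q ∧ T'.f q = some (.atom q.1 q.2)

theorem single {T T' : SState R} {n v w} {p : R.Edge × Addr} (h1 : T.f p = some v)
    (h2 : T'.f p = some w) (h3 : Nx R n v w) (h4 : R.Active T n) (h5 : R.sort n ≠ .sync)
    (h6 : ∀ q, q ≠ p → T'.f q = T.f q) :
    (∀ q, T'.f q = T.f q ∨ Mv T T' q ∨ Sp T T' q) ∧ ∃ q, Mv T T' q ∨ Sp T T' q := by
  have hm : Mv T T' p := ⟨n, v, w, h1, h2, h3, h4, fun h => absurd h h5⟩
  refine ⟨fun q => ?_, p, Or.inl hm⟩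
  by_cases hq : q = p
  · subst hq; exact Or.inr (Or.inl hm)
  · exact Or.inl (h6 q hq)

theorem stepL (h : Fx R) {T T' : SState R} (hs : STrans R T T') :
    (∀ q, T'.f q = T.f q ∨ Mv T T' q ∨ Sp T T' q) ∧ ∃ q, Mv T T' q ∨ Sp T T' q := by
  cases hs with
  | axUp a b c d e f g i j => exact single a j (.ax b c d f g) e (by rw [d]; simp) i
  | cutDown a b c d e f g i j => exact single a j (.cut b c d f g) e (by rw [d]; simp) i
  | multDown a b c d e f g i j =>
    exact single a j (.multDown b c d f g) e (by rcases d with d | d <;> rw [d] <;> simp) i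
  | multUp a b c d e f g i j =>
    exact single a j (.multUp b c d f g) e (by rcases d with d | d <;> rw [d] <;> simp) i
  | lockTok a b c d e f g => exact single a g (.lock b c d) e (by rw [d]; simp) f
  | @oneSpawn n e a b c d f g =>
    have hp : Sp T T' (e, []) := ⟨d, ⟨by rw [c]; exact a, rfl⟩, g⟩
    refine ⟨fun q => ?_, _, Or.inr hp⟩
    by_cases hq : q = (e, [])
    · subst hq; exact Or.inr (Or.inr hp)
    · exact Or.inl (f q hq)
  | @syncCross l a b c d e f g =>
    have hS : SyAll T T' l := by
      intro _ v w hx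
      cases hx with
      | ax a' b' c' d' e' => rw [a] at c'; cases c'
      | cut a' b' c' d' e' => rw [a] at c'; cases c'
      | multDown a' b' c' d' e' => rw [a] at c'; simp at c'
      | multUp a' b' c' d' e' => rw [a] at c'; simp at c'
      | lock a' b' c' => rw [a] at c'; cases c'
      | syncDown a' b' c' d' e' =>
        have hp := pos_positive (h.sy_pol c' (Or.inr b')) a'
        obtain ⟨q, hq⟩ := d _ (Or.inl ⟨b', hp⟩) _ a'.atomOcc
        obtain ⟨e2, h1, h2, h3⟩ := e q _ _ hq b' hp
        obtain rfl := h.sy_injd c' b' d' h1 e' h2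
        exact ⟨q, hq, h3⟩
      | syncUp a' b' c' d' e' =>
        have hp := neg_negative (h.sy_pol c' (Or.inl b')) a'
        obtain ⟨q, hq⟩ := d _ (Or.inr ⟨b', hp⟩) _ a'.atomOcc
        obtain ⟨e2, h1, h2, h3⟩ := f q _ _ hq b' hp
        obtain rfl := h.sy_inju c' d' h1 b' e'.symm h2.symm
        exact ⟨q, hq, h3⟩
    have h1 : ∀ q e m, T.f q = some (.atom e m) → R.tgt e = some l ∧ (R.typ e).Positive →
        Mv T T' q := by
      intro q e0 m hq hh
      obtain ⟨e2, h1, h2, h3⟩ := e q _ _ hq hh.1 hh.2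
      exact ⟨l, _, _, hq, h3, .syncDown (positive_pos hh.2 (T.val_valid _ _ hq)) hh.1 a h1 h2, b, hS⟩
    have h2 : ∀ q e m, T.f q = some (.atom e m) → R.src e = l ∧ (R.typ e).Negative →
        Mv T T' q := by
      intro q e0 m hq hh
      obtain ⟨e2, h1, h2, h3⟩ := f q _ _ hq hh.1 hh.2
      exact ⟨l, _, _, hq, h3, .syncUp (negative_neg hh.2 (T.val_valid _ _ hq)) hh.1 a h1 h2, b, hS⟩
    constructor
    · intro q
      by_cases hq : ∃ e m, T.f q = some (.atom e m) ∧ ((R.tgt e = some l ∧ (R.typ e).Positive) ∨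
        (R.src e = l ∧ (R.typ e).Negative))
      · obtain ⟨e0, m, hq, hh | hh⟩ := hq
        · exact Or.inr (Or.inl (h1 _ _ _ hq hh))
        · exact Or.inr (Or.inl (h2 _ _ _ hq hh))
      · refine Or.inl (g q fun e0 m he => ⟨fun hh => hq ⟨e0, m, he, Or.inl hh⟩,
          fun hh => hq ⟨e0, m, he, Or.inr hh⟩⟩)
    · obtain ⟨q, e0, m, hq, hh | hh⟩ := c
      · exact ⟨q, Or.inl (h1 _ _ _ hq hh)⟩
      · exact ⟨q, Or.inl (h2 _ _ _ hq hh)⟩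

def Bd (R : Struct) : PosVal R → Prop
  | .atom e m => sub (R.typ e) m ≠ none
  | .lock _ i => i = 0

theorem bd_finite (R : Struct) : {v | Bd R v}.Finite := by
  have h1 : {p : R.Edge × Addr | sub (R.typ p.1) p.2 ≠ none}.Finite := by
    have : {p : R.Edge × Addr | sub (R.typ p.1) p.2 ≠ none} =
        ⋃ e : R.Edge, (fun m => (e, m)) '' {m | sub (R.typ e) m ≠ none} := by
      ext ⟨e, m⟩; simp
    rw [this]
    exact Set.finite_iUnion fun e => (sub_finite _).image _
  refine ((h1.image fun p => PosVal.atom p.1 p.2).union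
    (Set.finite_range fun e : R.Edge => PosVal.lock e 0)).subset ?_
  intro v hv
  cases v with
  | atom e m => exact Or.inl ⟨(e, m), hv, rfl⟩
  | lock e i => cases (hv : i = 0); exact Or.inr ⟨e, rfl⟩

theorem bd_atom {e : R.Edge} {m} (h : AtomOcc (R.typ e) m) : Bd R (.atom e m) := (at_z h).2.1

theorem out_bd {n v} (ho : OutP R n v) : Bd R v := by
  cases v with
  | lock e i => exact ho.2.1
  | atom e m => rcases ho with ⟨a, _⟩ | ⟨a, _⟩; exacts [bd_atom a.atomOcc, bd_atom a.atomOcc]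

def NxR (R : Struct) (v w : PosVal R) : Prop := ∃ n, Nx R n v w

structure Inv (T : SState R) (H : Set (PosVal R)) : Prop where
  i1 : ∀ {q v}, T.f q = some v → v ∈ H
  i2 : ∀ {v}, v ∈ H → (∃ q, T.f q = some v) ∨ ∃ n w, w ∈ H ∧ Nx R n v w
  i3 : ∀ {q q' v}, T.f q = some v → T.f q' = some v → q = q'
  i4 : ∀ {q v n w}, T.f q = some v → Nx R n v w → w ∉ H
  i5 : ∀ {n v w}, Nx R n v w → w ∈ H → v ∈ H
  i6 : ∀ {b}, R.Unlocked T b → R.Active T b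
  i7 : ∀ {q v}, T.f q = some v → Relation.ReflTransGen (NxR R) (.atom q.1 q.2) v
  i8 : ∀ {l v w v' w'}, R.sort l = .sync → Nx R l v w → Nx R l v' w' → w ∈ H → w' ∈ H
  i9 : ∀ {q}, R.OnePos q → PosVal.atom q.1 q.2 ∈ H → T.f q ≠ none
  i10 : ∀ {q}, R.InitPos q → PosVal.atom q.1 q.2 ∈ H
  i11 : ∀ {v}, v ∈ H → Bd R v

theorem inv_step (h : Fx R) {T T' : SState R} {H} (hI : Inv T H) (hs : STrans R T T') :
    ∃ H', Inv T' H' ∧ H ⊂ H' := by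
  obtain ⟨hq, q0, hq0⟩ := stepL h hs
  have t : ∀ {q x}, T'.f q = some x → (T.f q = some x ∧ x ∈ H) ∨
      (x ∉ H ∧ ∃ n v, T.f q = some v ∧ Nx R n v x ∧ R.Active T n ∧ SyAll T T' n) ∨
      (x ∉ H ∧ T.f q = none ∧ R.OnePos q ∧ x = .atom q.1 q.2) := by
    intro q x hx
    rcases hq q with h1 | ⟨n, v, w, h1, h2, h3, h4, h5⟩ | ⟨h1, h2, h3⟩
    · rw [h1] at hx; exact Or.inl ⟨hx, hI.i1 hx⟩
    · rw [h2] at hx; cases hx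
      exact Or.inr (Or.inl ⟨hI.i4 h1 h3, n, v, h1, h3, h4, h5⟩)
    · rw [h3] at hx; cases hx
      exact Or.inr (Or.inr ⟨fun hm => hI.i9 h2 hm h1, h1, h2, rfl⟩)
  have key : ∀ {n v w}, Nx R n v w → (w ∈ H ∨ ∃ q, T'.f q = some w) → w ∈ H ∨
      ∃ q, T.f q = some v ∧ T'.f q = some w ∧ SyAll T T' n := by
    rintro n v w hx (hw | ⟨q, hw⟩)
    · exact Or.inl hw
    · rcases t hw with h1 | ⟨h1, n', v', h2, h3, h4, h5⟩ | ⟨h1, h2, h3, h4⟩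
      · exact Or.inl h1.2
      · obtain ⟨rfl, rfl⟩ := nx_cofun h hx h3
        exact Or.inr ⟨q, h2, hw, h5⟩
      · subst h4; exact (nx_not_one h h3 hx).elim
  have umono : ∀ {b}, R.Unlocked T b → R.Unlocked T' b := by
    rintro b ⟨q, e, i, h1, h2⟩
    rcases hq q with h3 | ⟨n, v, w, h3, h4, h5, _⟩ | ⟨h3, _⟩
    · exact ⟨q, e, i, by rw [h3]; exact h1, h2⟩
    · rw [h1] at h3; cases h3; exact (nx_in h h5).elim
    · rw [h1] at h3; cases h3
  have amono : ∀ {n}, R.Active T n → R.Active T' n := fun ha b hb => umono (ha b hb)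
  refine ⟨{x | x ∈ H ∨ ∃ q, T'.f q = some x}, ?_, ?_⟩
  · constructor
    · exact fun {q v} hv => Or.inr ⟨q, hv⟩
    · rintro v (hv | hv)
      · rcases hI.i2 hv with ⟨q, h1⟩ | ⟨n, w, h1, h2⟩
        · rcases hq q with h3 | ⟨n, v, w, h3, h4, h5, _⟩ | ⟨h3, _⟩
          · exact Or.inl ⟨q, by rw [h3]; exact h1⟩
          · rw [h1] at h3; cases h3
            exact Or.inr ⟨n, w, Or.inr ⟨q, h4⟩, h5⟩
          · rw [h1] at h3; cases h3
        · exact Or.inr ⟨n, w, Or.inl h1, h2⟩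
      · exact Or.inl hv
    · intro q q' v h1 h2
      rcases t h1 with a | ⟨a, n, u, b, c, d⟩ | ⟨a, b, c, d⟩ <;>
      rcases t h2 with a' | ⟨a', n', u', b', c', d'⟩ | ⟨a', b', c', d'⟩
      · exact hI.i3 a.1 a'.1
      · exact absurd a.2 a'
      · exact absurd a.2 a'
      · exact absurd a'.2 a
      · obtain ⟨rfl, rfl⟩ := nx_cofun h c c'
        exact hI.i3 b b'
      · subst d'; exact (nx_not_one h c' c).elim
      · exact absurd a'.2 a
      · subst d; exact (nx_not_one h c c').elim
      · rw [d] at d'; injection d' with d1 d2; ext1 <;> assumption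
    · intro q v n w h1 hx hw
      have hvH : v ∈ H := by
        rcases key hx hw with h2 | ⟨q', h2, _⟩
        · exact hI.i5 hx h2
        · exact hI.i1 h2
      have hu : T.f q = some v := by
        rcases t h1 with a | a | a
        · exact a.1
        · exact absurd hvH a.1
        · exact absurd hvH a.1
      rcases key hx hw with h2 | ⟨q', h2, h3, _⟩
      · exact hI.i4 hu hx h2
      · obtain rfl := hI.i3 hu h2
        rw [h1] at h3; cases h3
        exact hI.i4 hu hx hvH
    · intro n v w hx hw
      rcases key hx hw with h2 | ⟨q', h2, _⟩
      · exact Or.inl (hI.i5 hx h2)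
      · exact Or.inl (hI.i1 h2)
    · rintro b ⟨q, e, i, h1, h2⟩
      rcases t h1 with a | ⟨a, n, v, c, d, ha, _⟩ | ⟨_, _, _, d⟩
      · exact amono (hI.i6 ⟨q, e, i, a.1, h2⟩)
      · have := (nx_out h d).1
        rw [h2] at this; subst this
        exact amono ha
      · cases d
    · intro q x h1
      rcases t h1 with a | ⟨a, n, v, c, d, _⟩ | ⟨_, _, _, d⟩
      · exact hI.i7 a.1
      · exact (hI.i7 c).tail ⟨n, d⟩
      · subst d; exact .refl
    · intro l v w v' w' hl hx hx' hw
      rcases key hx hw with h2 | ⟨q', _, _, h2⟩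
      · exact Or.inl (hI.i8 hl hx hx' h2)
      · obtain ⟨q'', _, h3⟩ := h2 hl _ _ hx'
        exact Or.inr ⟨q'', h3⟩
    · intro q ho hm
      have : T.f q ≠ none → T'.f q ≠ none := by
        intro hn
        rcases hq q with h3 | ⟨n, v, w, h3, h4, h5, _⟩ | ⟨h3, _⟩
        · rw [h3]; exact hn
        · rw [h4]; simp
        · exact absurd h3 hn
      rcases hm with hm | ⟨q', hm⟩
      · exact this (hI.i9 ho hm)
      · rcases t hm with a | ⟨a, n, v, c, d, _⟩ | ⟨_, _, _, d⟩
        · exact this (hI.i9 ho a.2)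
        · exact (nx_not_one h ho d).elim
        · have : q = q' := by injection d with d1 d2; ext1 <;> assumption
          rw [this, hm]; simp
    · exact fun hi => Or.inl (hI.i10 hi)
    · rintro v (hv | ⟨q, hv⟩)
      · exact hI.i11 hv
      · rcases t hv with a | ⟨a, n, v, c, d, _⟩ | ⟨_, _, _, d⟩
        · exact hI.i11 a.2
        · exact out_bd (nx_out h d)
        · subst d; exact bd_atom (T'.val_valid _ _ hv)
  · refine ⟨fun x hx => Or.inl hx, fun hsub => ?_⟩
    rcases hq0 with ⟨n, v, w, h3, h4, h5, _⟩ | ⟨h1, h2, h3⟩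
    · exact hI.i4 h3 h5 (hsub (Or.inr ⟨q0, h4⟩))
    · exact hI.i9 h2 (hsub (Or.inr ⟨q0, h3⟩)) h1

theorem inv_init (h : Fx R) : Inv (initState R) {x | ∃ q, (initState R).f q = some x} := by
  have t : ∀ {q x}, (initState R).f q = some x → R.InitPos q ∧ x = .atom q.1 q.2 := by
    intro q x hx
    by_cases hq : R.InitPos q
    · simp [initState, hq] at hx; exact ⟨hq, hx.symm⟩
    · simp [initState, hq] at hx
  have t' : ∀ {q}, R.InitPos q → (initState R).f q = some (.atom q.1 q.2) := by
    intro q hq; simp [initState, hq]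
  have no : ∀ {n v w}, Nx R n v w → ¬ ∃ q, (initState R).f q = some w := by
    rintro n v w hx ⟨q, hq⟩
    obtain ⟨h1, rfl⟩ := t hq
    rcases nx_out h hx with ⟨a, b⟩ | ⟨a, b⟩
    · exact pos_neg a h1.2
    · rw [h1.1] at b; cases b
  constructor
  · exact fun {q v} hv => ⟨q, hv⟩
  · exact fun hv => Or.inl hv
  · intro q q' v h1 h2
    have h3 := (t h1).2
    rw [(t h2).2] at h3
    injection h3 with d1 d2; ext1
    · exact d1.symm
    · exact d2.symm
  · exact fun _ hx => no hx
  · exact fun hx hw => (no hx hw).elim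
  · rintro b ⟨q, e, i, h1, h2⟩
    cases (t h1).2
  · intro q v hv
    rw [(t hv).2]
  · exact fun _ hx _ hw => (no hx hw).elim
  · rintro q ho ⟨q', hq⟩
    have h3 := (t hq).2
    have : q = q' := by injection h3 with d1 d2; ext1 <;> assumption
    rw [this, hq]; simp
  · exact fun {q} hi => ⟨q, t' hi⟩
  · rintro v ⟨q, hq⟩
    obtain ⟨h1, rfl⟩ := t hq
    exact bd_atom h1.2.atomOcc

theorem inv_reach (h : Fx R) {T : SState R} (hr : Relation.ReflTransGen (STrans R) (initState R) T) :
    ∃ H, Inv T H := by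
  induction hr with
  | refl => exact ⟨_, inv_init h⟩
  | tail _ hs ih =>
    obtain ⟨H, hI⟩ := ih
    obtain ⟨H', hI', _⟩ := inv_step h hI hs
    exact ⟨H', hI'⟩

theorem term (h : Fx R) (g : ℕ → SState R) (h0 : g 0 = initState R) :
    ¬ ∀ n : ℕ, STrans R (g n) (g (n + 1)) := by
  intro hg
  have key : ∀ n, ∃ H, Inv (g n) H ∧ n ≤ H.ncard := by
    intro n
    induction n with
    | zero => rw [h0]; exact ⟨_, inv_init h, Nat.zero_le _⟩
    | succ n ih =>
      obtain ⟨H, hI, hn⟩ := ih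
      obtain ⟨H', hI', hlt⟩ := inv_step h hI (hg n)
      refine ⟨H', hI', ?_⟩
      have := Set.ncard_lt_ncard hlt ((bd_finite R).subset fun x hx => hI'.i11 hx)
      omega
  obtain ⟨H, hI, hn⟩ := key ({v | Bd R v}.ncard + 1)
  have hsub : H ⊆ {v | Bd R v} := fun x hx => hI.i11 hx
  have := Set.ncard_le_ncard hsub (bd_finite R)
  omega

end Siam

namespace Siam
open Formula Struct

variable {R : Struct}

theorem upd_ex (T : SState R) (q : R.Edge × Addr) (w : PosVal R) (hw : R.ValidVal w)
    (hq : R.InitPos q ∨ R.OnePos q) :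
    ∃ T' : SState R, (∀ q', q' ≠ q → T'.f q' = T.f q') ∧ T'.f q = some w := by
  refine ⟨⟨Function.update T.f q (some w), ?_, ?_, ?_⟩, ?_, ?_⟩
  · intro p hp
    by_cases h : p = q
    · subst h; exact hq
    · rw [Function.update_of_ne h] at hp; exact T.dom_subset p hp
  · intro p hp
    by_cases h : p = q
    · subst h; simp
    · rw [Function.update_of_ne h]; exact T.init_total p hp
  · intro p v hv
    by_cases h : p = q
    · subst h; simp at hv; subst hv; exact hw
    · rw [Function.update_of_ne h] at hv; exact T.val_valid p v hv
  · exact fun q' hq' => Function.update_of_ne hq' _ _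
  · simp

theorem prog1 (h : Fx R) {T : SState R} {q v w n} (hq : T.f q = some v) (hx : Nx R n v w)
    (ha : R.Active T n) (hs : R.sort n ≠ .sync) : ∃ T', STrans R T T' := by
  obtain ⟨T', h1, h2⟩ := upd_ex T q w (out_valid (nx_out h hx)) (T.dom_subset q (by rw [hq]; simp))
  refine ⟨T', ?_⟩
  cases hx with
  | ax a b c d e => exact .axUp hq a b c ha d e h1 h2
  | cut a b c d e => exact .cutDown hq a b c ha d e h1 h2
  | multDown a b c d e => exact .multDown hq a b c ha d e h1 h2
  | multUp a b c d e => exact .multUp hq a b c ha d e h1 h2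
  | lock a b c => exact .lockTok hq a b c ha h1 h2
  | syncDown a b c d e => exact absurd c hs
  | syncUp a b c d e => exact absurd c hs

theorem prog2 (h : Fx R) {T : SState R} {n e} (hs : R.sort n = .one) (he : R.src e = n)
    (ha : R.Active T n) (hn : T.f (e, []) = none) : ∃ T', STrans R T T' := by
  have hs' : R.sort (R.src e) = .one := by rw [he]; exact hs
  obtain ⟨T', h1, h2⟩ := upd_ex T (e, []) (.atom e []) (show AtomOcc _ _ from
    ⟨.one, by rw [h.one_typ hs']; rfl, trivial⟩) (Or.inr ⟨hs', rfl⟩)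
  exact ⟨T', .oneSpawn hs ha he hn h1 h2⟩

open Classical in
theorem prog3 (h : Fx R) {T : SState R} {l q0 v0 w0} (hs : R.sort l = .sync) (ha : R.Active T l)
    (h0 : T.f q0 = some v0) (hx0 : Nx R l v0 w0)
    (hall : ∀ v w, Nx R l v w → ∃ q, T.f q = some v) : ∃ T', STrans R T T' := by
  let P : R.Edge × Addr → PosVal R → Prop := fun q w => ∃ v, T.f q = some v ∧ Nx R l v w
  let f : R.Edge × Addr → Option (PosVal R) := fun q =>
    if hp : ∃ w, P q w then some hp.choose else T.f q
  have f1 : ∀ q v w, T.f q = some v → Nx R l v w → f q = some w := by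
    intro q v w hq hx
    have hp : ∃ w, P q w := ⟨w, v, hq, hx⟩
    have : f q = some hp.choose := dif_pos hp
    rw [this]
    obtain ⟨v', h1, h2⟩ := hp.choose_spec
    rw [hq] at h1; cases h1
    rw [nx_fun h h2 hx]
  have f2 : ∀ q, (∀ v w, T.f q = some v → ¬ Nx R l v w) → f q = T.f q := by
    intro q hq
    exact dif_neg fun ⟨w, v, h1, h2⟩ => hq v w h1 h2
  have f3 : ∀ q, (∃ v w, T.f q = some v ∧ Nx R l v w ∧ f q = some w) ∨ f q = T.f q := by
    intro q
    by_cases hp : ∃ v w, T.f q = some v ∧ Nx R l v w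
    · obtain ⟨v, w, h1, h2⟩ := hp
      exact Or.inl ⟨v, w, h1, h2, f1 q v w h1 h2⟩
    · exact Or.inr (f2 q fun v w h1 h2 => hp ⟨v, w, h1, h2⟩)
  let T' : SState R := ⟨f, by
    intro p hp
    rcases f3 p with ⟨v, w, h1, _⟩ | h1
    · exact T.dom_subset p (by rw [h1]; simp)
    · rw [h1] at hp; exact T.dom_subset p hp, by
    intro p hp
    rcases f3 p with ⟨v, w, _, _, h1⟩ | h1
    · rw [h1]; simp
    · rw [h1]; exact T.init_total p hp, by
    intro p x hx
    rcases f3 p with ⟨v, w, _, h2, h1⟩ | h1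
    · rw [h1] at hx; cases hx; exact out_valid (nx_out h h2)
    · rw [h1] at hx; exact T.val_valid p x hx⟩
  have inn : ∀ {v w}, Nx R l v w → ∃ e m, v = .atom e m ∧ ((R.tgt e = some l ∧ (R.typ e).Positive) ∨
         (R.src e = l ∧ (R.typ e).Negative)) := by
    intro v w hx
    have := nx_in h hx
    cases v with
    | lock => exact this.elim
    | atom e m =>
      refine ⟨e, m, rfl, ?_⟩
      rcases this with ⟨a, b⟩ | ⟨a, b⟩
      · exact Or.inl ⟨b, pos_positive (h.sy_pol hs (Or.inr b)) a⟩
      · exact Or.inr ⟨b, neg_negative (h.sy_pol hs (Or.inl b)) a⟩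
  have d1 : ∀ {e m}, AtomOcc (R.typ e) m → R.tgt e = some l → (R.typ e).Positive →
      ∃ e', R.src e' = l ∧ R.cIdx e' = R.pIdx e ∧ Nx R l (.atom e m) (.atom e' m) := by
    intro e m ho ht hp
    obtain ⟨e', h1, h2⟩ := h.sy_down hs ht
    exact ⟨e', h1, h2, .syncDown (positive_pos hp ho) ht hs h1 h2⟩
  have d2 : ∀ {e m}, AtomOcc (R.typ e) m → R.src e = l → (R.typ e).Negative →
      ∃ e', R.tgt e' = some l ∧ R.pIdx e' = R.cIdx e ∧ Nx R l (.atom e m) (.atom e' m) := by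
    intro e m ho ht hp
    obtain ⟨e', h1, h2⟩ := h.sy_up hs ht
    exact ⟨e', h1, h2, .syncUp (negative_neg hp ho) ht hs h1 h2⟩
  refine ⟨T', .syncCross hs ha ?_ ?_ ?_ ?_ ?_⟩
  · obtain ⟨e, m, rfl, hh⟩ := inn hx0
    exact ⟨q0, e, m, h0, hh⟩
  · rintro e (⟨a, b⟩ | ⟨a, b⟩) m ho
    · obtain ⟨e', _, _, h3⟩ := d1 ho a b
      exact hall _ _ h3
    · obtain ⟨e', _, _, h3⟩ := d2 ho a b
      exact hall _ _ h3
  · intro q e m hq a b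
    obtain ⟨e', h1, h2, h3⟩ := d1 (T.val_valid _ _ hq) a b
    exact ⟨e', h1, h2, f1 _ _ _ hq h3⟩
  · intro q e m hq a b
    obtain ⟨e', h1, h2, h3⟩ := d2 (T.val_valid _ _ hq) a b
    exact ⟨e', h1, h2, f1 _ _ _ hq h3⟩
  · intro q hq
    refine f2 q fun v w hv hx => ?_
    obtain ⟨e, m, rfl, hh⟩ := inn hx
    obtain ⟨n1, n2⟩ := hq e m hv
    rcases hh with hh | hh
    · exact n1 hh
    · exact n2 hh

end Siam

namespace Siam
open Formula Struct

variable {R : Struct}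

theorem at_map_dual {A B : Formula} {m m'} (h : sub A m = (sub B m').map dual) (hB : AtomOcc B m') :
    AtomOcc A m ∧ pol (sub A m) = !pol (sub B m') := by
  obtain ⟨a, h1, h2⟩ := hB
  rw [h1] at h
  refine ⟨⟨a.dual, h, ?_⟩, ?_⟩
  · cases a <;> first | trivial | exact h2
  · rw [h, h1]; cases a <;> first | rfl | exact h2.elim

theorem jn_at (h : Fx R) {n s m e s' m'} (h1 : Jn R n s m e s' m') (ho : AtomOcc (R.typ e) m') :
    AtomOcc (FF R (.inr n)) m ∧ (s' = !pol (sub (R.typ e) m') ↔ s = pol (sub (FF R (.inr n)) m)) := by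
  have hs := jn_sub h h1
  by_cases hh : s = s'
  · rw [if_pos hh] at hs
    obtain ⟨h2, h3⟩ := at_map_dual hs ho
    refine ⟨h2, ?_⟩
    rw [h3, hh]
  · rw [if_neg hh] at hs
    refine ⟨?_, ?_⟩
    · unfold AtomOcc; rw [hs]; exact ho
    · rw [hs]; cases s <;> cases s' <;> simp_all

theorem out_node (h : Fx R) {n e m} (ho : OutP R n (.atom e m)) (h1 : R.sort n ≠ .sync) :
    ∃ m0 s', Jn R n (pol (sub (FF R (.inr n)) m0)) m0 e s' m ∧ AtomOcc (FF R (.inr n)) m0 := by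
  have hat : AtomOcc (R.typ e) m := out_valid ho
  suffices hh : ∃ s m0, Jn R n s m0 e (!pol (sub (R.typ e) m)) m by
    obtain ⟨s, m0, hj⟩ := hh
    obtain ⟨h2, h3⟩ := jn_at h hj hat
    rw [h3.1 rfl] at hj
    exact ⟨m0, _, hj, h2⟩
  rcases ho with ⟨a, b⟩ | ⟨a, b⟩
  · rw [pos_pol a]
    cases hs : R.sort n
    · by_cases hr : rep R n = some e
      · exact ⟨true, m, Or.inl ⟨hs, b, rfl, rfl, Or.inl ⟨hr, rfl⟩⟩⟩
      · exact ⟨false, m, Or.inl ⟨hs, b, rfl, rfl, Or.inr ⟨hr, rfl⟩⟩⟩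
    · exact absurd b (h.cut_concl hs)
    · exact ⟨true, m, Or.inr (Or.inr (Or.inl ⟨Or.inl hs, b, rfl, rfl, rfl⟩))⟩
    · exact ⟨true, m, Or.inr (Or.inr (Or.inl ⟨Or.inr (Or.inl hs), b, rfl, rfl, rfl⟩))⟩
    · exact ⟨true, m, Or.inr (Or.inr (Or.inl ⟨Or.inr (Or.inr hs), b, rfl, rfl, rfl⟩))⟩
    · subst b
      obtain ⟨x, hx, hx'⟩ := a
      rw [h.bot_typ hs] at hx
      cases m <;> simp [sub] at hx
      subst hx; simp at hx'
    · exact absurd hs h1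
  · rw [neg_pol a]
    cases hs : R.sort n
    · exact absurd b (h.ax_prem hs)
    · by_cases hr : rep R n = some e
      · exact ⟨false, m, Or.inr (Or.inl ⟨hs, b, rfl, rfl, Or.inl ⟨hr, rfl⟩⟩)⟩
      · exact ⟨true, m, Or.inr (Or.inl ⟨hs, b, rfl, rfl, Or.inr ⟨hr, rfl⟩⟩)⟩
    · obtain ⟨j, hj⟩ := h.m_idx (Or.inl hs) b
      exact ⟨false, j :: m, Or.inr (Or.inr (Or.inr ⟨Or.inl hs, b, rfl, rfl, j, hj, rfl⟩))⟩
    · obtain ⟨j, hj⟩ := h.m_idx (Or.inr hs) b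
      exact ⟨false, j :: m, Or.inr (Or.inr (Or.inr ⟨Or.inr hs, b, rfl, rfl, j, hj, rfl⟩))⟩
    · exact absurd b (h.one_prem hs)
    · exact absurd b (h.bot_prem hs)
    · exact absurd hs h1

theorem jn_back (h : Fx R) {n e1 m1 e m0 s m s'} (hx : Nx R n (.atom e1 m1) (.atom e m0))
    (hs : R.sort n ≠ .sync) (hj : Jn R n s m e s' m0) (hs' : s' = !pol (sub (R.typ e) m0)) :
    ∃ s'', Jn R n s'' m e1 (pol (sub (R.typ e1) m1)) m1 := by
  have ho := nx_out h hx
  cases hx with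
  | ax a b c d e0 =>
    rw [neg_pol a]
    have : m = m1 := by
      rcases hj with ⟨_, _, hm, _⟩ | ⟨h1, _⟩ | ⟨h1, _⟩ | ⟨h1, _⟩
      · exact hm
      · rw [c] at h1; cases h1
      · rw [c] at h1; simp at h1
      · rw [c] at h1; simp at h1
    by_cases hr : rep R n = some e1
    · exact ⟨true, Or.inl ⟨c, b, this, rfl, Or.inl ⟨hr, rfl⟩⟩⟩
    · exact ⟨false, Or.inl ⟨c, b, this, rfl, Or.inr ⟨hr, rfl⟩⟩⟩
  | cut a b c d e0 =>
    rw [pos_pol a]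
    have : m = m1 := by
      rcases hj with ⟨h1, _⟩ | ⟨_, _, hm, _⟩ | ⟨h1, _⟩ | ⟨h1, _⟩
      · rw [c] at h1; cases h1
      · exact hm
      · rw [c] at h1; simp at h1
      · rw [c] at h1; simp at h1
    by_cases hr : rep R n = some e1
    · exact ⟨false, Or.inr (Or.inl ⟨c, b, this, rfl, Or.inl ⟨hr, rfl⟩⟩)⟩
    · exact ⟨true, Or.inr (Or.inl ⟨c, b, this, rfl, Or.inr ⟨hr, rfl⟩⟩)⟩
  | @multDown _ _ bb _ a b c d e0 =>
    rw [pos_pol a]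
    have hp : PosOcc (R.typ e) (bb :: m1) := (occ_eq (h.m_sub c b d e0).symm).2 a
    rw [pos_pol hp] at hs'
    have : m = bb :: m1 := by
      rcases hj with ⟨h1, _⟩ | ⟨h1, _⟩ | ⟨_, _, hm, _⟩ | ⟨_, _, _, h1, _⟩
      · rw [h1] at c; simp at c
      · rw [h1] at c; simp at c
      · exact hm
      · rw [h1] at hs'; simp at hs'
    exact ⟨false, Or.inr (Or.inr (Or.inr ⟨c, b, rfl, rfl, bb, e0, this⟩))⟩
  | @multUp _ _ bb _ a b c d e0 =>
    rw [neg_pol a]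
    have hp : NegOcc (R.typ e) m0 := (occ_eq (h.m_sub c d b e0)).1 a
    rw [neg_pol hp] at hs'
    have : m = bb :: m0 := by
      rcases hj with ⟨h1, _⟩ | ⟨h1, _⟩ | ⟨_, _, _, _, h1⟩ | ⟨_, _, _, _, b', h1, h2⟩
      · rw [h1] at c; simp at c
      · rw [h1] at c; simp at c
      · rw [h1] at hs'; simp at hs'
      · rw [h2, bn_inj (e0.symm.trans h1)]
    refine ⟨true, Or.inr (Or.inr (Or.inl ⟨?_, b, this, rfl, rfl⟩))⟩
    rcases c with c | c
    · exact Or.inl c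
    · exact Or.inr (Or.inl c)
  | syncDown a b c d e => exact absurd c hs
  | syncUp a b c d e => exact absurd c hs

def UU (T : SState R) (H : Set (PosVal R)) : Vt R → Prop
  | .inl (.inl e, m) => AtomOcc (R.typ e) m ∧ PosVal.atom e m ∉ H
  | .inl (.inr n, m) => AtomOcc (FF R (.inr n)) m ∧ ∃ e s' m0,
      Jn R n (pol (sub (FF R (.inr n)) m)) m e s' m0 ∧ AtomOcc (R.typ e) m0 ∧ PosVal.atom e m0 ∉ H
  | .inr l => (R.sort l = .sync ∧ ∃ e m, R.OutEdgeOf l e ∧ AtomOcc (R.typ e) m ∧ PosVal.atom e m ∉ H) ∨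
      (R.sort l = .bot ∧ ¬ R.Unlocked T l)

theorem inactive (h : Fx R) {T : SState R} {H} (hI : Inv T H) {n} (ha : ¬ R.Active T n) :
    ∃ b, R.box n = some b ∧ R.sort b = .bot ∧ ¬ R.Unlocked T b := by
  cases hb : R.box n with
  | none => exact (ha fun b hb' => by rw [h.bx_none hb] at hb'; simp at hb').elim
  | some b =>
    refine ⟨b, rfl, h.bx_bot (box_mem h hb), fun hu => ha fun c hc => ?_⟩
    rw [(h.bx_some hb).2, Finset.mem_insert] at hc
    rcases hc with rfl | hc
    · exact hu
    · exact hI.i6 hu c hc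

theorem i5s {T : SState R} {H} (hI : Inv T H) {v w} (hr : Relation.ReflTransGen (NxR R) v w)
    (hw : w ∈ H) : v ∈ H := by
  induction hr with
  | refl => exact hw
  | tail _ h1 ih => obtain ⟨n, h1⟩ := h1; exact ih (hI.i5 h1 hw)

/-- a value in `H` whose successor is not in `H` carries a token -/
theorem tok (h : Fx R) {T : SState R} {H} (hI : Inv T H) {n v w} (hx : Nx R n v w) (hw : w ∉ H)
    (hv : v ∈ H) : ∃ q, T.f q = some v := by
  rcases hI.i2 hv with h1 | ⟨n', w', h1, h2⟩
  · exact h1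
  · rw [nx_fun h h2 hx] at h1; exact absurd h1 hw

theorem nx_atom (h : Fx R) {n v w} (hx : Nx R n v w) : ∃ e m, v = .atom e m ∧ AtomOcc (R.typ e) m := by
  have := nx_in h hx
  cases v with
  | lock => exact this.elim
  | atom e m => exact ⟨e, m, rfl, by rcases this with ⟨a, _⟩ | ⟨a, _⟩; exacts [a.atomOcc, a.atomOcc]⟩

theorem stuck (h : Fx R) (hC : R.Correct) {T : SState R} {H} (hI : Inv T H)
    (hT : ∀ T', ¬ STrans R T T') : ∀ v, ¬ UU T H v := by
  have hns : ¬ ∃ T', STrans R T T' := fun ⟨T', h'⟩ => hT T' h'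
  have := no_dead h hC {v | UU T H v} ?_
  · intro v hv
    have : v ∈ (∅ : Set (Vt R)) := by rw [← this]; exact hv
    exact this
  rintro (⟨e | n, m⟩ | l) hv
  · obtain ⟨hat, hnH⟩ := hv
    refine ⟨hat, ?_⟩
    have : ∃ n, OutP R n (.atom e m) := by
      rcases at_or hat with hp | hp
      · exact ⟨_, Or.inl ⟨hp, rfl⟩⟩
      · cases ht : R.tgt e with
        | none => exact (hnH (hI.i10 (q := (e, m)) ⟨ht, hp⟩)).elim
        | some n => exact ⟨n, Or.inr ⟨hp, ht⟩⟩
    obtain ⟨n, ho⟩ := this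
    by_cases hs : R.sort n = .sync
    · have hoe : R.OutEdgeOf n e := by
        refine ⟨hs, ?_⟩
        rcases ho with ⟨a, b⟩ | ⟨a, b⟩
        · exact Or.inl ⟨b, pos_positive (h.sy_pol hs (Or.inl b)) a⟩
        · exact Or.inr ⟨b, neg_negative (h.sy_pol hs (Or.inr b)) a⟩
      exact ⟨.inr n, Or.inl ⟨hs, e, m, hoe, hat, hnH⟩, hoe⟩
    · obtain ⟨m0, s', h1, h2⟩ := out_node h ho hs
      exact ⟨.inl (.inr n, m0), ⟨h2, e, s', m, h1, hat, hnH⟩, s', h1⟩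
  · obtain ⟨hat, e, s', m0, hj, hat', hnH⟩ := hv
    refine ⟨hat, ?_⟩
    obtain ⟨hs1, hs2⟩ := jn_sort hj
    by_cases ha : R.Active T n
    · have hs' := (jn_at h hj hat').2.2 rfl
      have hinc := jn_inc hj
      have ho : OutP R n (.atom e m0) := by
        rcases at_or hat' with hp | hp
        · rw [pos_pol hp] at hs'; subst hs'; exact Or.inl ⟨hp, by simpa using hinc⟩
        · rw [neg_pol hp] at hs'; subst hs'; exact Or.inr ⟨hp, by simpa using hinc⟩
      rcases nx_coex h ho with ⟨v, hx⟩ | ⟨h1, h2, h3⟩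
      · have hvH : v ∉ H := by
          intro hv
          obtain ⟨q, hq⟩ := tok h hI hx hnH hv
          exact hns (prog1 h hq hx ha hs1)
        obtain ⟨e1, m1, rfl, hat1⟩ := nx_atom h hx
        obtain ⟨s'', hj'⟩ := jn_back h hx hs1 hj hs'
        exact ⟨.inl (.inl e1, m1), ⟨hat1, hvH⟩, s'', hj'⟩
      · subst h2
        exfalso
        cases hf : T.f (e, []) with
        | none => exact hns (prog2 h h1 h3 ha hf)
        | some v => exact hnH (i5s hI (hI.i7 hf) (hI.i1 hf))
    · obtain ⟨b, h1, h2, h3⟩ := inactive h hI ha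
      exact ⟨.inr b, Or.inr ⟨h2, h3⟩, h1, hs1, hs2⟩
  · refine ⟨trivial, ?_⟩
    rcases hv with ⟨hs, e, m, hoe, hat, hnH⟩ | ⟨hs, hu⟩
    · by_cases ha : R.Active T l
      · have ho : OutP R l (.atom e m) := by
          rcases hoe.2 with ⟨a, b⟩ | ⟨a, b⟩
          · exact Or.inl ⟨positive_pos b hat, a⟩
          · exact Or.inr ⟨negative_neg b hat, a⟩
        rcases nx_coex h ho with ⟨v0, hx0⟩ | ⟨h1, _⟩
        · have hall : ∀ v w, Nx R l v w → w ∉ H := fun v w hx hw => hnH (hI.i8 hs hx hx0 hw)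
          have : ∃ v w, Nx R l v w ∧ v ∉ H := by
            by_contra hcon
            push Not at hcon
            have ht : ∀ v w, Nx R l v w → ∃ q, T.f q = some v := fun v w hx =>
              tok h hI hx (hall v w hx) (hcon v w hx)
            obtain ⟨q, hq⟩ := ht _ _ hx0
            exact hns (prog3 h hs ha hq hx0 ht)
          obtain ⟨v, w, hx, hvH⟩ := this
          have hin := nx_in h hx
          obtain ⟨e1, m1, rfl, hat1⟩ := nx_atom h hx
          refine ⟨.inl (.inl e1, m1), ⟨hat1, hvH⟩, Or.inl ⟨hs, ?_⟩, ?_⟩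
          · rcases hin with ⟨_, b⟩ | ⟨_, b⟩
            · exact Or.inr b
            · exact Or.inl b
          · rintro ⟨_, ho1⟩
            rcases hin with ⟨a, b⟩ | ⟨a, b⟩ <;> rcases ho1 with ⟨c, d⟩ | ⟨c, d⟩
            · exact no_loop hC b c
            · exact pos_neg a (negative_neg d hat1)
            · exact pos_neg (positive_pos d hat1) a
            · exact no_loop hC c b
        · rw [hs] at h1; cases h1
      · obtain ⟨b, h1, h2, h3⟩ := inactive h hI ha
        exact ⟨.inr b, Or.inr ⟨h2, h3⟩, h1, Or.inl hs⟩
    · by_cases ha : R.Active T l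
      · obtain ⟨e, he⟩ := h.bot_concl hs
        have ht : R.typ e = .bot := h.bot_typ (by rw [he]; exact hs)
        have hx : Nx R l (.atom e []) (.lock e 0) := .lock ht he hs
        have hlH : PosVal.lock e 0 ∉ H := by
          intro hl
          rcases hI.i2 hl with ⟨q, hq⟩ | ⟨n, w, _, h2⟩
          · exact hu ⟨q, e, 0, hq, he⟩
          · exact nx_in h h2
        have haH : PosVal.atom e [] ∉ H := by
          intro hv
          obtain ⟨q, hq⟩ := tok h hI hx hlH hv
          exact hns (prog1 h hq hx ha (by rw [hs]; simp))
        refine ⟨.inl (.inl e, []), ⟨⟨.bot, by rw [ht]; rfl, trivial⟩, haH⟩, Or.inr ⟨hs, he⟩, ?_⟩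
        rintro ⟨h1, _⟩
        rw [hs] at h1; cases h1
      · obtain ⟨b, h1, h2, h3⟩ := inactive h hI ha
        exact ⟨.inr b, Or.inr ⟨h2, h3⟩, h1, Or.inr hs⟩

end Siam

namespace Siam
open Formula Struct

variable {R : Struct}

structure Ful (T : SState R) (H : Set (PosVal R)) : Prop where
  inv : Inv T H
  at_ : ∀ e m, AtomOcc (R.typ e) m → PosVal.atom e m ∈ H
  un : ∀ b, R.sort b = .bot → R.Unlocked T b

theorem ful (h : Fx R) (hC : R.Correct) {T : SState R}
    (hr : Relation.ReflTransGen (STrans R) (initState R) T) (hT : ∀ T', ¬ STrans R T T') :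
    ∃ H, Ful T H := by
  obtain ⟨H, hI⟩ := inv_reach h hr
  have hs := stuck h hC hI hT
  refine ⟨H, hI, fun e m ho => ?_, fun b hb => ?_⟩
  · by_contra hc
    exact hs (.inl (.inl e, m)) ⟨ho, hc⟩
  · by_contra hc
    exact hs (.inr b) (Or.inr ⟨hb, hc⟩)

theorem ful_nx (h : Fx R) {T : SState R} {H} (hF : Ful T H) {q v n w} (hq : T.f q = some v)
    (hx : Nx R n v w) : False := by
  refine hF.inv.i4 hq hx ?_
  have ho := nx_out h hx
  cases w with
  | atom e m => exact hF.at_ e m (out_valid ho)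
  | lock e i =>
    obtain ⟨h1, h2, h3⟩ := ho
    obtain ⟨q', e', i', h4, h5⟩ := hF.un n h3
    obtain rfl := h.bot_uniq h3 h1 h5
    have := hF.inv.i1 h4
    obtain rfl : i' = 0 := hF.inv.i11 this
    rw [h2]; exact this

theorem ful_final (h : Fx R) {T : SState R} {H} (hF : Ful T H) : T.Final := by
  constructor
  · intro q v hq
    cases v with
    | lock e i => exact Or.inr ⟨e, i, rfl⟩
    | atom e m =>
      refine Or.inl ⟨e, m, rfl, ?_⟩
      have hno : ∀ n, ¬ InP R n (.atom e m) := by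
        intro n hi
        obtain ⟨w, hx⟩ := nx_ex h hi
        exact ful_nx h hF hq hx
      rcases at_or (T.val_valid _ _ hq : AtomOcc (R.typ e) m) with hp | hp
      · refine ⟨?_, hp⟩
        cases ht : R.tgt e with
        | none => rfl
        | some n => exact (hno n (Or.inl ⟨hp, ht⟩)).elim
      · exact (hno _ (Or.inr ⟨hp, rfl⟩)).elim
  · intro e m hf
    rcases hF.inv.i2 (hF.at_ e m hf.2.atomOcc) with h1 | ⟨n, w, _, hx⟩
    · exact h1
    · exfalso
      rcases nx_in h hx with ⟨a, b⟩ | ⟨a, b⟩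
      · have := hf.1
        simp only at this
        rw [b] at this; cases this
      · exact pos_neg hf.2 a

theorem ful_dom (h : Fx R) {T : SState R} {H} (hF : Ful T H) {q} (hq : R.InitPos q ∨ R.OnePos q) :
    T.f q ≠ none := by
  rcases hq with hq | hq
  · exact T.init_total q hq
  · refine hF.inv.i9 hq (hF.at_ _ _ ⟨.one, ?_, trivial⟩)
    rw [h.one_typ hq.1, hq.2]; rfl

theorem ful_uniq (h : Fx R) {T T' : SState R} {H H'} (hF : Ful T H) (hF' : Ful T' H') : T = T' := by
  have hf : T.f = T'.f := by
    funext q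
    by_cases hq : R.InitPos q ∨ R.OnePos q
    · obtain ⟨v, hv⟩ := Option.ne_none_iff_exists'.1 (ful_dom h hF hq)
      obtain ⟨v', hv'⟩ := Option.ne_none_iff_exists'.1 (ful_dom h hF' hq)
      have hfun : Relator.RightUnique (NxR R) := by
        rintro a b c ⟨n, h1⟩ ⟨n', h2⟩
        exact nx_fun h h1 h2
      rw [hv, hv']
      congr 1
      rcases Relation.ReflTransGen.total_of_right_unique hfun (hF.inv.i7 hv) (hF'.inv.i7 hv') with hr | hr
      · rcases Relation.ReflTransGen.cases_head hr with hr | ⟨c, ⟨n, hx⟩, _⟩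
        · exact hr
        · exact (ful_nx h hF hv hx).elim
      · rcases Relation.ReflTransGen.cases_head hr with hr | ⟨c, ⟨n, hx⟩, _⟩
        · exact hr.symm
        · exact (ful_nx h hF' hv' hx).elim
    · have h1 : T.f q = none := by_contra fun hh => hq (T.dom_subset q hh)
      have h2 : T'.f q = none := by_contra fun hh => hq (T'.dom_subset q hh)
      rw [h1, h2]
  cases T; cases T'; cases hf; rfl

end Siam

/-- **Termination and Deadlock Freedom.**  Every run of the SIAM machine
`M_R` of an SMLL net `R` (maximal sequence of transitions from the initial
state `I_R`) terminates in a final state, and this final state is unique. -/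
theorem siam_termination_deadlock_freedom (R : Struct) (hWF : R.WF)
    (hC : R.Correct) :
    (∀ g : ℕ → SState R, g 0 = initState R →
      ¬ ∀ n : ℕ, STrans R (g n) (g (n + 1))) ∧
    (∀ T : SState R, Relation.ReflTransGen (STrans R) (initState R) T →
      (∀ T', ¬ STrans R T T') → T.Final) ∧
    (∀ T₁ T₂ : SState R,
      Relation.ReflTransGen (STrans R) (initState R) T₁ →
      Relation.ReflTransGen (STrans R) (initState R) T₂ →
      (∀ T', ¬ STrans R T₁ T') → (∀ T', ¬ STrans R T₂ T') → T₁ = T₂) := by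
  have h := Siam.fx hWF
  refine ⟨fun g hg => Siam.term h g hg, fun T hr hT => ?_, fun T₁ T₂ h1 h2 s1 s2 => ?_⟩
  · obtain ⟨H, hF⟩ := Siam.ful h hC hr hT
    exact Siam.ful_final h hF
  · obtain ⟨H, hF⟩ := Siam.ful h hC h1 s1
    obtain ⟨H', hF'⟩ := Siam.ful h hC h2 s2
    exact Siam.ful_uniq h hF hF'
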